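/- arXiv:2411.16307 — 3 statements merged into one kernel-verified Lean document; each statement's English description precedes it below -/
import Mathlib

section
/- There are exactly 17888 isomorphism classes of Steiner triple systems S of order 31 such that S has exactly one Veblen point x and the quotient system of S at x (a Steiner triple system of order 15) is anti-Pasch, i.e., contains no Pasch configuration. -/
/-!
Let `S` be an `STS(31)` with a Veblen point `x` whose quotient is anti-Pasch.  Steiner triple systems
are treated as Steiner quasigroups: `op a b` is the third point of the triple on `a ≠ b`, and
`op a a = a`.

*Uniqueness of the quotient.*  Every anti-Pasch `STS(15)` is isomorphic to the cyclic system `op15`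
on `ℤ/15` with base blocks `{0,1,4}`, `{0,2,9}`, `{0,5,10}` (`antiPasch15_unique`).  For two points
`x, y` one follows the cycles of the permutations `op x` and `op y`; after choosing labels along such
a cycle, a backtracking search completes the table of the operation.  The search is a function on
numerals, proved sound (`search_sound`) and evaluated twice by the kernel: there is no anti-Pasch
system without a hexagon among these cycles, and a system with a hexagon is a copy of `op15`.

*Extensions.*  Consequently `S` is, up to isomorphism, `extOp f` for some `f` from the 35 blocks of
`op15` to `GF(2)` (`exists_ext`): the points are `none` and `(p, i)` with `p ∈ ℤ/15`, `i ∈ GF(2)`, and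
`f` records the sum of the second coordinates in the triples over a block.  Conversely `none` is the
only Veblen point of `extOp f`, because a second one would project to a Veblen point of the
anti-Pasch system `op15`; its quotient is `op15` (`good_of_ext`).

*Isomorphisms.*  An isomorphism of extensions fixes `none`, so it has the form
`(p, i) ↦ (σ p, i + h p)` with `σ` an automorphism of `op15`, and it carries `f` to the function
obtained by permuting blocks and adding the sums of `h` over the blocks (`extOp_iso_iff`).  The
isomorphism classes are therefore the orbits of a group of order `60 * 2 ^ 15` on `GF(2)^35`; the
60 automorphisms of `op15` are the maps `p ↦ k p + s` with `k ∈ {1, 13, 4, 7}` (`affineEquiv`).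

*Counting.*  By Burnside's lemma the number of orbits is the number of triples `(σ, h, f)` with `f`
fixed by `(σ, h)`, divided by the order of the group.  For fixed `σ` these pairs `(f, h)` are the
solutions of 35 linear equations in 50 unknowns over `GF(2)`; Gaussian elimination (`solve`) counts
them, and the total is `17888 * 60 * 2 ^ 15` (`card_orbits`).
-/

universe u v

/-- `T` is the triple set of a Steiner triple system on the point set `α`:
every member of `T` has three elements, and every pair of distinct points
lies in exactly one member of `T`. -/
def IsSTS {α : Type u} (T : Set (Finset α)) : Prop :=
  (∀ t ∈ T, t.card = 3) ∧
  ∀ a b : α, a ≠ b → ∃! t : Finset α, t ∈ T ∧ a ∈ t ∧ b ∈ t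

/-- `x` is a Veblen point of the Steiner triple system with triple set `T`:
whenever `{x,a,b}`, `{x,c,d}` and `{t,a,c}` are triples, so is `{t,b,d}`. -/
def IsVeblen {α : Type u} [DecidableEq α] (T : Set (Finset α)) (x : α) : Prop :=
  ∀ a b c d t : α, ({x, a, b} : Finset α) ∈ T → ({x, c, d} : Finset α) ∈ T →
    ({t, a, c} : Finset α) ∈ T → ({t, b, d} : Finset α) ∈ T

/-- Isomorphism of Steiner triple systems: a bijection of the point sets carrying
the triples of one system exactly onto the triples of the other. -/
def STSIso {α : Type u} {β : Type v} [DecidableEq β]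
    (T₁ : Set (Finset α)) (T₂ : Set (Finset β)) : Prop :=
  ∃ e : α ≃ β, ∀ t : Finset α, t ∈ T₁ ↔ t.image (e : α → β) ∈ T₂

/-- The points of the quotient system at a point `x`: the triples through `x`. -/
abbrev QuotPts {α : Type u} (T : Set (Finset α)) (x : α) : Type u :=
  {t : Finset α // t ∈ T ∧ x ∈ t}

/-- The triples of the quotient system at a Veblen point `x`: three distinct
triples `T1`, `T2`, `T3` through `x` form a triple iff there are `a ∈ T1 \ {x}`
and `c ∈ T2 \ {x}` such that the third point of the triple through `a` and `c`
lies in `T3`. -/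
def QuotTriples {α : Type u} [DecidableEq α] (T : Set (Finset α)) (x : α) :
    Set (Finset (QuotPts T x)) :=
  {b | ∃ T1 T2 T3 : QuotPts T x, T1 ≠ T2 ∧ T1 ≠ T3 ∧ T2 ≠ T3 ∧ b = {T1, T2, T3} ∧
      ∃ a ∈ T1.1, a ≠ x ∧ ∃ c ∈ T2.1, c ≠ x ∧
        ∃ d, ({a, c, d} : Finset α) ∈ T ∧ d ∈ T3.1}

/-- The nonzero vectors of `GF(2)^n`, i.e. the points of `PG(n-1,2)`. -/
abbrev PGPt (n : ℕ) : Type := {u : Fin n → ZMod 2 // u ≠ 0}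

/-- The lines of `PG(n-1,2)`: sets `{u,v,w}` of distinct nonzero vectors of
`GF(2)^n` with `u + v + w = 0`. -/
def PGTriples (n : ℕ) : Set (Finset (PGPt n)) :=
  {t | ∃ u v w : PGPt n, u ≠ v ∧ u ≠ w ∧ v ≠ w ∧ t = {u, v, w} ∧
      u.1 + v.1 + w.1 = 0}

/-- The system contains a Pasch configuration: six distinct points
`x, a, b, c, d, t` with `{x,a,b}`, `{x,c,d}`, `{t,a,c}`, `{t,b,d}` all triples. -/
def HasPasch {α : Type u} [DecidableEq α] (T : Set (Finset α)) : Prop :=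
  ∃ x a b c d t : α, ({x, a, b, c, d, t} : Finset α).card = 6 ∧
    ({x, a, b} : Finset α) ∈ T ∧ ({x, c, d} : Finset α) ∈ T ∧
    ({t, a, c} : Finset α) ∈ T ∧ ({t, b, d} : Finset α) ∈ T

/-! ### Steiner triple systems as binary operations -/

/-- A Steiner quasigroup: an idempotent commutative operation with `a (a b) = b`.  On a Steiner
triple system, `op a b` is the third point of the triple through `a ≠ b`, and `op a a = a`. -/
structure IsSteiner {α : Type*} (op : α → α → α) : Prop where
  idem : ∀ a, op a a = a
  comm : ∀ a b, op a b = op b a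
  inv : ∀ a b, op a (op a b) = b

namespace IsSteiner

variable {α : Type*} {op : α → α → α}

theorem inv' (h : IsSteiner op) (a b : α) : op (op a b) a = b := by rw [h.comm, h.inv]

theorem inv_right (h : IsSteiner op) (a b : α) : op (op a b) b = a := by
  rw [h.comm a b, h.inv']

theorem cancel (h : IsSteiner op) {a b c : α} (e : op a b = op a c) : b = c := by
  rw [← h.inv a b, e, h.inv]

theorem eq_comm3 (h : IsSteiner op) {a b c : α} (e : op a b = c) : op a c = b := by
  rw [← e, h.inv]

theorem ne_left (h : IsSteiner op) {a b : α} (hab : a ≠ b) : op a b ≠ a := fun e =>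
  hab (by rw [← h.inv a b, e, h.idem])

theorem ne_right (h : IsSteiner op) {a b : α} (hab : a ≠ b) : op a b ≠ b := by
  rw [h.comm]; exact h.ne_left hab.symm

end IsSteiner

/-- The operation has no Pasch configuration. -/
def NoPasch {α : Type*} (op : α → α → α) : Prop :=
  ∀ x a b, x ≠ a → x ≠ b → a ≠ b → op x a ≠ b → op (op x a) (op x b) ≠ op a b

/-- No two points `x, y` have a hexagon in their cycle graph (the union of the two perfect
matchings `s ↦ op x s` and `s ↦ op y s` of the points off the triple through `x` and `y`). -/
def NoHexagon {α : Type*} (op : α → α → α) : Prop :=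
  ∀ x y s, x ≠ y → s ≠ x → s ≠ y → op x y ≠ s →
    op y (op x (op y (op x (op y (op x s))))) ≠ s

/-- The cyclic anti-Pasch `STS(15)` (number 80 of the catalogue) on `ℤ/15`: the translates of the
base blocks `{0,1,4}`, `{0,2,9}` and `{0,5,10}`.  The table lists, for each difference `q - p`,
the difference from `p` to the third point. -/
def op15 (p q : Fin 15) : Fin 15 :=
  p + ![0, 4, 9, 14, 1, 10, 8, 13, 6, 2, 5, 12, 11, 7, 3] (q - p)

theorem op15_steiner : IsSteiner op15 where
  idem := by decide +kernel
  comm := by decide +kernel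
  inv := by decide +kernel

theorem op15_noPasch : NoPasch op15 := by
  unfold NoPasch
  decide +kernel

/-! ### The backtracking search -/

section Search

/-- `if b then x else y`, by a bare recursor so that the kernel evaluates it in one step. -/
noncomputable def sel {α : Type} (b : Bool) (x y : α) : α := Bool.rec y x b

/-- Entry `(i, j)` of a table of 4-bit entries packed into `T`, above 32 low bits that are not
part of the table.  Rows and columns are labels `1, …, 15`; the entry is the label of the third
point of the triple through `i` and `j`, and `0` means that it is not yet known. -/
noncomputable def tget (T i j : ℕ) : ℕ :=
  Nat.land (Nat.shiftRight (Nat.shiftRight (Nat.shiftRight T 32) (Nat.mul 64 i)) (Nat.mul 4 j)) 15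

/-- Fill the unknown entry `(i, j)` with `k`. -/
noncomputable def tput (T i j k : ℕ) : ℕ :=
  Nat.lor T (Nat.shiftLeft k (Nat.add (Nat.mul 64 i) (Nat.add 32 (Nat.mul 4 j))))

/-- A 32-bit fingerprint of a triple.  It has no mathematical content: the fingerprints of the
triples of a table are xored into its low 32 bits, because the hash function of the kernel only
reads the low bits of a numeral, and would otherwise not distinguish the tables. -/
noncomputable def salt (i j k : ℕ) : ℕ :=
  Nat.land (Nat.mul 2654435761 (Nat.add (Nat.mul 256 i) (Nat.add (Nat.mul 16 j) k))) 4294967295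

/-- Enter the triple `{i, j, k}`. -/
noncomputable def tput6 (T i j k : ℕ) : ℕ :=
  Nat.xor (salt i j k)
    (tput (tput (tput (tput (tput (tput T i j k) j i k) i k j) k i j) j k i) k j i)

/-- Bitwise disjunction of `f d` over the list. -/
noncomputable def orAll (f : ℕ → ℕ) (l : List ℕ) : ℕ := List.rec 0 (fun d _ ih => Nat.lor (f d) ih) l

/-- Conjunction of `f d` over the list. -/
noncomputable def allB (f : ℕ → Bool) (l : List ℕ) : Bool :=
  List.rec true (fun d _ ih => sel (f d) ih false) l

/-- The labels. -/
def pts : List ℕ := [1, 2, 3, 4, 5, 6, 7, 8, 9, 10, 11, 12, 13, 14, 15]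

/-- The label that would complete a hexagon for `i` and `d` through `j` if it were the third point
on `i` and `j`, as a one-bit mask. -/
noncomputable def hexBit (T i j d : ℕ) : ℕ :=
  Nat.shiftLeft 1 (tget T d (tget T i (tget T d (tget T i (tget T d j)))))

/-- Mask of labels that cannot be the third point on `i` and `j` in view of the triples through
`d`: those already joined to `i` or to `j`, the one completing a Pasch configuration and, when
`hex` is set, those completing a hexagon. -/
noncomputable def forb (hex : Bool) (T i j d : ℕ) : ℕ :=
  Nat.lor (Nat.lor (Nat.shiftLeft 1 (tget T d i)) (Nat.shiftLeft 1 (tget T d j)))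
    (Nat.lor (Nat.shiftLeft 1 (tget T (tget T d i) (tget T d j)))
      (sel hex (Nat.lor (hexBit T i j d) (hexBit T j i d)) 0))

/-- Mask of all labels that cannot be the third point on `i` and `j`. -/
noncomputable def forbAll (hex : Bool) (T i j : ℕ) : ℕ :=
  Nat.lor (Nat.lor (Nat.shiftLeft 1 i) (Nat.shiftLeft 1 j)) (orAll (forb hex T i j) pts)

/-- Backtracking over the pairs `ps`.  Labels `1, …, n` are in use.  A pair `(i, j)` with unknown
third point is branched on: the third point has a label in use, or gets the next label.  If
`j = n + 1`, the label `j` is first given to an arbitrary new point.  A pair that is known, or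
whose labels are not available, is skipped.  The result is `true` if `leaf` accepts all tables
reached after the last pair. -/
noncomputable def search (hex : Bool) (leaf : ℕ → ℕ → Bool) (ps : List (ℕ × ℕ)) : ℕ → ℕ → Bool :=
  List.rec leaf (fun p _ ih T n =>
    sel (Nat.beq (Nat.lor (tget T p.1 p.2) (tget T p.2 p.1)) 0)
      (sel (Nat.ble p.1 n)
        (sel (Nat.ble p.2 (Nat.succ n))
          (allB (fun k =>
            sel (Nat.ble k (Nat.succ (sel (Nat.ble p.2 n) n p.2)))
              (sel (Nat.beq (Nat.land 1 (Nat.shiftRight (forbAll hex T p.1 p.2) k)) 0)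
                (ih (tput6 T p.1 p.2 k)
                  (sel (Nat.ble k (sel (Nat.ble p.2 n) n p.2)) (sel (Nat.ble p.2 n) n p.2) k))
                true)
              true) pts)
          (ih T n))
        (ih T n))
      (ih T n)) ps

theorem sel_eq {α : Type} (b : Bool) (x y : α) : sel b x y = if b then x else y := by
  cases b <;> rfl

theorem allB_eq_true {f : ℕ → Bool} {l : List ℕ} (h : allB f l = true) : ∀ d ∈ l, f d = true := by
  induction l with
  | nil => simp
  | cons a l ih =>
    have h' : sel (f a) (allB f l) false = true := h
    rw [sel_eq] at h'
    simp only [Bool.if_false_right, Bool.and_eq_true] at h'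
    simp only [List.mem_cons, forall_eq_or_imp]
    exact ⟨by simpa using h'.1, ih h'.2⟩

theorem testBit_orAll {f : ℕ → ℕ} {l : List ℕ} {k : ℕ} (h : (orAll f l).testBit k = true) :
    ∃ d ∈ l, (f d).testBit k = true := by
  induction l with
  | nil =>
    have : (0 : ℕ).testBit k = true := h
    simp at this
  | cons a l ih =>
    have h' : (f a ||| orAll f l).testBit k = true := h
    rw [Nat.testBit_lor, Bool.or_eq_true] at h'
    rcases h' with h' | h'
    · exact ⟨a, by simp, h'⟩
    · obtain ⟨d, hd, h2⟩ := ih h'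
      exact ⟨d, by simp [hd], h2⟩

theorem testBit_bit {e k : ℕ} : (Nat.shiftLeft 1 e).testBit k = true ↔ e = k := by
  change (1 <<< e).testBit k = true ↔ e = k
  rw [Nat.one_shiftLeft, Nat.testBit_two_pow]
  simp

theorem tget_eq (T i j : ℕ) : tget T i j = (T >>> (32 + 64 * i + 4 * j)) % 2 ^ 4 := by
  change ((T >>> 32 >>> (64 * i)) >>> (4 * j)) &&& (2 ^ 4 - 1) = _
  rw [Nat.and_two_pow_sub_one_eq_mod, Nat.shiftRight_add, Nat.shiftRight_add]

theorem tget_lt (T i j : ℕ) : tget T i j < 16 := by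
  rw [tget_eq]; exact Nat.mod_lt _ (by norm_num)

theorem testBit_tget (T i j b : ℕ) :
    (tget T i j).testBit b = (decide (b < 4) && T.testBit (32 + 64 * i + 4 * j + b)) := by
  rw [tget_eq, Nat.testBit_mod_two_pow, Nat.testBit_shiftRight]

theorem tget_zero (i j : ℕ) : tget 0 i j = 0 := by simp [tget_eq]

theorem tget_tput {T i j k a b : ℕ} (hj : j < 16) (hk : k < 16) (hb : b < 16) :
    tget (tput T i j k) a b = if a = i ∧ b = j then tget T a b ||| k else tget T a b := by
  have hk' : ∀ c, 4 ≤ c → k.testBit c = false := fun c hc =>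
    Nat.testBit_lt_two_pow (hk.trans_le (by
      calc 16 = 2 ^ 4 := by norm_num
        _ ≤ 2 ^ c := Nat.pow_le_pow_right (by norm_num) hc))
  have ht : tput T i j k = T ||| (k <<< (64 * i + (32 + 4 * j))) := rfl
  apply Nat.eq_of_testBit_eq
  intro c
  rw [testBit_tget, ht, Nat.testBit_lor, Nat.testBit_shiftLeft]
  by_cases hc : c < 4
  · split_ifs with h
    · obtain ⟨rfl, rfl⟩ := h
      rw [Nat.testBit_lor, testBit_tget]
      have e1 : 32 + 64 * a + 4 * b + c - (64 * a + (32 + 4 * b)) = c := by omega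
      have e2 : 32 + 64 * a + 4 * b + c ≥ (64 * a + (32 + 4 * b)) := by omega
      simp [hc, e1, e2]
    · rw [testBit_tget]
      by_cases hge : 32 + 64 * a + 4 * b + c ≥ (64 * i + (32 + 4 * j))
      · rw [hk' _ (by omega)]; simp
      · simp [hge]
  · split_ifs with h
    · rw [Nat.testBit_lor, testBit_tget, hk' c (by omega)]; simp [hc]
    · rw [testBit_tget]; simp [hc]

theorem tget_salt (T i j k a b : ℕ) : tget (Nat.xor (salt i j k) T) a b = tget T a b := by
  apply Nat.eq_of_testBit_eq
  intro c
  have hs : ∀ m, 32 ≤ m → (salt i j k).testBit m = false := fun m hm => by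
    apply Nat.testBit_lt_two_pow
    have : salt i j k = (2654435761 * (256 * i + (16 * j + k))) &&& (2 ^ 32 - 1) := rfl
    rw [this, Nat.and_two_pow_sub_one_eq_mod]
    exact (Nat.mod_lt _ (by norm_num)).trans_le (Nat.pow_le_pow_right (by norm_num) hm)
  change (tget (salt i j k ^^^ T) a b).testBit c = _
  rw [testBit_tget, testBit_tget, Nat.testBit_xor, hs _ (by omega)]
  simp

variable {β : Type*} {op : β → β → β}

/-- The table `T` on the labels `1, …, n` is part of the Steiner quasigroup `op` under the
labelling `lab`. -/
structure Fits (op : β → β → β) (T n : ℕ) (lab : ℕ → β) : Prop where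
  le : n ≤ 15
  inj : ∀ i j, 1 ≤ i → i ≤ n → 1 ≤ j → j ≤ n → lab i = lab j → i = j
  val : ∀ i j, i < 16 → j < 16 → tget T i j ≠ 0 →
    1 ≤ i ∧ i ≤ n ∧ 1 ≤ j ∧ j ≤ n ∧ tget T i j ≤ n ∧ op (lab i) (lab j) = lab (tget T i j)

theorem Fits.put {T n : ℕ} {lab : ℕ → β} (h : Fits op T n lab) {a b v : ℕ} (ha : 1 ≤ a)
    (han : a ≤ n) (hb : 1 ≤ b) (hbn : b ≤ n) (hv : 1 ≤ v) (hvn : v ≤ n)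
    (e : op (lab a) (lab b) = lab v) : Fits op (tput T a b v) n lab := by
  have hn := h.le
  refine ⟨h.le, h.inj, fun i j hi hj hne => ?_⟩
  rw [tget_tput (by omega) (by omega) hj] at hne ⊢
  split_ifs at hne ⊢ with hij
  · obtain ⟨rfl, rfl⟩ := hij
    have key : tget T i j ||| v = v := by
      by_cases h0 : tget T i j = 0
      · simp [h0]
      · obtain ⟨_, _, _, _, h1, h2⟩ := h.val i j hi hj h0
        have := h.inj (tget T i j) v (by omega) h1 hv hvn (by rw [← h2, e])
        rw [this, Nat.or_self]
    rw [key]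
    exact ⟨ha, han, hb, hbn, hvn, e⟩
  · exact h.val i j hi hj hne

theorem Fits.put6 (hS : IsSteiner op) {T n : ℕ} {lab : ℕ → β} (h : Fits op T n lab) {a b v : ℕ}
    (ha : 1 ≤ a) (han : a ≤ n) (hb : 1 ≤ b) (hbn : b ≤ n) (hv : 1 ≤ v) (hvn : v ≤ n)
    (e : op (lab a) (lab b) = lab v) : Fits op (tput6 T a b v) n lab := by
  have e2 : op (lab b) (lab a) = lab v := by rw [hS.comm, e]
  have e3 := hS.eq_comm3 e
  have e4 := hS.eq_comm3 e2
  have e5 : op (lab v) (lab a) = lab b := by rw [hS.comm, e3]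
  have e6 : op (lab v) (lab b) = lab a := by rw [hS.comm, e4]
  have := (((((h.put ha han hb hbn hv hvn e).put hb hbn ha han hv hvn e2).put
    ha han hv hvn hb hbn e3).put hv hvn ha han hb hbn e5).put hb hbn hv hvn ha han e4).put
    hv hvn hb hbn ha han e6
  refine ⟨this.le, this.inj, fun i j hi hj => ?_⟩
  rw [tput6, tget_salt]
  exact this.val i j hi hj

theorem Fits.extend {T n : ℕ} {lab : ℕ → β} (h : Fits op T n lab) (hn : n < 15) {z : β}
    (hz : ∀ i, 1 ≤ i → i ≤ n → lab i ≠ z) :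
    Fits op T (n + 1) (Function.update lab (n + 1) z) := by
  have hl : ∀ i, i ≤ n → Function.update lab (n + 1) z i = lab i := fun i hi =>
    Function.update_of_ne (by omega) _ _
  refine ⟨by omega, fun i j hi hin hj hjn e => ?_, fun i j hi hj hne => ?_⟩
  · rcases Nat.lt_or_eq_of_le hin with h1 | rfl <;> rcases Nat.lt_or_eq_of_le hjn with h2 | rfl
    · rw [hl i (by omega), hl j (by omega)] at e
      exact h.inj i j hi (by omega) hj (by omega) e
    · rw [hl i (by omega), Function.update_self] at e
      exact absurd e (hz i hi (by omega))
    · rw [hl j (by omega), Function.update_self] at e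
      exact absurd e.symm (hz j hj (by omega))
    · rfl
  · obtain ⟨h1, h2, h3, h4, h5, h6⟩ := h.val i j hi hj hne
    refine ⟨h1, by omega, h3, by omega, by omega, ?_⟩
    rw [hl i h2, hl j h4, hl _ h5, h6]

theorem Fits.mono {T n : ℕ} {lab lab' : ℕ → β} (h : Fits op T n lab)
    (hl : ∀ i ≤ n, lab' i = lab i) : Fits op T n lab' := by
  refine ⟨h.le, fun i j hi hin hj hjn e => ?_, fun i j hi hj hne => ?_⟩
  · rw [hl i hin, hl j hjn] at e
    exact h.inj i j hi hin hj hjn e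
  · obtain ⟨h1, h2, h3, h4, h5, h6⟩ := h.val i j hi hj hne
    exact ⟨h1, h2, h3, h4, h5, by rw [hl i h2, hl j h4, hl _ h5, h6]⟩

theorem Fits.image_card {T n : ℕ} {lab : ℕ → β} [DecidableEq β] (h : Fits op T n lab) :
    ((Finset.Icc 1 n).image lab).card = n := by
  rw [Finset.card_image_of_injOn]
  · simp
  · intro i hi j hj e
    simp only [Finset.coe_Icc, Set.mem_Icc] at hi hj
    exact h.inj i j hi.1 hi.2 hj.1 hj.2 e

theorem Fits.exists_new [Fintype β] (hc : Fintype.card β = 15) {T n : ℕ} {lab : ℕ → β}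
    (h : Fits op T n lab) (hn : n < 15) : ∃ z, ∀ i, 1 ≤ i → i ≤ n → lab i ≠ z := by
  classical
  by_contra hcon
  push Not at hcon
  have h1 : (Finset.univ : Finset β) ⊆ (Finset.Icc 1 n).image lab := fun z _ => by
    obtain ⟨i, h1, h2, h3⟩ := hcon z
    exact Finset.mem_image.2 ⟨i, Finset.mem_Icc.2 ⟨h1, h2⟩, h3⟩
  have := Finset.card_le_card h1
  rw [h.image_card, Finset.card_univ, hc] at this
  omega

theorem Fits.lt_of_new [Fintype β] (hc : Fintype.card β = 15) {T n : ℕ} {lab : ℕ → β}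
    (h : Fits op T n lab) {z : β} (hz : ∀ i, 1 ≤ i → i ≤ n → lab i ≠ z) : n < 15 := by
  classical
  have h1 : z ∉ (Finset.Icc 1 n).image lab := fun hm => by
    obtain ⟨i, hi, e⟩ := Finset.mem_image.1 hm
    exact hz i (Finset.mem_Icc.1 hi).1 (Finset.mem_Icc.1 hi).2 e
  have h2 := Finset.card_lt_univ_of_notMem h1
  rwa [h.image_card, hc] at h2

/-- The hexagon mask only contains labels that cannot be the third point on `i` and `j`. -/
theorem Fits.hexBit_sound (hS : IsSteiner op) (hH : NoHexagon op) {T n : ℕ} {lab : ℕ → β}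
    (h : Fits op T n lab) {i j k d : ℕ} (hi : i < 16) (hj : j < 16) (hd : d < 16) (hij : i ≠ j)
    (h0 : tget T i j = 0) (hk : 1 ≤ k)
    (e : op (lab i) (lab j) = lab k) : (hexBit T i j d).testBit k ≠ true := by
  rw [hexBit, Ne, testBit_bit]
  intro hc
  set p1 := tget T d j with hp1
  set p2 := tget T i p1 with hp2
  set p3 := tget T d p2 with hp3
  set p4 := tget T i p3 with hp4
  obtain ⟨d1, dn, h41, h4n, -, v5⟩ := h.val d p4 hd (tget_lt _ _ _) (by omega)
  obtain ⟨i1, i_n, h31, h3n, -, v4⟩ := h.val i p3 hi (tget_lt _ _ _) (by omega)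
  obtain ⟨-, -, h21, h2n, -, v3⟩ := h.val d p2 hd (tget_lt _ _ _) (by omega)
  obtain ⟨-, -, h11, h1n, -, v2⟩ := h.val i p1 hi (tget_lt _ _ _) (by omega)
  obtain ⟨-, -, j1, jn, -, v1⟩ := h.val d j hd hj (by omega)
  rw [← hp1] at v1; rw [← hp2] at v2; rw [← hp3] at v3; rw [← hp4] at v4; rw [hc] at v5
  have hdi : d ≠ i := by rintro rfl; omega
  have hdj : d ≠ j := by
    rintro rfl
    have : p1 = d := h.inj _ _ h11 h1n d1 dn (by rw [← v1, hS.idem])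
    rw [this] at hp2
    omega
  have hL : ∀ a b, 1 ≤ a → a ≤ n → 1 ≤ b → b ≤ n → a ≠ b → lab a ≠ lab b :=
    fun a b ha ha' hb hb' hab hh => hab (h.inj a b ha ha' hb hb' hh)
  refine hH (lab d) (lab i) (lab j) (hL _ _ d1 dn i1 i_n hdi) (hL _ _ j1 jn d1 dn hdj.symm)
    (hL _ _ j1 jn i1 i_n hij.symm) ?_ ?_
  · -- if `j` is the third point on `d` and `i`, the walk `j, i, i, j` reads the unknown entry
    intro hc2
    have e1 : p1 = i := h.inj _ _ h11 h1n i1 i_n (by rw [← v1, ← hc2, hS.inv])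
    have e2 : p2 = i := h.inj _ _ h21 h2n i1 i_n (by rw [← v2, e1, hS.idem])
    have e3 : p3 = j := h.inj _ _ h31 h3n j1 jn (by rw [← v3, e2, hc2])
    rw [e3, h0] at hp4
    omega
  · rw [v1, v2, v3, v4, v5, ← e, hS.inv]

theorem Fits.forb_sound (hS : IsSteiner op) (hP : NoPasch op) {hex : Bool}
    (hH : hex = true → NoHexagon op) {T n : ℕ} {lab : ℕ → β}
    (h : Fits op T n lab) {i j k d : ℕ} (hi : i < 16) (hj : j < 16) (hd : d < 16) (hij : i ≠ j)
    (i1 : 1 ≤ i) (i_n : i ≤ n) (j1 : 1 ≤ j) (jn : j ≤ n)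
    (h0 : tget T i j = 0) (h0' : tget T j i = 0) (hk : 1 ≤ k)
    (e : op (lab i) (lab j) = lab k) : (forb hex T i j d).testBit k ≠ true := by
  intro hc
  have hc' : ((Nat.shiftLeft 1 (tget T d i) ||| Nat.shiftLeft 1 (tget T d j)) |||
    (Nat.shiftLeft 1 (tget T (tget T d i) (tget T d j)) |||
      sel hex (Nat.lor (hexBit T i j d) (hexBit T j i d)) 0)).testBit k = true := hc
  simp only [Nat.testBit_lor, Bool.or_eq_true, testBit_bit] at hc'
  have e' : op (lab j) (lab i) = lab k := by rw [hS.comm, e]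
  rcases hc' with (hc | hc) | hc | hc
  · obtain ⟨d1, dn, -, -, -, v⟩ := h.val d i hd hi (by omega)
    rw [hc, ← e, hS.comm] at v
    have := h.inj _ _ d1 dn j1 jn (hS.cancel v)
    rw [this] at hc
    omega
  · obtain ⟨d1, dn, -, -, -, v⟩ := h.val d j hd hj (by omega)
    rw [hc, ← e', hS.comm] at v
    have := h.inj _ _ d1 dn i1 i_n (hS.cancel v)
    rw [this] at hc
    omega
  · obtain ⟨a1, an, b1, bn, -, v⟩ := h.val _ _ (tget_lt T d i) (tget_lt T d j) (by omega)
    obtain ⟨d1, dn, -, -, -, va⟩ := h.val d i hd hi (by omega)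
    obtain ⟨-, -, -, -, -, vb⟩ := h.val d j hd hj (by omega)
    have hdi : d ≠ i := by rintro rfl; omega
    have hdj : d ≠ j := by rintro rfl; omega
    have hL : ∀ a b, 1 ≤ a → a ≤ n → 1 ≤ b → b ≤ n → a ≠ b → lab a ≠ lab b :=
      fun a b ha ha' hb hb' hab hh => hab (h.inj a b ha ha' hb hb' hh)
    refine hP (lab d) (lab i) (lab j) (hL _ _ d1 dn i1 i_n hdi) (hL _ _ d1 dn j1 jn hdj)
      (hL _ _ i1 i_n j1 jn hij) ?_ (by rw [va, vb, v, hc, e])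
    intro hd2
    have ea : tget T d i = j := h.inj _ _ a1 an j1 jn (by rw [← va, hd2])
    have eb : tget T d j = i := h.inj _ _ b1 bn i1 i_n (by rw [← vb, ← hd2, hS.inv])
    rw [ea, eb] at hc
    omega
  · rw [sel_eq] at hc
    split_ifs at hc with hx
    · have hc2 : (hexBit T i j d ||| hexBit T j i d).testBit k = true := hc
      rw [Nat.testBit_lor, Bool.or_eq_true] at hc2
      rcases hc2 with hc2 | hc2
      · exact h.hexBit_sound hS (hH hx) hi hj hd hij h0 hk e hc2
      · exact h.hexBit_sound hS (hH hx) hj hi hd hij.symm h0' hk e' hc2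
    · simp at hc

theorem mem_pts {k : ℕ} : k ∈ pts ↔ 1 ≤ k ∧ k ≤ 15 := by
  simp only [pts, List.mem_cons, List.not_mem_nil, or_false]
  omega

theorem Fits.forbAll_sound (hS : IsSteiner op) (hP : NoPasch op) {hex : Bool}
    (hH : hex = true → NoHexagon op) {T n : ℕ} {lab : ℕ → β}
    (h : Fits op T n lab) {i j k : ℕ} (hij : i ≠ j)
    (i1 : 1 ≤ i) (i_n : i ≤ n) (j1 : 1 ≤ j) (jn : j ≤ n)
    (h0 : tget T i j = 0) (h0' : tget T j i = 0) (hk : 1 ≤ k)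
    (e : op (lab i) (lab j) = lab k) : (forbAll hex T i j).testBit k ≠ true := by
  intro hc
  have hn := h.le
  have hc' : ((Nat.shiftLeft 1 i ||| Nat.shiftLeft 1 j) |||
    orAll (forb hex T i j) pts).testBit k = true := hc
  have hne : lab i ≠ lab j := fun hh => hij (h.inj _ _ i1 i_n j1 jn hh)
  simp only [Nat.testBit_lor, Bool.or_eq_true, testBit_bit] at hc'
  rcases hc' with (rfl | rfl) | hc
  · exact hS.ne_left hne e
  · exact hS.ne_right hne e
  · obtain ⟨d, hd, hc⟩ := testBit_orAll hc
    rw [mem_pts] at hd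
    exact h.forb_sound hS hP hH (by omega) (by omega) (by omega) hij i1 i_n j1 jn h0 h0' hk e hc

/-- Branching: the third point on `i` and `j` has a label in use or gets the next label. -/
theorem Fits.branch [Fintype β] (hc : Fintype.card β = 15) {T n : ℕ} {lab : ℕ → β}
    (h : Fits op T n lab) (z : β) :
    ∃ k lab', 1 ≤ k ∧ k ≤ n + 1 ∧ k ≤ 15 ∧ (∀ i ≤ n, lab' i = lab i) ∧ lab' k = z ∧
      Fits op T (if k ≤ n then n else k) lab' := by
  have hn := h.le
  by_cases hz : ∀ i, 1 ≤ i → i ≤ n → lab i ≠ z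
  · have hlt := h.lt_of_new hc hz
    refine ⟨n + 1, Function.update lab (n + 1) z, by omega, le_rfl, by omega,
      fun i hi => Function.update_of_ne (by omega) _ _, Function.update_self .., ?_⟩
    rw [if_neg (by omega)]
    exact h.extend hlt hz
  · push Not at hz
    obtain ⟨k, hk, hkn, rfl⟩ := hz
    refine ⟨k, lab, hk, by omega, by omega, fun _ _ => rfl, rfl, ?_⟩
    rwa [if_pos hkn]

/-- Soundness of the search: if it succeeds, then every anti-Pasch system containing the
initial table contains one that was accepted by `leaf`. -/
theorem search_sound [Fintype β] (hc : Fintype.card β = 15) (hS : IsSteiner op)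
    (hP : NoPasch op) {hex : Bool} (hH : hex = true → NoHexagon op) {leaf : ℕ → ℕ → Bool} :
    ∀ (ps : List (ℕ × ℕ)), (∀ p ∈ ps, p.1 ≠ p.2 ∧ 1 ≤ p.1 ∧ 1 ≤ p.2 ∧ p.2 ≤ 15) →
    ∀ (T n : ℕ) (lab : ℕ → β), Fits op T n lab → search hex leaf ps T n = true →
    ∃ T' n' lab', Fits op T' n' lab' ∧ n ≤ n' ∧ (∀ i ≤ n, lab' i = lab i) ∧ leaf T' n' = true := by
  intro ps
  induction ps with
  | nil => exact fun _ T n lab h hl => ⟨T, n, lab, h, le_rfl, fun _ _ => rfl, hl⟩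
  | cons p ps ih =>
    intro hps T n lab h hs
    obtain ⟨hij, i1, j1, j15⟩ := hps p (by simp)
    have hskip := ih (fun q hq => hps q (by simp [hq])) T n lab h
    have ih := ih (fun q hq => hps q (by simp [hq]))
    have hs' : (sel (Nat.beq (Nat.lor (tget T p.1 p.2) (tget T p.2 p.1)) 0)
      (sel (Nat.ble p.1 n)
        (sel (Nat.ble p.2 (Nat.succ n))
          (allB (fun k =>
            sel (Nat.ble k (Nat.succ (sel (Nat.ble p.2 n) n p.2)))
              (sel (Nat.beq (Nat.land 1 (Nat.shiftRight (forbAll hex T p.1 p.2) k)) 0)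
                (search hex leaf ps (tput6 T p.1 p.2 k)
                  (sel (Nat.ble k (sel (Nat.ble p.2 n) n p.2)) (sel (Nat.ble p.2 n) n p.2) k))
                true)
              true) pts)
          (search hex leaf ps T n))
        (search hex leaf ps T n))
      (search hex leaf ps T n)) = true := hs
    generalize p.1 = i at *
    generalize p.2 = j at *
    clear hs
    rw [sel_eq] at hs'
    split_ifs at hs' with hb0
    swap
    · exact hskip hs'
    rw [sel_eq] at hs'
    split_ifs at hs' with hbi
    swap
    · exact hskip hs'
    rw [sel_eq] at hs'
    split_ifs at hs' with hbj
    swap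
    · exact hskip hs'
    have h00 : tget T i j ||| tget T j i = 0 := Nat.eq_of_beq_eq_true hb0
    obtain ⟨h0, h0'⟩ := Nat.or_eq_zero_iff.1 h00
    have i_n : i ≤ n := Nat.le_of_ble_eq_true hbi
    have jn1 : j ≤ n + 1 := Nat.le_of_ble_eq_true hbj
    -- after labelling an arbitrary new point if needed, `m` labels are in use
    obtain ⟨m, hm, lab1, hl1, hF1, hnm, hjm⟩ : ∃ m, sel (Nat.ble j n) n j = m ∧ ∃ lab1 : ℕ → β,
        (∀ i ≤ n, lab1 i = lab i) ∧ Fits op T m lab1 ∧ n ≤ m ∧ j ≤ m := by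
      refine ⟨_, rfl, ?_⟩
      rw [sel_eq]
      split_ifs with hjn
      · exact ⟨lab, fun _ _ => rfl, h, le_rfl, Nat.le_of_ble_eq_true hjn⟩
      · have hjn' : ¬ j ≤ n := fun hh => hjn (Nat.ble_eq_true_of_le hh)
        obtain rfl : j = n + 1 := by omega
        obtain ⟨z, hz⟩ := h.exists_new hc (by omega)
        exact ⟨_, fun i hi => Function.update_of_ne (by omega) _ _, h.extend (by omega) hz,
          by omega, le_rfl⟩
    rw [hm] at hs'
    obtain ⟨k, lab2, k1, km, k15, hl2, hz, hF2⟩ := hF1.branch hc (op (lab1 i) (lab1 j))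
    have hk := allB_eq_true hs' k (mem_pts.2 ⟨k1, k15⟩)
    simp only [sel_eq] at hk
    rw [if_pos (Nat.ble_eq_true_of_le km)] at hk
    have e : op (lab2 i) (lab2 j) = lab2 k := by rw [hl2 i (by omega), hl2 j hjm, hz]
    have hmk : m ≤ (if k ≤ m then m else k) := by split_ifs <;> omega
    have hkk : k ≤ (if k ≤ m then m else k) := by split_ifs <;> omega
    have hnf := hF2.forbAll_sound hS hP hH hij i1 (by omega) j1 (by omega) h0 h0' k1 e
    have hbit : Nat.beq (Nat.land 1 (Nat.shiftRight (forbAll hex T i j) k)) 0 = true := by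
      have h1 : ((1 &&& (forbAll hex T i j >>> k)) != 0) ≠ true := hnf
      rw [Nat.beq_eq]
      simpa using h1
    rw [if_pos hbit] at hk
    have hble : (Nat.ble k m = true) = (k ≤ m) := Nat.ble_eq
    simp only [hble] at hk
    obtain ⟨T', n', lab', hF', hn', hl', hleaf⟩ := ih _ _ lab2
      (hF2.put6 hS i1 (by omega) j1 (by omega) k1 hkk e) hk
    refine ⟨T', n', lab', hF', by omega, fun a ha => ?_, hleaf⟩
    rw [hl' a (by omega), hl2 a (by omega), hl1 a ha]

end Search

/-! ### Uniqueness of the anti-Pasch system of order 15 -/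

section Unique

/-- The initial table: the single triple on the labels `1, 2, 3`. -/
noncomputable def startTable : ℕ := tput6 0 1 2 3

/-- The pairs along the path `s, x s, y (x s), …` in the cycle graph of `x` and `y`, where `x`, `y`
and `s` have the labels `1`, `2` and `4`. -/
def pathPairs : List (ℕ × ℕ) := [(1, 4), (2, 5), (1, 6), (2, 7), (1, 8), (2, 9)]

/-- The remaining pairs: first the triples through the labels `1` and `2`, then the other rows in
an order that keeps the search small. -/
def restPairs : List (ℕ × ℕ) :=
  [(1, 10), (2, 11), (1, 12), (2, 13), (1, 14), (2, 15)] ++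
    ((([3, 14, 12, 10, 4, 8] ++ pts).flatMap fun i => pts.map fun j => (i, j)).filter
      fun p => p.1 != p.2)

/-- The label reached from `4` after six steps alternating between `1` and `2`. -/
noncomputable def sixSteps (T : ℕ) : ℕ :=
  tget T 2 (tget T 1 (tget T 2 (tget T 1 (tget T 2 (tget T 1 4)))))

/-- The third point on `p ≠ q` in the cyclic system, in terms of numerals: the digits of the
constant in base 16 are the table in `op15`. -/
noncomputable def third (p q : ℕ) : ℕ :=
  Nat.mod (Nat.add p (Nat.land (Nat.shiftRight 251010974883113280
    (Nat.mul 4 (Nat.mod (Nat.sub (Nat.add 15 q) p) 15))) 15)) 15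

/-- Digit `p` of `C` in base 16. -/
noncomputable def digit (C p : ℕ) : ℕ := Nat.land (Nat.shiftRight C (Nat.mul 4 p)) 15

/-- `f n`, with `n` evaluated before it is substituted. -/
noncomputable def force {α : Type} (n : ℕ) (f : ℕ → α) : α := Nat.rec (f 0) (fun k _ => f (Nat.succ k)) n

/-- Extends a partial labelling `C` of the points `0, …, 14` (digit `p` is the label of `p`) by
labelling each point in the list as the third point on two others. -/
noncomputable def fillIn (T : ℕ) (l : List (ℕ × ℕ × ℕ)) : ℕ → ℕ :=
  List.rec (fun C => C) (fun r _ ih C =>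
    force (Nat.lor C (Nat.shiftLeft (tget T (digit C r.2.1) (digit C r.2.2)) (Nat.mul 4 r.1))) ih) l

/-- The digits of `C` are the labels of a copy of the cyclic system. -/
noncomputable def isCopy (T C : ℕ) : Bool :=
  allB (fun p => allB (fun q => sel (Nat.beq p q) true
    (sel (Nat.beq (digit C p) (digit C q)) false
      (sel (Nat.beq (digit C (third p q)) 0) false
        (Nat.beq (tget T (digit C p) (digit C q)) (digit C (third p q))))))
    [0, 1, 2, 3, 4, 5, 6, 7, 8, 9, 10, 11, 12, 13, 14])
    [0, 1, 2, 3, 4, 5, 6, 7, 8, 9, 10, 11, 12, 13, 14]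

/-- A labelling of the cyclic system in which `0, 5, 10, 1` have the labels `1, 2, 3, w` or
`1, 3, 2, w`.  These points generate the system.  The constants hold the labels as base 16 digits. -/
noncomputable def candidate (T : ℕ) (swap : Bool) (w : ℕ) : ℕ :=
  force (Nat.lor (sel swap 2199026401281 3298536980481) (Nat.shiftLeft w 4))
    (fillIn T [(4, 0, 1), (2, 1, 5), (9, 0, 2), (6, 5, 9), (8, 0, 6), (3, 1, 10), (14, 0, 3), (7, 5, 14),
      (13, 0, 7), (11, 5, 13), (12, 0, 11)])

/-- Some `w` in the list gives a copy of the cyclic system. -/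
noncomputable def anyCopy (T : ℕ) (l : List ℕ) : Bool :=
  List.rec false (fun w _ ih => sel (force (candidate T false w) (isCopy T)) true
    (sel (force (candidate T true w) (isCopy T)) true ih)) l

theorem third_eq : ∀ p q : Fin 15, third p q = op15 p q := by decide +kernel

set_option maxRecDepth 100000 in
/-- An anti-Pasch system of order 15 has a hexagon in one of its cycle graphs. -/
theorem search_noHexagon :
    search true (fun _ _ => false) (pathPairs ++ restPairs) startTable 4 = true := by
  decide +kernel

set_option maxRecDepth 100000 in
theorem search_hexagon :
    search false (fun T n => sel (Nat.beq (sixSteps T) 4)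
      (search false (fun T _ => anyCopy T pts) ((3, 4) :: restPairs) T n)
      (sel (Nat.beq (sixSteps T) 0) false true)) pathPairs startTable 4 = true := by
  decide +kernel

variable {β : Type*} {op : β → β → β}

theorem startTable_fits (hS : IsSteiner op) {x y s : β} (hxy : x ≠ y) (hsx : s ≠ x) (hsy : s ≠ y)
    (hs : op x y ≠ s) :
    Fits op startTable 4 (fun i => if i = 1 then x else if i = 2 then y else if i = 3 then op x y
      else s) := by
  have h1 := hS.ne_left hxy
  have h2 := hS.ne_right hxy
  have h0 : Fits op 0 4 (fun i => if i = 1 then x else if i = 2 then y else if i = 3 then op x y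
      else s) := by
    refine ⟨by norm_num, fun i j hi hi' hj hj' e => ?_, fun i j _ _ h => absurd (tget_zero i j) h⟩
    interval_cases i <;> interval_cases j <;> simp_all [eq_comm]
  exact h0.put6 hS (by norm_num) (by norm_num) (by norm_num) (by norm_num) (by norm_num)
    (by norm_num) (by simp)

theorem digit_lt (C p : ℕ) : digit C p < 16 := by
  have : digit C p = (C >>> (4 * p)) &&& (2 ^ 4 - 1) := rfl
  rw [this, Nat.and_two_pow_sub_one_eq_mod]
  exact Nat.mod_lt _ (by norm_num)

theorem force_eq {α : Type} (n : ℕ) (f : ℕ → α) : force n f = f n := by cases n <;> rfl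

theorem Fits.equiv_of_isCopy [Fintype β] (hc : Fintype.card β = 15) (hS : IsSteiner op)
    {T n : ℕ} {lab : ℕ → β} (h : Fits op T n lab) {C : ℕ} (hC : isCopy T C = true) :
    ∃ e : Fin 15 ≃ β, ∀ p q, e (op15 p q) = op (e p) (e q) := by
  have key : ∀ p q : Fin 15, p ≠ q → digit C p ≠ digit C q ∧ digit C (op15 p q) ≠ 0 ∧
      tget T (digit C p) (digit C q) = digit C (op15 p q) := by
    intro p q hpq
    have hmem : ∀ r : Fin 15, (r : ℕ) ∈ [0, 1, 2, 3, 4, 5, 6, 7, 8, 9, 10, 11, 12, 13, 14] := by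
      decide
    have h1 := allB_eq_true (allB_eq_true hC p (hmem p)) q (hmem q)
    have hne : ¬ Nat.beq (p : ℕ) (q : ℕ) = true := fun hh =>
      hpq (Fin.ext (Nat.eq_of_beq_eq_true hh))
    rw [third_eq, sel_eq, if_neg hne, sel_eq] at h1
    split_ifs at h1 with h2
    rw [sel_eq] at h1
    split_ifs at h1 with h3
    exact ⟨fun hh => h2 (by rw [hh]; exact Nat.beq_refl _), fun hh => h3 (by rw [hh]; rfl),
      Nat.eq_of_beq_eq_true h1⟩
  have val : ∀ p q : Fin 15, p ≠ q → 1 ≤ digit C p ∧ digit C p ≤ n ∧ 1 ≤ digit C q ∧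
      digit C q ≤ n ∧ op (lab (digit C p)) (lab (digit C q)) = lab (digit C (op15 p q)) := by
    intro p q hpq
    obtain ⟨h1, h2, h3⟩ := key p q hpq
    obtain ⟨a, b, c, d, -, e⟩ := h.val _ _ (digit_lt C p) (digit_lt C q) (by rw [h3]; exact h2)
    exact ⟨a, b, c, d, by rw [e, h3]⟩
  have inj : Function.Injective fun p : Fin 15 => lab (digit C p) := by
    intro p q hpq
    by_contra hne
    obtain ⟨a, b, c, d, -⟩ := val p q hne
    exact (key p q hne).1 (h.inj _ _ a b c d hpq)
  have bij : Function.Bijective fun p : Fin 15 => lab (digit C p) :=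
    (Fintype.bijective_iff_injective_and_card _).2 ⟨inj, by rw [hc, Fintype.card_fin]⟩
  refine ⟨Equiv.ofBijective _ bij, fun p q => ?_⟩
  simp only [Equiv.ofBijective_apply]
  by_cases hpq : p = q
  · rw [hpq, hS.idem, op15_steiner.idem]
  · exact (val p q hpq).2.2.2.2.symm

theorem Fits.equiv_of_anyCopy [Fintype β] (hc : Fintype.card β = 15) (hS : IsSteiner op)
    {T n : ℕ} {lab : ℕ → β} (h : Fits op T n lab) {l : List ℕ} (hl : anyCopy T l = true) :
    ∃ e : Fin 15 ≃ β, ∀ p q, e (op15 p q) = op (e p) (e q) := by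
  induction l with
  | nil => exact absurd hl (by change ¬ false = true; simp)
  | cons w l ih =>
    have h' : sel (force (candidate T false w) (isCopy T)) true
      (sel (force (candidate T true w) (isCopy T)) true (anyCopy T l)) = true := hl
    simp only [force_eq, sel_eq] at h'
    split_ifs at h' with h1 h2
    · exact h.equiv_of_isCopy hc hS h1
    · exact h.equiv_of_isCopy hc hS h2
    · exact ih h'

theorem restPairs_ok : ∀ p ∈ restPairs, p.1 ≠ p.2 ∧ 1 ≤ p.1 ∧ 1 ≤ p.2 ∧ p.2 ≤ 15 := by
  decide +kernel

theorem pathPairs_ok : ∀ p ∈ pathPairs, p.1 ≠ p.2 ∧ 1 ≤ p.1 ∧ 1 ≤ p.2 ∧ p.2 ≤ 15 := by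
  decide +kernel

/-- Up to isomorphism, the cyclic system is the only anti-Pasch system of order 15. -/
theorem antiPasch15_unique [Fintype β] (hc : Fintype.card β = 15) (hS : IsSteiner op)
    (hP : NoPasch op) : ∃ e : Fin 15 ≃ β, ∀ p q, e (op15 p q) = op (e p) (e q) := by
  classical
  by_cases hH : NoHexagon op
  · exfalso
    let e := Fintype.equivFinOfCardEq hc
    have hxy : e.symm 0 ≠ e.symm 1 := fun hh => absurd (e.symm.injective hh) (by decide)
    obtain ⟨s, hs⟩ : ∃ s, s ∉ ({e.symm 0, e.symm 1, op (e.symm 0) (e.symm 1)} : Finset β) := by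
      by_contra hcon
      push Not at hcon
      have h1 := Finset.card_le_card (fun s _ => hcon s :
        (Finset.univ : Finset β) ⊆ {e.symm 0, e.symm 1, op (e.symm 0) (e.symm 1)})
      have h2 := Finset.card_le_three (a := e.symm 0) (b := e.symm 1)
        (c := op (e.symm 0) (e.symm 1))
      rw [Finset.card_univ, hc] at h1
      omega
    simp only [Finset.mem_insert, Finset.mem_singleton, not_or] at hs
    obtain ⟨T, n, lab, -, -, -, h⟩ := search_sound hc hS hP (fun _ => hH)
      (pathPairs ++ restPairs)
      (fun p hp => (List.mem_append.1 hp).elim (pathPairs_ok p) (restPairs_ok p)) _ _ _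
      (startTable_fits hS hxy hs.1 hs.2.1 (Ne.symm hs.2.2)) search_noHexagon
    simp at h
  · unfold NoHexagon at hH
    push Not at hH
    obtain ⟨x, y, s, hxy, hsx, hsy, hs, hhex⟩ := hH
    obtain ⟨T, n, lab, hF, hn, hlab, h⟩ := search_sound hc hS hP (hex := false) (by simp)
      pathPairs pathPairs_ok _ _ _ (startTable_fits hS hxy hsx hsy hs) search_hexagon
    have l1 : lab 1 = x := by rw [hlab 1 (by norm_num)]; simp
    have l2 : lab 2 = y := by rw [hlab 2 (by norm_num)]; simp
    have l4 : lab 4 = s := by rw [hlab 4 (by norm_num)]; simp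
    rw [sel_eq] at h
    split_ifs at h with h4
    · obtain ⟨T', n', lab', hF', -, -, h'⟩ := search_sound hc hS hP (hex := false) (by simp)
        _ (List.forall_mem_cons.2 ⟨by norm_num, restPairs_ok⟩) _ _ _ hF h
      exact hF'.equiv_of_anyCopy hc hS h'
    · -- the six steps are known and do not lead back to `s`
      exfalso
      rw [sel_eq] at h
      split_ifs at h with h0
      have h0 : sixSteps T ≠ 0 := fun hh => h0 (by rw [hh]; rfl)
      have st : ∀ i < 16, ∀ j < 16, tget T i j ≠ 0 → j ≠ 0 ∧ op (lab i) (lab j) = lab (tget T i j) :=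
        fun i hi j hj hne => by
          obtain ⟨-, -, h1, -, -, h2⟩ := hF.val i j hi hj hne
          exact ⟨by omega, h2⟩
      obtain ⟨n5, e6⟩ := st 2 (by norm_num) _ (tget_lt _ _ _) h0
      obtain ⟨n4, e5⟩ := st 1 (by norm_num) _ (tget_lt _ _ _) n5
      obtain ⟨n3, e4⟩ := st 2 (by norm_num) _ (tget_lt _ _ _) n4
      obtain ⟨n2, e3⟩ := st 1 (by norm_num) _ (tget_lt _ _ _) n3
      obtain ⟨n1, e2⟩ := st 2 (by norm_num) _ (tget_lt _ _ _) n2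
      obtain ⟨-, e1⟩ := st 1 (by norm_num) 4 (by norm_num) n1
      rw [← e5, ← e4, ← e3, ← e2, ← e1, l1, l2, l4, hhex, ← l4] at e6
      have := (hF.val 2 _ (by norm_num) (tget_lt _ _ _) h0).2.2.2.2.1
      have e7 := hF.inj 4 _ (by norm_num) hn (Nat.one_le_iff_ne_zero.2 h0) this e6
      exact h4 (by rw [← e7]; rfl)

end Unique

/-! ### From triple systems to operations -/

section Translate

variable {α : Type*} {β : Type*}

/-- `op` is the operation of the triple system `T`. -/
structure IsOp [DecidableEq α] (T : Set (Finset α)) (op : α → α → α) : Prop where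
  steiner : IsSteiner op
  mem : ∀ t, t ∈ T ↔ ∃ a b, a ≠ b ∧ t = {a, b, op a b}

theorem exists_isOp [DecidableEq α] {T : Set (Finset α)} (h : IsSTS T) : ∃ op, IsOp T op := by
  classical
  obtain ⟨hc, hT⟩ := h
  have h3 : ∀ a b : α, ∃ c, a ≠ b → ({a, b, c} : Finset α) ∈ T := by
    intro a b
    by_cases hab : a = b
    · exact ⟨a, fun hh => absurd hab hh⟩
    obtain ⟨t, ⟨ht, ha, hb⟩, -⟩ := hT a b hab
    obtain ⟨c, hcc⟩ : ∃ c, t = {a, b, c} := by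
      obtain ⟨x, y, z, -, -, -, rfl⟩ := Finset.card_eq_three.1 (hc t ht)
      simp only [Finset.mem_insert, Finset.mem_singleton] at ha hb
      rcases ha with rfl | rfl | rfl <;> rcases hb with rfl | rfl | rfl <;>
        first
        | exact absurd rfl hab
        | exact ⟨x, by ext; simp <;> tauto⟩
        | exact ⟨y, by ext; simp <;> tauto⟩
        | exact ⟨z, by ext; simp <;> tauto⟩
    exact ⟨c, fun _ => hcc ▸ ht⟩
  choose op hop using h3
  -- redefine the operation on the diagonal
  let op' : α → α → α := fun a b => if a = b then a else op a b
  have hop' : ∀ a b, a ≠ b → ({a, b, op' a b} : Finset α) ∈ T := fun a b hab => by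
    simp only [op', if_neg hab]; exact hop a b hab
  have uniq : ∀ a b c, a ≠ b → ({a, b, c} : Finset α) ∈ T → op' a b = c := by
    intro a b c hab ht
    have e := (hT a b hab).unique ⟨hop' a b hab, by simp, by simp⟩ ⟨ht, by simp, by simp⟩
    have h1 := hc _ (hop' a b hab)
    have hm : op' a b ∈ ({a, b, c} : Finset α) := e ▸ (by simp)
    simp only [Finset.mem_insert, Finset.mem_singleton] at hm
    rcases hm with hm | hm | hm
    · rw [hm] at h1
      have := Finset.card_le_two (a := a) (b := b)
      simp at h1
      have h2 := Finset.card_le_two (a := b) (b := a)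
      omega
    · rw [hm] at h1
      have := Finset.card_le_two (a := a) (b := b)
      simp at h1
      omega
    · exact hm
  have hne : ∀ a b, a ≠ b → op' a b ≠ a := by
    intro a b hab hh
    have h1 := hc _ (hop' a b hab)
    rw [hh] at h1
    have h2 := Finset.card_le_two (a := b) (b := a)
    simp at h1
    omega
  refine ⟨op', ⟨fun a => by simp [op'], fun a b => ?_, fun a b => ?_⟩, fun t => ⟨fun ht => ?_, ?_⟩⟩
  · by_cases hab : a = b
    · rw [hab]
    · refine uniq a b _ hab ?_
      rw [Finset.insert_comm]
      exact hop' b a (Ne.symm hab)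
  · by_cases hab : a = b
    · rw [hab]; simp [op']
    · refine uniq a _ _ (Ne.symm (hne a b hab)) ?_
      rw [Finset.pair_comm]
      exact hop' a b hab
  · obtain ⟨x, y, z, hxy, -, -, rfl⟩ := Finset.card_eq_three.1 (hc t ht)
    exact ⟨x, y, hxy, by rw [uniq x y z hxy ht]⟩
  · rintro ⟨a, b, hab, rfl⟩
    exact hop' a b hab

/-- The triples of a Steiner quasigroup. -/
def triplesOf [DecidableEq α] (op : α → α → α) : Set (Finset α) :=
  {t | ∃ a b, a ≠ b ∧ t = {a, b, op a b}}

theorem isOp_triplesOf [DecidableEq α] {op : α → α → α} (h : IsSteiner op) :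
    IsOp (triplesOf op) op := ⟨h, fun _ => Iff.rfl⟩

theorem IsOp.mem3 [DecidableEq α] {T : Set (Finset α)} {op : α → α → α} (h : IsOp T op)
    {a b c : α} : ({a, b, c} : Finset α) ∈ T ↔ a ≠ b ∧ op a b = c := by
  rw [h.mem]
  constructor
  · rintro ⟨x, y, hxy, e⟩
    have hS := h.steiner
    have h1 := hS.ne_left hxy
    have h2 := hS.ne_right hxy
    have e1 : op y x = op x y := hS.comm y x
    have e2 : op x (op x y) = y := hS.inv x y
    have e3 : op (op x y) x = y := hS.inv' x y
    have e4 : op (op x y) y = x := hS.inv_right x y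
    have e5 : op y (op x y) = x := by rw [hS.comm, e4]
    have c3 : ({a, b, c} : Finset α).card = 3 := by
      rw [e]; exact Finset.card_eq_three.2 ⟨x, y, op x y, hxy, h1.symm, h2.symm, rfl⟩
    have d : a ≠ b ∧ a ≠ c ∧ b ≠ c := by
      have two : ∀ u v : α, ({a, b, c} : Finset α) = {u, v} → False := fun u v huv => by
        have := Finset.card_le_two (a := u) (b := v)
        rw [← huv] at this
        omega
      refine ⟨?_, ?_, ?_⟩ <;> rintro rfl
      · exact two a c (by simp)
      · exact two b a (by simp)
      · exact two a b (by simp)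
    have ha : a ∈ ({x, y, op x y} : Finset α) := e ▸ (by simp)
    have hb : b ∈ ({x, y, op x y} : Finset α) := e ▸ (by simp)
    have hc : c ∈ ({x, y, op x y} : Finset α) := e ▸ (by simp)
    simp only [Finset.mem_insert, Finset.mem_singleton] at ha hb hc
    generalize hz : op x y = z at *
    rcases ha with rfl | rfl | rfl <;> rcases hb with rfl | rfl | rfl <;>
      rcases hc with rfl | rfl | rfl <;> simp_all
  · rintro ⟨hab, rfl⟩
    exact ⟨a, b, hab, rfl⟩

theorem IsOp.isSTS [DecidableEq α] {T : Set (Finset α)} {op : α → α → α} (h : IsOp T op) :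
    IsSTS T := by
  have hS := h.steiner
  refine ⟨fun t ht => ?_, fun a b hab => ⟨{a, b, op a b}, ⟨h.mem3.2 ⟨hab, rfl⟩, by simp, by simp⟩, ?_⟩⟩
  · obtain ⟨x, y, hxy, rfl⟩ := (h.mem t).1 ht
    exact Finset.card_eq_three.2 ⟨x, y, op x y, hxy, (hS.ne_left hxy).symm,
      (hS.ne_right hxy).symm, rfl⟩
  · rintro t ⟨ht, ha, hb⟩
    obtain ⟨x, y, hxy, rfl⟩ := (h.mem t).1 ht
    have e1 : op y x = op x y := hS.comm y x
    have e2 : op x (op x y) = y := hS.inv x y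
    have e3 : op (op x y) x = y := hS.inv' x y
    have e4 : op (op x y) y = x := hS.inv_right x y
    have e5 : op y (op x y) = x := by rw [hS.comm, e4]
    simp only [Finset.mem_insert, Finset.mem_singleton] at ha hb
    generalize hz : op x y = z at *
    rcases ha with rfl | rfl | rfl <;> rcases hb with rfl | rfl | rfl <;>
      simp_all <;> (ext; simp; tauto)

/-- Isomorphism of Steiner quasigroups. -/
def OpIso (op₁ : α → α → α) (op₂ : β → β → β) : Prop :=
  ∃ e : α ≃ β, ∀ a b, e (op₁ a b) = op₂ (e a) (e b)

theorem OpIso.symm {op₁ : α → α → α} {op₂ : β → β → β} (h : OpIso op₁ op₂) : OpIso op₂ op₁ := by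
  obtain ⟨e, he⟩ := h
  refine ⟨e.symm, fun a b => e.injective ?_⟩
  rw [he]; simp

theorem OpIso.trans {γ : Type*} {op₁ : α → α → α} {op₂ : β → β → β} {op₃ : γ → γ → γ}
    (h : OpIso op₁ op₂) (h' : OpIso op₂ op₃) : OpIso op₁ op₃ := by
  obtain ⟨e, he⟩ := h
  obtain ⟨e', he'⟩ := h'
  exact ⟨e.trans e', fun a b => by simp [he, he']⟩

theorem stsIso_iff [DecidableEq α] [DecidableEq β] {T₁ : Set (Finset α)} {T₂ : Set (Finset β)}
    {op₁ : α → α → α} {op₂ : β → β → β} (h₁ : IsOp T₁ op₁) (h₂ : IsOp T₂ op₂) :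
    STSIso T₁ T₂ ↔ OpIso op₁ op₂ := by
  constructor
  · rintro ⟨e, he⟩
    refine ⟨e, fun a b => ?_⟩
    by_cases hab : a = b
    · rw [hab, h₁.steiner.idem, h₂.steiner.idem]
    · have := (he {a, b, op₁ a b}).1 (h₁.mem3.2 ⟨hab, rfl⟩)
      simp only [Finset.image_insert, Finset.image_singleton] at this
      exact (h₂.mem3.1 this).2.symm
  · rintro ⟨e, he⟩
    refine ⟨e, fun t => ?_⟩
    rw [h₁.mem, h₂.mem]
    constructor
    · rintro ⟨a, b, hab, rfl⟩
      exact ⟨e a, e b, fun hh => hab (e.injective hh), by simp [he]⟩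
    · rintro ⟨a, b, hab, ht⟩
      refine ⟨e.symm a, e.symm b, fun hh => hab (e.symm.injective hh), ?_⟩
      apply Finset.image_injective e.injective
      rw [ht]
      simp [he]

/-- `x` is a Veblen point, in terms of the operation. -/
def VeblenOp (op : α → α → α) (x : α) : Prop :=
  ∀ a c, a ≠ x → c ≠ x → a ≠ c → op (op x a) (op x c) = op a c

theorem isVeblen_iff [DecidableEq α] {T : Set (Finset α)} {op : α → α → α} (h : IsOp T op)
    {x : α} : IsVeblen T x ↔ VeblenOp op x := by
  have hS := h.steiner
  constructor
  · intro hv a c ha hc hac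
    have := hv a (op x a) c (op x c) (op a c) (h.mem3.2 ⟨ha.symm, rfl⟩) (h.mem3.2 ⟨hc.symm, rfl⟩)
      (h.mem3.2 ⟨hS.ne_left hac, hS.inv' a c⟩)
    have h2 := (h.mem3.1 this).2
    rw [← h2, hS.comm, hS.inv_right]
  · intro hv a b c d t h1 h2 h3
    rw [h.mem3] at h1 h2 h3 ⊢
    obtain ⟨ha, rfl⟩ := h1
    obtain ⟨hc, rfl⟩ := h2
    obtain ⟨ht, h3⟩ := h3
    have hac : a ≠ c := by
      rintro rfl
      exact hS.ne_right ht h3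
    have e : t = op a c := by rw [← h3, hS.comm, hS.inv_right]
    have e2 := hv a c ha.symm hc.symm hac
    have hne : op x a ≠ op x c := fun hh => hac (hS.cancel hh)
    rw [e, ← e2]
    exact ⟨hS.ne_left hne, hS.inv' _ _⟩

theorem hasPasch_iff [DecidableEq α] {T : Set (Finset α)} {op : α → α → α} (h : IsOp T op) :
    HasPasch T ↔ ¬ NoPasch op := by
  have hS := h.steiner
  constructor
  · rintro ⟨x, a, b, c, d, t, h6, h1, h2, h3, h4⟩ hP
    rw [h.mem3] at h1 h2 h3 h4
    obtain ⟨ha, rfl⟩ := h1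
    obtain ⟨hc, rfl⟩ := h2
    obtain ⟨ht, h3⟩ := h3
    obtain ⟨ht', h4⟩ := h4
    have hac : a ≠ c := by
      rintro rfl
      exact hS.ne_right ht h3
    have e : t = op a c := by rw [← h3, hS.comm, hS.inv_right]
    have e' : t = op (op x a) (op x c) := by rw [← h4, hS.comm (op x a), hS.inv_right]
    refine hP x a c ha hc hac ?_ (by rw [← e', e])
    intro hh
    have : ({x, a, op x a, c, op x c, t} : Finset α) ⊆ {x, a, c, op x c, t} := by
      intro z hz
      simp only [Finset.mem_insert, Finset.mem_singleton, hh] at hz ⊢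
      tauto
    have h5 := Finset.card_le_card this
    have h7 : ({x, a, c, op x c, t} : Finset α).card ≤ 5 := Finset.card_le_five
    omega
  · intro hP
    unfold NoPasch at hP
    push Not at hP
    obtain ⟨x, a, c, ha, hc, hac, hn, e⟩ := hP
    refine ⟨x, a, op x a, c, op x c, op a c, ?_, h.mem3.2 ⟨ha, rfl⟩, h.mem3.2 ⟨hc, rfl⟩,
      h.mem3.2 ⟨hS.ne_left hac, hS.inv' a c⟩, ?_⟩
    · have n1 := hS.ne_left ha
      have n2 := hS.ne_right ha
      have n3 := hS.ne_left hc
      have n4 := hS.ne_right hc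
      have n5 := hS.ne_left hac
      have n6 := hS.ne_right hac
      have n7 : op x a ≠ op x c := fun hh => hac (hS.cancel hh)
      have n8 : op x c ≠ a := fun hh => hn (by rw [← hh, hS.inv])
      have n9 : op a c ≠ x := fun hh => hn (by rw [← hh, hS.inv'])
      have n10 : op a c ≠ op x a := by rw [← e]; exact hS.ne_left n7
      have n11 : op a c ≠ op x c := by rw [← e]; exact hS.ne_right n7
      have m1 : op a c ∉ (∅ : Finset α) := by simp
      rw [Finset.card_insert_of_notMem, Finset.card_insert_of_notMem,
        Finset.card_insert_of_notMem, Finset.card_insert_of_notMem,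
        Finset.card_insert_of_notMem, Finset.card_singleton] <;>
      simp only [Finset.mem_insert, Finset.mem_singleton, not_or] <;>
      simp only [not_false_eq_true, and_self, *, Ne.symm n1, Ne.symm n2, Ne.symm n3,
        Ne.symm n4, Ne.symm n5, Ne.symm n6, Ne.symm n8, Ne.symm n9, Ne.symm n10, Ne.symm n11]
    · rw [← e]
      have n7 : op x a ≠ op x c := fun hh => hac (hS.cancel hh)
      exact h.mem3.2 ⟨hS.ne_left n7, hS.inv' _ _⟩

theorem NoPasch.of_iso {op₁ : α → α → α} {op₂ : β → β → β} (h : NoPasch op₁)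
    (hi : OpIso op₂ op₁) : NoPasch op₂ := by
  obtain ⟨e, he⟩ := hi
  intro x a b hxa hxb hab hn hh
  refine h (e x) (e a) (e b) (e.injective.ne hxa) (e.injective.ne hxb) (e.injective.ne hab) ?_ ?_
  · rw [← he]; exact e.injective.ne hn
  · rw [← he, ← he, ← he, ← he, hh]

theorem VeblenOp.of_iso {op₁ : α → α → α} {op₂ : β → β → β} (e : α ≃ β)
    (he : ∀ a b, e (op₁ a b) = op₂ (e a) (e b)) {x : α} (h : VeblenOp op₁ x) :
    VeblenOp op₂ (e x) := by
  intro a c ha hc hac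
  have := h (e.symm a) (e.symm c) (fun hh => ha (by rw [← hh]; simp))
    (fun hh => hc (by rw [← hh]; simp)) (e.symm.injective.ne hac)
  have := congrArg e this
  simpa [he] using this

end Translate

/-! ### The quotient at a Veblen point -/

section Quotient

variable {α : Type*} {op : α → α → α} {x : α}

theorem VeblenOp.op_left (hS : IsSteiner op) (hv : VeblenOp op x) {a c : α} (ha : a ≠ x)
    (hac : a ≠ c) (hsc : op x a ≠ c) : op (op x a) c = op x (op a c) := by
  have ht : op a c ≠ x := fun hh => hsc (by rw [← hh, hS.inv'])
  have := hv a (op a c) ha ht (hS.ne_left hac).symm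
  rw [hS.inv] at this
  exact hS.eq_comm3 this

variable [DecidableEq α] {T : Set (Finset α)}

/-- The triple through `x` and `a`, as a point of the quotient. -/
def thr (hT : IsOp T op) {a : α} (ha : a ≠ x) : QuotPts T x :=
  ⟨{x, a, op x a}, hT.mem3.2 ⟨ha.symm, rfl⟩, by simp⟩

theorem thr_eq_iff (hT : IsOp T op) {a c : α} (ha : a ≠ x) (hc : c ≠ x) :
    thr hT ha = thr hT hc ↔ c = a ∨ c = op x a := by
  constructor
  · intro h
    have h1 : ({x, a, op x a} : Finset α) = {x, c, op x c} := congrArg Subtype.val h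
    have h2 : c ∈ ({x, a, op x a} : Finset α) := by rw [h1]; simp
    simpa [hc] using h2
  · rintro (rfl | rfl)
    · rfl
    · apply Subtype.ext
      change ({x, a, op x a} : Finset α) = {x, op x a, op x (op x a)}
      rw [hT.steiner.inv, Finset.pair_comm]

theorem thr_eq_of_mem (hT : IsOp T op) {a : α} (ha : a ≠ x) (P : QuotPts T x) (h : a ∈ P.1) :
    thr hT ha = P :=
  Subtype.ext ((hT.isSTS.2 x a ha.symm).unique
    ⟨(thr hT ha).2.1, (thr hT ha).2.2, by simp [thr]⟩ ⟨P.2.1, P.2.2, h⟩)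

theorem exists_thr (hT : IsOp T op) (P : QuotPts T x) : ∃ a, ∃ ha : a ≠ x, thr hT ha = P := by
  obtain ⟨a, ha, hne⟩ := Finset.exists_mem_ne (s := P.1)
    (by rw [hT.isSTS.1 _ P.2.1]; norm_num) x
  exact ⟨a, hne, thr_eq_of_mem hT hne P ha⟩

theorem op_ne_of_thr_ne (hT : IsOp T op) {a c : α} (ha : a ≠ x) (hc : c ≠ x)
    (h : thr hT ha ≠ thr hT hc) : op a c ≠ x := fun hh =>
  h ((thr_eq_iff hT ha hc).2 (Or.inr (by rw [← hh, hT.steiner.inv'])))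

theorem thr_op_congr (hT : IsOp T op) (hv : VeblenOp op x) {a c a' : α} (ha : a ≠ x) (hc : c ≠ x)
    (ha' : a' ≠ x) (h : thr hT ha ≠ thr hT hc) (e : thr hT ha = thr hT ha')
    (h1 : op a c ≠ x) (h2 : op a' c ≠ x) : thr hT h1 = thr hT h2 := by
  rw [Ne, thr_eq_iff] at h
  push Not at h
  rw [thr_eq_iff] at e ⊢
  rcases e with rfl | rfl
  · exact Or.inl rfl
  · exact Or.inr (hv.op_left hT.steiner ha h.1.symm h.2.symm)

/-- The operation of the quotient system. -/
theorem exists_quotOp (hT : IsOp T op) (hv : VeblenOp op x) :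
    ∃ Q : QuotPts T x → QuotPts T x → QuotPts T x, IsOp (QuotTriples T x) Q ∧
      ∀ (a c : α) (ha : a ≠ x) (hc : c ≠ x) (hne : op a c ≠ x), thr hT ha ≠ thr hT hc →
        Q (thr hT ha) (thr hT hc) = thr hT hne := by
  have hS := hT.steiner
  choose rep rep_ne thr_rep using exists_thr (x := x) hT
  let Q : QuotPts T x → QuotPts T x → QuotPts T x := fun P R =>
    if h : P = R then P else
      thr hT (op_ne_of_thr_ne hT (rep_ne P) (rep_ne R) (by rwa [thr_rep, thr_rep]))
  have hQ : ∀ (a c : α) (ha : a ≠ x) (hc : c ≠ x) (hne : op a c ≠ x), thr hT ha ≠ thr hT hc →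
        Q (thr hT ha) (thr hT hc) = thr hT hne := by
    intro a c ha hc hne h
    simp only [Q]
    rw [dif_neg h]
    have h1 := rep_ne (thr hT ha)
    have h2 := rep_ne (thr hT hc)
    have n1 : op (rep (thr hT ha)) c ≠ x :=
      op_ne_of_thr_ne hT h1 hc (by rwa [thr_rep])
    have s1 := thr_op_congr hT hv h1 hc ha (by rwa [thr_rep]) (thr_rep _) n1 hne
    have n2 : op c (rep (thr hT ha)) ≠ x := by rwa [hS.comm]
    have n3 : op (rep (thr hT hc)) (rep (thr hT ha)) ≠ x :=
      op_ne_of_thr_ne hT h2 h1 (by rw [thr_rep, thr_rep]; exact h.symm)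
    have s2 := thr_op_congr hT hv h2 h1 hc (by rw [thr_rep, thr_rep]; exact h.symm) (thr_rep _) n3 n2
    rw [← s1]
    convert s2 using 2 <;> exact hS.comm _ _
  have idem : ∀ P, Q P P = P := fun P => by simp [Q]
  have hQS : IsSteiner Q := by
    refine ⟨idem, fun P R => ?_, fun P R => ?_⟩ <;> by_cases hPR : P = R
    · rw [hPR]
    · obtain ⟨a, ha, rfl⟩ := exists_thr hT P
      obtain ⟨c, hc, rfl⟩ := exists_thr hT R
      have n1 := op_ne_of_thr_ne hT ha hc hPR
      have n2 := op_ne_of_thr_ne hT hc ha (Ne.symm hPR)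
      rw [hQ a c ha hc n1 hPR, hQ c a hc ha n2 (Ne.symm hPR)]
      congr 1
      exact hS.comm a c
    · rw [hPR, idem, idem]
    · obtain ⟨a, ha, rfl⟩ := exists_thr hT P
      obtain ⟨c, hc, rfl⟩ := exists_thr hT R
      have n1 := op_ne_of_thr_ne hT ha hc hPR
      have hac : a ≠ c := by rintro rfl; exact hPR rfl
      have n2 : thr hT ha ≠ thr hT n1 := by
        rw [Ne, thr_eq_iff]
        rintro (hh | hh)
        · exact hS.ne_left hac hh
        · rw [hS.comm x a] at hh
          exact hc (hS.cancel hh)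
      rw [hQ a c ha hc n1 hPR, hQ a _ ha n1 (by rwa [hS.inv]) n2]
      congr 1
      exact hS.inv a c
  refine ⟨Q, ⟨hQS, fun b => ⟨?_, ?_⟩⟩, hQ⟩
  · rintro ⟨P, R, U, hPR, -, -, rfl, a, ha, hax, c, hc, hcx, d, hd, hdU⟩
    refine ⟨P, R, hPR, ?_⟩
    obtain ⟨-, rfl⟩ := hT.mem3.1 hd
    obtain rfl := thr_eq_of_mem hT hax P ha
    obtain rfl := thr_eq_of_mem hT hcx R hc
    have n1 := op_ne_of_thr_ne hT hax hcx hPR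
    obtain rfl := thr_eq_of_mem hT n1 U hdU
    rw [hQ a c hax hcx n1 hPR]
  · rintro ⟨P, R, hPR, rfl⟩
    refine ⟨P, R, Q P R, hPR, (hQS.ne_left hPR).symm, (hQS.ne_right hPR).symm, rfl, ?_⟩
    obtain ⟨a, ha, rfl⟩ := exists_thr hT P
    obtain ⟨c, hc, rfl⟩ := exists_thr hT R
    have n1 := op_ne_of_thr_ne hT ha hc hPR
    have hac : a ≠ c := by rintro rfl; exact hPR rfl
    refine ⟨a, by simp [thr], ha, c, by simp [thr], hc, op a c, hT.mem3.2 ⟨hac, rfl⟩, ?_⟩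
    rw [hQ a c ha hc n1 hPR]
    simp [thr]

end Quotient

/-! ### Extensions of the cyclic system -/

section Ext

/-- Index of the block through `p ≠ q`: `{i, i+1, i+4}` has index `i`, `{i, i+2, i+9}` has index
`15 + i`, and `{i, i+5, i+10}` has index `30 + i` for `i < 5`.  The last table lists the difference
from `i` to `p`. -/
def blk (p q : Fin 15) : Fin 35 :=
  if q - p = 5 ∨ q - p = 10 then Fin.ofNat 35 (30 + p.val % 5) else
    Fin.ofNat 35 (![0, 0, 15, 0, 0, 0, 15, 15, 15, 15, 0, 0, 0, 15, 0] (q - p) +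
      (p - ![0, 0, 0, 1, 0, 0, 9, 2, 9, 0, 0, 4, 4, 2, 1] (q - p)).val)

/-- A point of the block `b`. -/
def bfst (b : Fin 35) : Fin 15 :=
  Fin.ofNat 15 (if b < 15 then b else if b < 30 then b - 15 else b - 30)

/-- A second point of the block `b`. -/
def bsnd (b : Fin 35) : Fin 15 :=
  bfst b + if b < 15 then 1 else if b < 30 then 2 else 5

theorem blk_comm : ∀ p q, blk p q = blk q p := by decide +kernel

theorem blk_op15 : ∀ p q, blk p (op15 p q) = blk p q := by decide +kernel

theorem blk_bfst_bsnd : ∀ b, blk (bfst b) (bsnd b) = b := by decide +kernel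

theorem bfst_ne_bsnd : ∀ b, bfst b ≠ bsnd b := by decide +kernel

theorem bfst_bsnd_blk : ∀ p q, p ≠ q →
    (bfst (blk p q) = p ∧ bsnd (blk p q) = q) ∨ (bfst (blk p q) = q ∧ bsnd (blk p q) = p) ∨
    (bfst (blk p q) = p ∧ bsnd (blk p q) = op15 p q) ∨
    (bfst (blk p q) = op15 p q ∧ bsnd (blk p q) = p) ∨
    (bfst (blk p q) = q ∧ bsnd (blk p q) = op15 p q) ∨
    (bfst (blk p q) = op15 p q ∧ bsnd (blk p q) = q) := by decide +kernel

/-- A function of two distinct points that only depends on the block through them. -/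
theorem eq_on_blk {γ : Type*} (F : Fin 15 → Fin 15 → γ)
    (hc : ∀ p q, p ≠ q → F p q = F q p) (ho : ∀ p q, p ≠ q → F p (op15 p q) = F p q) {p q : Fin 15}
    (hpq : p ≠ q) : F (bfst (blk p q)) (bsnd (blk p q)) = F p q := by
  have h1 := op15_steiner.ne_left hpq
  have h2 := op15_steiner.ne_right hpq
  have h3 : F q (op15 p q) = F p q := by rw [op15_steiner.comm, ho q p hpq.symm, hc p q hpq]
  rcases bfst_bsnd_blk p q hpq with h | h | h | h | h | h <;> rw [h.1, h.2]
  · exact hc q p hpq.symm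
  · exact ho p q hpq
  · rw [hc _ _ h1, ho p q hpq]
  · exact h3
  · rw [hc _ _ h2, h3]

/-- The points of the extensions: the Veblen point `none`, and two points over each point of the
cyclic system. -/
abbrev ExtPt := Option (Fin 15 × ZMod 2)

/-- The extension of the cyclic system with parameters `f`, one for each block: `(p, i)`, `(q, j)`
and `(r, k)` form a triple when `p, q, r` form a block `b` and `i + j + k = f b`, and
`none, (p, 0), (p, 1)` form a triple. -/
def extOp (f : Fin 35 → ZMod 2) : ExtPt → ExtPt → ExtPt
  | none, none => none
  | none, some (p, i) => some (p, i + 1)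
  | some (p, i), none => some (p, i + 1)
  | some (p, i), some (q, j) =>
    if p = q then if i = j then some (p, i) else none else some (op15 p q, i + j + f (blk p q))

theorem two_eq (i : ZMod 2) : i + i = 0 := CharTwo.add_self_eq_zero i

theorem zmod2_cases (i : ZMod 2) : i = 0 ∨ i = 1 := by revert i; decide

theorem add_one_add_one (i : ZMod 2) : i + 1 + 1 = i := by
  rw [add_assoc, two_eq, add_zero]

theorem eq_add_one_of_ne {i j : ZMod 2} : i ≠ j → j = i + 1 := by revert i j; decide

theorem ne_add_one (i : ZMod 2) : i ≠ i + 1 := by revert i; decide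

variable (f : Fin 35 → ZMod 2)

theorem extOp_none_some (p i) : extOp f none (some (p, i)) = some (p, i + 1) := rfl

theorem extOp_of_ne {p q : Fin 15} (h : p ≠ q) (i j) :
    extOp f (some (p, i)) (some (q, j)) = some (op15 p q, i + j + f (blk p q)) := by
  simp [extOp, h]

theorem extOp_self_add (p i) : extOp f (some (p, i)) (some (p, i + 1)) = none := by
  simp [extOp]

theorem extOp_steiner : IsSteiner (extOp f) where
  idem := by
    rintro (_ | ⟨p, i⟩) <;> simp [extOp]
  comm := by
    rintro (_ | ⟨p, i⟩) (_ | ⟨q, j⟩)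
    · rfl
    · rfl
    · rfl
    · by_cases h : p = q
      · subst h
        by_cases h2 : i = j
        · rw [h2]
        · simp [extOp, h2, Ne.symm h2]
      · rw [extOp_of_ne f h, extOp_of_ne f (Ne.symm h), op15_steiner.comm, blk_comm, add_comm i]
  inv := by
    rintro (_ | ⟨p, i⟩) (_ | ⟨q, j⟩)
    · rfl
    · simp [extOp, add_one_add_one]
    · simp [extOp]
    · by_cases h : p = q
      · subst h
        by_cases h2 : i = j
        · subst h2; simp [extOp]
        · rw [eq_add_one_of_ne h2, extOp_self_add]; rfl
      · rw [extOp_of_ne f h, extOp_of_ne f (op15_steiner.ne_left h).symm, op15_steiner.inv, blk_op15]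
        congr 2
        linear_combination two_eq i + two_eq (f (blk p q))

theorem extOp_veblen_none : VeblenOp (extOp f) none := by
  rintro (_ | ⟨p, i⟩) (_ | ⟨q, j⟩) ha hc hac
  · exact absurd rfl ha
  · exact absurd rfl ha
  · exact absurd rfl hc
  · rw [extOp_none_some, extOp_none_some]
    by_cases h : p = q
    · subst h
      have h2 : i ≠ j := fun hh => hac (by rw [hh])
      rw [eq_add_one_of_ne h2, extOp_self_add, extOp_self_add]
    · rw [extOp_of_ne f h, extOp_of_ne f h]
      congr 2
      linear_combination two_eq 1

theorem op15_noncollinear : ∀ p, ∃ q c, p ≠ q ∧ p ≠ c ∧ q ≠ c ∧ op15 p q ≠ c := by decide +kernel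

/-- A Veblen point other than `none` would project to a Veblen point of the cyclic system. -/
theorem extOp_veblen_iff (y : ExtPt) : VeblenOp (extOp f) y ↔ y = none := by
  refine ⟨fun h => ?_, fun h => h ▸ extOp_veblen_none f⟩
  rcases y with _ | ⟨p, i⟩
  · rfl
  exfalso
  obtain ⟨q, c, hpq, hpc, hqc, hn⟩ := op15_noncollinear p
  have := h (some (q, 0)) (some (c, 0)) (by simp [Ne.symm hpq]) (by simp [Ne.symm hpc])
    (by simp [hqc])
  have hne : op15 p q ≠ op15 p c := fun hh => hqc (op15_steiner.cancel hh)
  rw [extOp_of_ne f hpq, extOp_of_ne f hpc, extOp_of_ne f hqc, extOp_of_ne f hne] at this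
  exact op15_noPasch p q c hpq hpc hqc hn (congrArg Prod.fst (Option.some.inj this))

end Ext

section ExtIso

variable {α : Type*} [DecidableEq α] {T : Set (Finset α)} {op : α → α → α} {x : α}

/-- A system of order 31 with a Veblen point whose quotient is anti-Pasch is an extension of the
cyclic system. -/
theorem exists_ext [Fintype α] (hcard : Fintype.card α = 31) (hT : IsOp T op) (hv : VeblenOp op x)
    (hP : ¬ HasPasch (QuotTriples T x)) : ∃ f, OpIso (extOp f) op := by
  have hS := hT.steiner
  obtain ⟨Q, hQ, hQt⟩ := exists_quotOp hT hv
  have hQS := hQ.steiner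
  have hQP : NoPasch Q := by
    by_contra h
    exact hP ((hasPasch_iff hQ).2 h)
  choose rep rep_ne thr_rep using exists_thr (x := x) hT
  -- the two points over a point of the quotient
  let pt : QuotPts T x → ZMod 2 → α := fun P i => if i = 0 then rep P else op x (rep P)
  have pt0 : ∀ P, pt P 0 = rep P := fun P => by simp [pt]
  have pt_add : ∀ P i, pt P (i + 1) = op x (pt P i) := by
    intro P i
    rcases zmod2_cases i with rfl | rfl
    · simp [pt]
    · have h2 : (1 : ZMod 2) + 1 = 0 := by decide
      simp [pt, h2, hS.inv]
  have pt_ne : ∀ P i, pt P i ≠ x := by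
    intro P i
    simp only [pt]
    split_ifs
    · exact rep_ne P
    · exact hS.ne_left (rep_ne P).symm
  have thr_pt : ∀ P i, thr hT (pt_ne P i) = P := by
    intro P i
    rw [← thr_rep P, eq_comm]
    refine (thr_eq_iff hT (rep_ne P) _).2 ?_
    rw [thr_rep]
    simp only [pt]
    split_ifs <;> simp
  have pt_inj : ∀ P R i j, pt P i = pt R j → P = R ∧ i = j := by
    intro P R i j h
    have hPR : P = R := by
      rw [← thr_pt P i, ← thr_pt R j]
      congr 1
    subst hPR
    refine ⟨rfl, ?_⟩
    by_contra hij
    rw [eq_add_one_of_ne hij, pt_add] at h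
    exact hS.ne_right (pt_ne P i).symm h.symm
  have pt_surj : ∀ a, ∀ ha : a ≠ x, ∃ i, pt (thr hT ha) i = a := by
    intro a ha
    have := thr_rep (thr hT ha)
    rw [thr_eq_iff] at this
    rcases this with h | h
    · exact ⟨0, by rw [pt0, ← h]⟩
    · exact ⟨0 + 1, by rw [pt_add, pt0, ← h]⟩
  let Φ : Option (QuotPts T x × ZMod 2) → α := fun o => o.elim x fun z => pt z.1 z.2
  have Φbij : Function.Bijective Φ := by
    constructor
    · rintro (_ | ⟨P, i⟩) (_ | ⟨R, j⟩) h
      · rfl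
      · exact absurd h.symm (pt_ne R j)
      · exact absurd h (pt_ne P i)
      · obtain ⟨rfl, rfl⟩ := pt_inj P R i j h
        rfl
    · intro a
      by_cases ha : a = x
      · exact ⟨none, ha.symm⟩
      · obtain ⟨i, hi⟩ := pt_surj a ha
        exact ⟨some (thr hT ha, i), hi⟩
  have : Finite (QuotPts T x) := inferInstance
  let _ : Fintype (QuotPts T x) := Fintype.ofFinite _
  have hQc : Fintype.card (QuotPts T x) = 15 := by
    have := Fintype.card_of_bijective Φbij
    rw [hcard, Fintype.card_option, Fintype.card_prod, ZMod.card] at this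
    omega
  obtain ⟨e, he⟩ := antiPasch15_unique hQc hQS hQP
  -- the parameter of a pair of distinct points
  have hF : ∀ P R, ∃ F : ZMod 2, P ≠ R → ∀ i j, op (pt P i) (pt R j) = pt (Q P R) (i + j + F) := by
    intro P R
    by_cases hPR : P = R
    · exact ⟨0, fun h => absurd hPR h⟩
    have hne : thr hT (pt_ne P 0) ≠ thr hT (pt_ne R 0) := by rwa [thr_pt, thr_pt]
    have n1 := op_ne_of_thr_ne hT (pt_ne P 0) (pt_ne R 0) hne
    have h1 := hQt _ _ (pt_ne P 0) (pt_ne R 0) n1 hne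
    rw [thr_pt, thr_pt] at h1
    obtain ⟨F, hF⟩ := pt_surj _ n1
    rw [← h1] at hF
    refine ⟨F, fun _ => ?_⟩
    have left : ∀ i j, op (op x (pt P i)) (pt R j) = op x (op (pt P i) (pt R j)) := by
      intro i j
      have hh : thr hT (pt_ne P i) ≠ thr hT (pt_ne R j) := by rwa [thr_pt, thr_pt]
      rw [Ne, thr_eq_iff] at hh
      push Not at hh
      exact hv.op_left hS (pt_ne P i) hh.1.symm hh.2.symm
    have right : ∀ i j, op (pt P i) (op x (pt R j)) = op x (op (pt P i) (pt R j)) := by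
      intro i j
      have hh : thr hT (pt_ne R j) ≠ thr hT (pt_ne P i) := by
        rw [thr_pt, thr_pt]; exact Ne.symm hPR
      rw [Ne, thr_eq_iff] at hh
      push Not at hh
      rw [hS.comm, hv.op_left hS (pt_ne R j) hh.1.symm hh.2.symm, hS.comm (pt R j)]
    have h0j : ∀ j, op (pt P 0) (pt R j) = pt (Q P R) (j + F) := by
      intro j
      rcases zmod2_cases j with rfl | rfl
      · simpa using hF.symm
      · have h3 : op (pt P 0) (pt R (0 + 1)) = pt (Q P R) (F + 1) := by
          rw [pt_add, right, ← hF, pt_add]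
        have h4 : (1 : ZMod 2) + F = F + 1 := add_comm _ _
        simpa [h4] using h3
    intro i j
    rcases zmod2_cases i with rfl | rfl
    · simpa using h0j j
    · have h3 : op (pt P (0 + 1)) (pt R j) = pt (Q P R) (j + F + 1) := by
        rw [pt_add, left, h0j, pt_add]
      have h4 : (1 : ZMod 2) + j + F = j + F + 1 := by ring
      simpa [h4] using h3
  choose F hF using hF
  have Fcomm : ∀ P R, P ≠ R → F P R = F R P := by
    intro P R h
    have h1 := hF P R h 0 0
    rw [hS.comm, hF R P h.symm, hQS.comm R P] at h1
    simpa using (pt_inj _ _ _ _ h1).2.symm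
  have Fop : ∀ P R, P ≠ R → F P (Q P R) = F P R := by
    intro P R h
    have h1 := hF P R h 0 0
    have h2 := hF P (Q P R) (hQS.ne_left h).symm 0 (0 + 0 + F P R)
    rw [← h1, hS.inv] at h2
    have h3 := (pt_inj _ _ _ _ h2).2
    linear_combination -h3 - two_eq (F P R)
  let f : Fin 35 → ZMod 2 := fun b => F (e (bfst b)) (e (bsnd b))
  have hf : ∀ p q, p ≠ q → f (blk p q) = F (e p) (e q) := fun p q hpq =>
    eq_on_blk (fun p q => F (e p) (e q)) (fun p q h => Fcomm _ _ (e.injective.ne h))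
      (fun p q h => by simp only [he]; exact Fop _ _ (e.injective.ne h)) hpq
  refine ⟨f, (Equiv.optionCongr (e.prodCongr (Equiv.refl _))).trans (Equiv.ofBijective Φ Φbij), ?_⟩
  have hΦ : ∀ p i, ((Equiv.optionCongr (e.prodCongr (Equiv.refl _))).trans
      (Equiv.ofBijective Φ Φbij)) (some (p, i)) = pt (e p) i := fun p i => rfl
  have hΦ0 : ((Equiv.optionCongr (e.prodCongr (Equiv.refl _))).trans
      (Equiv.ofBijective Φ Φbij)) none = x := rfl
  rintro (_ | ⟨p, i⟩) (_ | ⟨q, j⟩)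
  · change x = op x x
    rw [hS.idem]
  · rw [extOp_none_some, hΦ, hΦ, hΦ0, pt_add]
  · rw [(extOp_steiner f).comm, extOp_none_some, hΦ, hΦ, hΦ0, pt_add, hS.comm]
  · by_cases h : p = q
    · subst h
      by_cases h2 : i = j
      · rw [h2, (extOp_steiner f).idem, hS.idem]
      · rw [eq_add_one_of_ne h2, extOp_self_add, hΦ, hΦ, hΦ0, pt_add, hS.comm, hS.inv_right]
    · rw [extOp_of_ne f h, hΦ, hΦ, hΦ, hF _ _ (e.injective.ne h), hf p q h, he]

/-- An extension of the cyclic system has a single Veblen point, and the quotient there is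
anti-Pasch. -/
theorem good_of_ext (hT : IsOp T op) {f : Fin 35 → ZMod 2} (hi : OpIso (extOp f) op) :
    ∃ x : α, (∀ y : α, IsVeblen T y ↔ y = x) ∧ ¬ HasPasch (QuotTriples T x) := by
  have hS := hT.steiner
  obtain ⟨e, he⟩ := hi
  have hv : VeblenOp op (e none) := (extOp_veblen_none f).of_iso e he
  refine ⟨e none, fun y => ⟨fun hy => ?_, fun hy => ?_⟩, ?_⟩
  · have he' : ∀ a b, e.symm (op a b) = extOp f (e.symm a) (e.symm b) := fun a b =>
      e.injective (by rw [he]; simp)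
    have := ((isVeblen_iff hT).1 hy).of_iso e.symm he'
    rw [extOp_veblen_iff] at this
    rw [← this, Equiv.apply_symm_apply]
  · rw [hy]
    exact (isVeblen_iff hT).2 hv
  · obtain ⟨Q, hQ, hQt⟩ := exists_quotOp hT hv
    rw [hasPasch_iff hQ, not_not]
    refine op15_noPasch.of_iso (OpIso.symm ?_)
    have ne : ∀ z, e (some z) ≠ e none := fun z => e.injective.ne (by simp)
    have eq_iff : ∀ p q i j, thr hT (ne (p, i)) = thr hT (ne (q, j)) ↔ p = q := by
      intro p q i j
      rw [thr_eq_iff, ← he, e.injective.eq_iff, e.injective.eq_iff, extOp_none_some]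
      simp only [Option.some.injEq, Prod.mk.injEq]
      constructor
      · rintro (h | h) <;> exact h.1.symm
      · rintro rfl
        by_cases h : i = j
        · exact Or.inl ⟨rfl, h.symm⟩
        · exact Or.inr ⟨rfl, eq_add_one_of_ne h⟩
    have bij : Function.Bijective fun p : Fin 15 => thr hT (ne (p, 0)) := by
      constructor
      · intro p q h
        exact (eq_iff p q 0 0).1 h
      · intro P
        obtain ⟨a, ha, rfl⟩ := exists_thr hT P
        obtain ⟨z, rfl⟩ := e.surjective a
        rcases z with _ | ⟨p, i⟩
        · exact absurd rfl ha
        · exact ⟨p, (eq_iff p p 0 i).2 rfl⟩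
    refine ⟨Equiv.ofBijective _ bij, fun p q => ?_⟩
    simp only [Equiv.ofBijective_apply]
    by_cases h : p = q
    · rw [h, op15_steiner.idem, hQ.steiner.idem]
    · have hne : thr hT (ne (p, 0)) ≠ thr hT (ne (q, 0)) := by rwa [Ne, eq_iff]
      rw [hQt _ _ _ _ (op_ne_of_thr_ne hT _ _ hne) hne]
      have h1 := extOp_of_ne f h 0 0
      have h2 := (eq_iff (op15 p q) (op15 p q) 0 (0 + 0 + f (blk p q))).2 rfl
      rw [h2]
      congr 1
      rw [← he, h1]

end ExtIso

/-! ### Isomorphisms between extensions -/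

section ExtIsoIff

/-- The automorphism group of the cyclic system. -/
def autGroup : Subgroup (Equiv.Perm (Fin 15)) where
  carrier := {σ | ∀ p q, σ (op15 p q) = op15 (σ p) (σ q)}
  one_mem' := fun _ _ => rfl
  mul_mem' := fun {σ τ} hσ hτ p q => by simp [hτ p q, hσ (τ p) (τ q)]
  inv_mem' := fun {σ} hσ p q => σ.injective (by rw [hσ]; simp)

theorem autGroup_map (σ : autGroup) (p q : Fin 15) : σ.1 (op15 p q) = op15 (σ.1 p) (σ.1 q) :=
  σ.2 p q

/-- The action of a permutation of the points on the blocks; it is meaningful for automorphisms. -/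
def bperm (σ : Equiv.Perm (Fin 15)) (b : Fin 35) : Fin 35 := blk (σ (bfst b)) (σ (bsnd b))

theorem bperm_blk (σ : autGroup) {p q : Fin 15} (h : p ≠ q) :
    bperm σ.1 (blk p q) = blk (σ.1 p) (σ.1 q) := by
  refine eq_on_blk (fun p q => blk (σ.1 p) (σ.1 q)) (fun p q _ => blk_comm _ _) (fun p q _ => ?_) h
  rw [autGroup_map, blk_op15]

theorem bperm_mul (σ τ : autGroup) (b : Fin 35) :
    bperm (σ * τ).1 b = bperm σ.1 (bperm τ.1 b) := by
  change _ = bperm σ.1 (blk _ _)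
  rw [bperm_blk σ (τ.1.injective.ne (bfst_ne_bsnd b))]
  rfl

theorem bperm_one (b : Fin 35) : bperm (1 : autGroup).1 b = b := blk_bfst_bsnd b

/-- The sum of `h` over the points of the block `b`. -/
def cobd (h : Fin 15 → ZMod 2) (b : Fin 35) : ZMod 2 :=
  h (bfst b) + h (bsnd b) + h (op15 (bfst b) (bsnd b))

theorem cobd_blk (h : Fin 15 → ZMod 2) {p q : Fin 15} (hpq : p ≠ q) :
    cobd h (blk p q) = h p + h q + h (op15 p q) := by
  refine eq_on_blk (fun p q => h p + h q + h (op15 p q)) (fun p q _ => ?_) (fun p q _ => ?_) hpq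
  · rw [op15_steiner.comm]
    ring
  · rw [op15_steiner.inv]
    ring

theorem cobd_bperm (h : Fin 15 → ZMod 2) (σ : autGroup) (b : Fin 35) :
    cobd h (bperm σ.1 b) = cobd (fun p => h (σ.1 p)) b := by
  rw [bperm, cobd_blk h (σ.1.injective.ne (bfst_ne_bsnd b)), ← autGroup_map]
  rfl

/-- Two extensions are isomorphic exactly when their parameters agree up to an automorphism of the
cyclic system and the sums of a function on the points over the blocks. -/
theorem extOp_iso_iff (f g : Fin 35 → ZMod 2) :
    OpIso (extOp f) (extOp g) ↔
      ∃ (σ : autGroup) (h : Fin 15 → ZMod 2), ∀ b, g (bperm σ.1 b) = f b + cobd h b := by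
  constructor
  · rintro ⟨e, he⟩
    have e0 : e none = none :=
      (extOp_veblen_iff g _).1 (VeblenOp.of_iso e he (extOp_veblen_none f))
    have hs : ∀ z : Fin 15 × ZMod 2, ∃ w : Fin 15 × ZMod 2, e (some z) = some w := by
      intro z
      rcases hz : e (some z) with _ | w
      · exact absurd (e.injective (hz.trans e0.symm)) (by simp)
      · exact ⟨w, rfl⟩
    choose w hw using hs
    have hw1 : ∀ p i, w (p, i + 1) = ((w (p, i)).1, (w (p, i)).2 + 1) := by
      intro p i
      have := he none (some (p, i))
      rw [extOp_none_some, hw, hw, e0, extOp_none_some] at this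
      exact Option.some.inj this
    have h01 : (0 : ZMod 2) + 1 = 1 := by decide
    have hwi : ∀ p i, w (p, i) = ((w (p, 0)).1, i + (w (p, 0)).2) := by
      intro p i
      rcases zmod2_cases i with rfl | rfl
      · simp
      · have := hw1 p 0
        rw [h01] at this
        rw [this, add_comm]
    have winj : ∀ z z', w z = w z' → z = z' := fun z z' hz =>
      Option.some.inj (e.injective (by rw [hw, hw, hz]))
    have σinj : Function.Injective fun p => (w (p, 0)).1 := by
      intro p q hpq
      have hpq' : (w (p, 0)).1 = (w (q, 0)).1 := hpq
      have := winj (p, 0) (q, (w (p, 0)).2 + (w (q, 0)).2) (by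
        rw [hwi q ((w (p, 0)).2 + _), ← hpq', add_assoc, two_eq, add_zero])
      exact congrArg Prod.fst this
    let σ : Equiv.Perm (Fin 15) := Equiv.ofBijective _ (Finite.injective_iff_bijective.1 σinj)
    have hσ : ∀ p, σ p = (w (p, 0)).1 := fun p => rfl
    have key : ∀ p q, p ≠ q → w (op15 p q, f (blk p q)) =
        (op15 (σ p) (σ q), (w (p, 0)).2 + (w (q, 0)).2 + g (blk (σ p) (σ q))) := by
      intro p q hpq
      have := he (some (p, 0)) (some (q, 0))
      rw [extOp_of_ne f hpq, hw, hw, hw, ← Prod.mk.eta (p := w (p, 0)),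
        ← Prod.mk.eta (p := w (q, 0)), extOp_of_ne g (σinj.ne hpq), zero_add, zero_add] at this
      exact Option.some.inj this
    refine ⟨⟨σ, fun p q => ?_⟩, fun p => (w (p, 0)).2, fun b => ?_⟩
    · by_cases hpq : p = q
      · subst hpq
        rw [op15_steiner.idem, op15_steiner.idem]
      · have := congrArg Prod.fst (key p q hpq)
        rw [hwi] at this
        exact this
    · have h1 := congrArg Prod.snd (key _ _ (bfst_ne_bsnd b))
      rw [hwi, blk_bfst_bsnd] at h1
      have h2 : f b + (w (op15 (bfst b) (bsnd b), 0)).2 = (w (bfst b, 0)).2 + (w (bsnd b, 0)).2 +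
        g (bperm σ b) := h1
      simp only [cobd]
      linear_combination -h2 - two_eq (w (bfst b, 0)).2 - two_eq (w (bsnd b, 0)).2
  · rintro ⟨σ, h, hg⟩
    let e : ExtPt ≃ ExtPt := Equiv.optionCongr
      { toFun := fun z => (σ.1 z.1, z.2 + h z.1)
        invFun := fun z => (σ.1.symm z.1, z.2 + h (σ.1.symm z.1))
        left_inv := fun z => by simp [add_assoc, two_eq]
        right_inv := fun z => by simp [add_assoc, two_eq] }
    have e0 : e none = none := rfl
    have e1 : ∀ p i, e (some (p, i)) = some (σ.1 p, i + h p) := fun p i => rfl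
    refine ⟨e, ?_⟩
    rintro (_ | ⟨p, i⟩) (_ | ⟨q, j⟩)
    · rfl
    · rw [extOp_none_some, e0, e1, e1, extOp_none_some]
      congr 2
      ring
    · rw [(extOp_steiner f).comm, (extOp_steiner g).comm, extOp_none_some, e0, e1, e1,
        extOp_none_some]
      congr 2
      ring
    · by_cases hpq : p = q
      · subst hpq
        by_cases hij : i = j
        · subst hij
          rw [(extOp_steiner f).idem, (extOp_steiner g).idem]
        · rw [eq_add_one_of_ne hij, extOp_self_add, e0, e1, e1, add_right_comm, extOp_self_add]
      · have := hg (blk p q)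
        rw [bperm_blk σ hpq, cobd_blk h hpq] at this
        rw [extOp_of_ne f hpq, e1, e1, e1, extOp_of_ne g (σ.1.injective.ne hpq), this, autGroup_map]
        congr 2
        linear_combination -two_eq (h p) - two_eq (h q)

end ExtIsoIff

/-! ### Counting solutions of linear equations over `GF(2)` -/

section LinearSystem

/-- The linear form on `GF(2)^n` whose coefficients are the first `n` binary digits of `l`. -/
def dot (n l : ℕ) (x : Fin n → ZMod 2) : ZMod 2 := ∑ i : Fin n, if l.testBit i then x i else 0

theorem dot_xor (n a b : ℕ) (x : Fin n → ZMod 2) : dot n (a ^^^ b) x = dot n a x + dot n b x := by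
  simp only [dot, ← Finset.sum_add_distrib]
  refine Finset.sum_congr rfl fun i _ => ?_
  rw [Nat.testBit_xor]
  rcases a.testBit i <;> rcases b.testBit i <;> simp [two_eq]

theorem dot_two_pow (n : ℕ) (j : Fin n) (x : Fin n → ZMod 2) : dot n (2 ^ j.val) x = x j := by
  simp [dot, Nat.testBit_two_pow, Fin.val_inj]

theorem dot_snoc (n l : ℕ) (y : Fin n → ZMod 2) (t : ZMod 2) :
    dot (n + 1) l (Fin.snoc y t) = dot n l y + if l.testBit n then t else 0 := by
  simp [dot, Fin.sum_univ_castSucc]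

theorem dot_zero (n : ℕ) (x : Fin n → ZMod 2) : dot n 0 x = 0 := by simp [dot]

/-- Binary digit `n` of `l`. -/
noncomputable def bit (l n : ℕ) : Bool := Nat.beq (Nat.land (Nat.shiftRight l n) 1) 1

theorem bit_eq (l n : ℕ) : bit l n = l.testBit n := by
  rw [Nat.testBit_eq_decide_div_mod_eq, bit]
  change Nat.beq (l >>> n &&& 1) 1 = _
  rw [Nat.and_one_is_mod, Nat.shiftRight_eq_div_pow, Bool.eq_iff_iff]
  simp

/-- The first form in `L` whose coefficient `n` is `1`, or `0` if there is none. -/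
noncomputable def pivot (n : ℕ) (L : List ℕ) : ℕ :=
  List.rec 0 (fun r _ ih => sel (bit r n) r ih) L

/-- `k L'`, where `L'` is obtained from `L` by adding `a` to the forms whose coefficient `n` is `1`
and removing zeros.  The members of `L'` are evaluated before they are used. -/
noncomputable def elim (n a : ℕ) (L : List ℕ) : (List ℕ → ℕ) → ℕ :=
  List.rec (fun k => k [])
    (fun r _ ih k => force (sel (bit r n) (Nat.xor r a) r) fun s =>
      sel (Nat.beq s 0) (ih k) (ih fun L' => k (s :: L'))) L

/-- The number of common zeros in `GF(2)^n` of the forms in `L`, by Gaussian elimination. -/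
noncomputable def solve (n : ℕ) : List ℕ → ℕ :=
  Nat.rec (fun _ => 1) (fun m ih L => force (pivot m L) fun a =>
    sel (Nat.beq a 0) (Nat.mul 2 (ih L)) (elim m a L ih)) n

theorem pivot_cons (n r : ℕ) (L : List ℕ) :
    pivot n (r :: L) = if r.testBit n then r else pivot n L := by
  rw [← bit_eq]
  exact sel_eq ..

theorem pivot_spec (n : ℕ) (L : List ℕ) :
    (pivot n L = 0 ∧ ∀ l ∈ L, l.testBit n = false) ∨
      (pivot n L ∈ L ∧ (pivot n L).testBit n = true) := by
  induction L with
  | nil => exact Or.inl ⟨rfl, by simp⟩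
  | cons r L ih =>
    rw [pivot_cons]
    split_ifs with h
    · exact Or.inr ⟨by simp, h⟩
    · rcases ih with ⟨h1, h2⟩ | ⟨h1, h2⟩
      · exact Or.inl ⟨h1, by simpa using ⟨by simpa using h, h2⟩⟩
      · exact Or.inr ⟨by simp [h1], h2⟩

theorem elim_eq (n a : ℕ) (L : List ℕ) (k : List ℕ → ℕ) :
    elim n a L k =
      k ((L.map fun r => if r.testBit n then r ^^^ a else r).filter (· ≠ 0)) := by
  induction L generalizing k with
  | nil => rfl
  | cons r L ih =>
    have h : elim n a (r :: L) k = force (sel (bit r n) (Nat.xor r a) r) fun s =>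
      sel (Nat.beq s 0) (elim n a L k) (elim n a L fun L' => k (s :: L')) := rfl
    rw [h, force_eq, sel_eq, sel_eq, bit_eq, ih, ih, List.map_cons, List.filter_cons]
    change (if Nat.beq (if r.testBit n = true then r ^^^ a else r) 0 = true then _ else _) = _
    generalize (if r.testBit n = true then r ^^^ a else r) = s
    by_cases hs : s = 0
    · simp [hs]
    · simp [hs]

theorem solve_succ (n : ℕ) (L : List ℕ) : solve (n + 1) L =
    if pivot n L = 0 then 2 * solve n L else
      solve n ((L.map fun r => if r.testBit n then r ^^^ pivot n L else r).filter (· ≠ 0)) := by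
  have h : solve (n + 1) L = force (pivot n L) fun a =>
    sel (Nat.beq a 0) (Nat.mul 2 (solve n L)) (elim n a L (solve n)) := rfl
  rw [h, force_eq, sel_eq, elim_eq]
  simp

/-- The common zeros of the forms in `L`. -/
abbrev Zeros (n : ℕ) (L : List ℕ) : Type := {x : Fin n → ZMod 2 // ∀ l ∈ L, dot n l x = 0}

theorem dot_init (n l : ℕ) (x : Fin (n + 1) → ZMod 2) :
    dot (n + 1) l x = dot n l (Fin.init x) + if l.testBit n then x (Fin.last n) else 0 := by
  conv_lhs => rw [← Fin.snoc_init_self x]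
  exact dot_snoc ..

/-- Without a pivot, the last coordinate of a zero is free. -/
def zerosFree (n : ℕ) (L : List ℕ) (h : ∀ l ∈ L, l.testBit n = false) :
    Zeros (n + 1) L ≃ Zeros n L × ZMod 2 where
  toFun x := (⟨Fin.init x.1, fun l hl => by
    have := x.2 l hl
    rwa [dot_init, h l hl, if_neg (by simp), add_zero] at this⟩, x.1 (Fin.last n))
  invFun y := ⟨Fin.snoc y.1.1 y.2, fun l hl => by
    rw [dot_snoc, h l hl, y.1.2 l hl]
    simp⟩
  left_inv x := by simp
  right_inv y := by simp

/-- With a pivot, the last coordinate of a zero is determined by the others. -/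
def zerosPivot (n : ℕ) (L : List ℕ) (a : ℕ) (ha : a ∈ L) (h : a.testBit n = true) :
    Zeros (n + 1) L ≃
      Zeros n ((L.map fun r => if r.testBit n then r ^^^ a else r).filter (· ≠ 0)) where
  toFun x := ⟨Fin.init x.1, fun l hl => by
    simp only [List.mem_filter, List.mem_map] at hl
    obtain ⟨⟨r, hr, rfl⟩, -⟩ := hl
    have h1 := x.2 r hr
    have h2 := x.2 a ha
    rw [dot_init] at h1 h2
    rw [if_pos h] at h2
    split_ifs at h1 ⊢
    · rw [dot_xor]
      linear_combination h1 + h2 - two_eq (x.1 (Fin.last n))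
    · simpa using h1⟩
  invFun y := ⟨Fin.snoc y.1 (dot n a y.1), fun l hl => by
    rw [dot_snoc]
    have h1 : dot n (if l.testBit n then l ^^^ a else l) y.1 = 0 := by
      by_cases h0 : (if l.testBit n then l ^^^ a else l) = 0
      · rw [h0, dot_zero]
      · exact y.2 _ (List.mem_filter.2 ⟨List.mem_map.2 ⟨l, hl, rfl⟩, by simpa using h0⟩)
    split_ifs at h1 ⊢
    · rwa [dot_xor] at h1
    · rw [h1, add_zero]⟩
  left_inv x := by
    have h2 := x.2 a ha
    rw [dot_init, if_pos h] at h2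
    have h3 : dot n a (Fin.init x.1) = x.1 (Fin.last n) := by
      linear_combination h2 - two_eq (x.1 (Fin.last n))
    apply Subtype.ext
    change Fin.snoc (Fin.init x.1) (dot n a (Fin.init x.1)) = x.1
    rw [h3, Fin.snoc_init_self]
  right_inv y := by simp

theorem card_zeros (n : ℕ) (L : List ℕ) : Nat.card (Zeros n L) = solve n L := by
  induction n generalizing L with
  | zero =>
    have : Unique (Zeros 0 L) :=
      { default := ⟨Fin.elim0, fun l _ => by simp [dot]⟩
        uniq := fun x => Subtype.ext (Subsingleton.elim _ _) }
    exact Nat.card_unique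
  | succ n ih =>
    rw [solve_succ]
    rcases pivot_spec n L with ⟨h1, h2⟩ | ⟨h1, h2⟩
    · rw [if_pos h1, Nat.card_congr (zerosFree n L h2), Nat.card_prod, ih, mul_comm]
      simp
    · have h3 : pivot n L ≠ 0 := fun hh => by simp [hh] at h2
      rw [if_neg h3, Nat.card_congr (zerosPivot n L _ h1 h2), ih]

end LinearSystem

/-! ### The automorphisms of the cyclic system -/

section Affine

/-- The multipliers of the cyclic system. -/
def mult : Fin 4 → Fin 15 := ![1, 13, 4, 7]

/-- The inverses of the multipliers modulo 15. -/
def multInv : Fin 4 → Fin 15 := ![1, 7, 4, 13]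

theorem mult_op15 : ∀ (k : Fin 4) (p q : Fin 15),
    mult k * op15 p q = op15 (mult k * p) (mult k * q) := by decide +kernel

theorem op15_add (p q s : Fin 15) : op15 (p + s) (q + s) = op15 p q + s := by
  rw [op15, op15, add_sub_add_right_eq_sub, add_right_comm]

/-- The map `p ↦ k p + s`, where `k` is a multiplier of the cyclic system. -/
def affine (z : Fin 4 × Fin 15) : autGroup where
  val :=
    { toFun := fun p => mult z.1 * p + z.2
      invFun := fun p => multInv z.1 * (p - z.2)
      left_inv := by revert z; decide +kernel
      right_inv := by revert z; decide +kernel }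
  property := fun p q => by
    change mult z.1 * op15 p q + z.2 = op15 (mult z.1 * p + z.2) (mult z.1 * q + z.2)
    rw [op15_add, mult_op15]

theorem affine_injective : Function.Injective affine := by
  have h : ∀ z z' : Fin 4 × Fin 15, mult z.1 * 0 + z.2 = mult z'.1 * 0 + z'.2 →
    mult z.1 * 1 + z.2 = mult z'.1 * 1 + z'.2 → z = z' := by decide +kernel
  intro z z' hz
  exact h z z' (congrArg (fun σ : autGroup => σ.1 0) hz) (congrArg (fun σ : autGroup => σ.1 1) hz)

/-- The images of all points under a homomorphism which maps `0, 5, 1` to `a, b, c`. -/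
def images (a b c : Fin 15) : Fin 15 → Fin 15 :=
  let m10 := op15 a b
  let m4 := op15 a c
  let m2 := op15 c b
  let m9 := op15 a m2
  let m6 := op15 b m9
  let m8 := op15 a m6
  let m3 := op15 c m10
  let m14 := op15 a m3
  let m7 := op15 b m14
  let m13 := op15 a m7
  let m11 := op15 b m13
  let m12 := op15 a m11
  ![a, c, m2, m3, m4, b, m6, m7, m8, m9, m10, m11, m12, m13, m14]

theorem eq_images (σ : autGroup) (p : Fin 15) : σ.1 p = images (σ.1 0) (σ.1 5) (σ.1 1) p := by
  have h : p = images 0 5 1 p := by revert p; decide +kernel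
  conv_lhs => rw [h]
  simp only [images, ← autGroup_map]
  fin_cases p <;> rfl

/-- An automorphism fixing `0` is multiplication by a multiplier; the images of the pairs
`p, p + 1` suffice to see this. -/
theorem images_zero : ∀ b c : Fin 15, 0 ≠ b → 0 ≠ c →
    (∀ p, images 0 b c (op15 p (p + 1)) = op15 (images 0 b c p) (images 0 b c (p + 1))) →
      ∃ k, ∀ p, images 0 b c p = mult k * p := by
  decide +kernel

theorem affine_surjective : Function.Surjective affine := by
  intro σ
  let s := σ.1 0
  let τ : autGroup := (affine (0, s))⁻¹ * σ
  have hs : ∀ p, (affine (0, s)).1 p = p + s := fun p => by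
    change 1 * p + s = p + s
    rw [one_mul]
  have hστ : ∀ p, σ.1 p = τ.1 p + s := by
    intro p
    rw [← hs]
    simp [τ]
  have h0 : τ.1 0 = 0 := by
    have := hστ 0
    exact (left_eq_add.1 ((add_comm _ _).trans this.symm).symm)
  have him := eq_images τ
  rw [h0] at him
  obtain ⟨k, hk⟩ := images_zero (τ.1 5) (τ.1 1)
    (fun hh => absurd (τ.1.injective (h0.trans hh)) (by decide))
    (fun hh => absurd (τ.1.injective (h0.trans hh)) (by decide))
    (fun p => by rw [← him, ← him, ← him, autGroup_map])
  refine ⟨(k, s), Subtype.ext (Equiv.ext fun p => ?_)⟩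
  rw [hστ, him, hk]
  rfl

/-- The automorphisms of the cyclic system are affine. -/
noncomputable def affineEquiv : Fin 4 × Fin 15 ≃ autGroup :=
  Equiv.ofBijective affine ⟨affine_injective, affine_surjective⟩

end Affine

/-! ### The fixed points -/

section Fixed

/-- The equation `f b + f b' + ∑ h = 0` with the sum over the points of `b' = σ b`, as a linear form
in 50 variables: the values of `f`, followed by the values of `h`. -/
def row (σ : Equiv.Perm (Fin 15)) (b : Fin 35) : ℕ :=
  let c := bperm σ b
  2 ^ b.val ^^^ (2 ^ c.val ^^^ (2 ^ (35 + (bfst c).val) ^^^ (2 ^ (35 + (bsnd c).val) ^^^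
    2 ^ (35 + (op15 (bfst c) (bsnd c)).val))))

/-- The equations for the pairs `f`, `h` for which `f` is fixed by `σ` and `h`. -/
def rows (σ : Equiv.Perm (Fin 15)) : List ℕ := (List.finRange 35).map (row σ)

/-- The total number of solutions for the affine maps in the list `l`. -/
noncomputable def total (l : List (Fin 4 × Fin 15)) : ℕ :=
  List.rec 0 (fun z _ ih => Nat.add (elim 50 0 (rows (affine z).1) (solve 50)) ih) l

set_option maxRecDepth 100000 in
theorem total_eq : total (List.finRange 4 ×ˢ List.finRange 15) = 17888 * 60 * 2 ^ 15 := by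
  decide +kernel

/-- `elim 50 0` only evaluates the equations and drops the zeros, so `total` counts solutions. -/
theorem total_eq_sum (l : List (Fin 4 × Fin 15)) :
    total l = (l.map fun z => Nat.card (Zeros 50 (rows (affine z).1))).sum := by
  induction l with
  | nil => rfl
  | cons z l ih =>
    have h : total (z :: l) = elim 50 0 (rows (affine z).1) (solve 50) + total l := rfl
    rw [h, ih, List.map_cons, List.sum_cons, elim_eq, ← card_zeros]
    congr 1
    refine Nat.card_congr (Equiv.subtypeEquivRight fun x => ?_)
    simp only [Nat.xor_zero, ite_self, List.map_id', List.mem_filter, decide_eq_true_eq]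
    refine ⟨fun hx l hl => ?_, fun hx l hl => hx l hl.1⟩
    by_cases h0 : l = 0
    · rw [h0, dot_zero]
    · exact hx l ⟨hl, h0⟩

noncomputable instance : Fintype autGroup := Fintype.ofEquiv _ affineEquiv

theorem sum_card_zeros :
    ∑ σ : autGroup, Nat.card (Zeros 50 (rows σ.1)) = 17888 * 60 * 2 ^ 15 := by
  have hl : (List.finRange 4 ×ˢ List.finRange 15).Nodup :=
    (List.nodup_finRange 4).product (List.nodup_finRange 15)
  rw [← total_eq, total_eq_sum, ← affineEquiv.sum_comp, ← List.sum_toFinset _ hl]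
  refine Finset.sum_congr ?_ fun _ _ => rfl
  ext ⟨k, s⟩
  simp

/-- The pairs `f`, `h` for which `f` is fixed by `σ` and `h`. -/
abbrev FixedPairs (σ : autGroup) : Type :=
  {y : (Fin 35 → ZMod 2) × (Fin 15 → ZMod 2) // ∀ b, y.1 (bperm σ.1 b) = y.1 b +
    cobd y.2 (bperm σ.1 b)}

theorem dot_row (σ : Equiv.Perm (Fin 15)) (b : Fin 35) (x : Fin 50 → ZMod 2) :
    dot 50 (row σ b) x = x (Fin.castAdd 15 b) + x (Fin.castAdd 15 (bperm σ b)) +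
      cobd (fun p => x (Fin.natAdd 35 p)) (bperm σ b) := by
  have h1 := fun j : Fin 35 => dot_two_pow 50 (Fin.castAdd 15 j) x
  have h2 := fun j : Fin 15 => dot_two_pow 50 (Fin.natAdd 35 j) x
  simp only [Fin.val_castAdd, Fin.val_natAdd] at h1 h2
  simp only [row, dot_xor, h1, h2, cobd]
  ring

/-- The 50 variables of the equations in `rows` are the values of `f` and of `h`. -/
def zerosEquiv (σ : autGroup) : Zeros 50 (rows σ.1) ≃ FixedPairs σ :=
  (Equiv.subtypeEquiv
    { toFun := fun x : Fin 50 → ZMod 2 =>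
        ((fun b => x (Fin.castAdd 15 b), fun p => x (Fin.natAdd 35 p)) :
          (Fin 35 → ZMod 2) × (Fin 15 → ZMod 2))
      invFun := fun y => Fin.append y.1 y.2
      left_inv := fun x => Fin.append_castAdd_natAdd
      right_inv := fun y => by simp }
    fun x => by
      simp only [rows, List.mem_map, List.mem_finRange, true_and, forall_exists_index,
        forall_apply_eq_imp_iff, dot_row, Equiv.coe_fn_mk]
      refine forall_congr' fun b => ⟨fun h => ?_, fun h => ?_⟩
      · linear_combination h - two_eq (x (Fin.castAdd 15 b)) -
          two_eq (cobd (fun p => x (Fin.natAdd 35 p)) (bperm σ.1 b))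
      · rw [h]
        linear_combination two_eq (x (Fin.castAdd 15 b)) +
          two_eq (cobd (fun p => x (Fin.natAdd 35 p)) (bperm σ.1 b)))

end Fixed

/-! ### Counting orbits -/

section Orbits

/-- The action of the automorphisms of the cyclic system on functions on its points. -/
def autAct : autGroup →* MulAut (Multiplicative (Fin 15 → ZMod 2)) where
  toFun σ :=
    { toFun := fun h => Multiplicative.ofAdd fun p => h.toAdd (σ⁻¹.1 p)
      invFun := fun h => Multiplicative.ofAdd fun p => h.toAdd (σ.1 p)
      left_inv := fun h => by simp
      right_inv := fun h => by simp
      map_mul' := fun h h' => rfl }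
  map_one' := rfl
  map_mul' σ τ := by
    ext h
    simp [mul_inv_rev]

/-- The group of all pairs of an automorphism of the cyclic system and a function on its points. -/
abbrev ExtGroup : Type := SemidirectProduct (Multiplicative (Fin 15 → ZMod 2)) autGroup autAct

/-- `ExtGroup` acts on the parameters of the extensions, by permuting the blocks and adding the sums
of a function on the points over the blocks. -/
instance : MulAction ExtGroup (Fin 35 → ZMod 2) where
  smul g f := fun b => f (bperm (g.right⁻¹).1 b) + cobd g.left.toAdd b
  one_smul f := by
    funext b
    change f (bperm (1 : autGroup)⁻¹.1 b) + cobd 0 b = f b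
    rw [inv_one, bperm_one]
    simp [cobd]
  mul_smul g g' f := by
    funext b
    change f (bperm ((g.right * g'.right)⁻¹).1 b) +
      cobd (g.left.toAdd + fun p => g'.left.toAdd (g.right⁻¹.1 p)) b =
      f (bperm (g'.right⁻¹).1 (bperm (g.right⁻¹).1 b)) +
        cobd g'.left.toAdd (bperm (g.right⁻¹).1 b) + cobd g.left.toAdd b
    rw [mul_inv_rev, bperm_mul, cobd_bperm]
    simp only [cobd, Pi.add_apply]
    ring

theorem ext_smul_apply (g : ExtGroup) (f : Fin 35 → ZMod 2) (b : Fin 35) :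
    (g • f) b = f (bperm (g.right⁻¹).1 b) + cobd g.left.toAdd b := rfl

theorem bperm_inv_bperm (σ : autGroup) (b : Fin 35) : bperm σ⁻¹.1 (bperm σ.1 b) = b := by
  rw [← bperm_mul, inv_mul_cancel, bperm_one]

theorem bperm_bperm_inv (σ : autGroup) (b : Fin 35) : bperm σ.1 (bperm σ⁻¹.1 b) = b := by
  rw [← bperm_mul, mul_inv_cancel, bperm_one]

theorem smul_eq_iff (g : ExtGroup) (f f' : Fin 35 → ZMod 2) : g • f = f' ↔
    ∀ b, f' (bperm g.right.1 b) = f b + cobd g.left.toAdd (bperm g.right.1 b) := by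
  constructor
  · rintro rfl b
    rw [ext_smul_apply, bperm_inv_bperm]
  · intro h
    funext b
    have := h (bperm g.right⁻¹.1 b)
    rw [bperm_bperm_inv] at this
    rw [ext_smul_apply, this]

/-- The orbits are the isomorphism classes of extensions. -/
theorem orbit_iff (f f' : Fin 35 → ZMod 2) :
    MulAction.orbitRel ExtGroup (Fin 35 → ZMod 2) f f' ↔ OpIso (extOp f') (extOp f) := by
  rw [MulAction.orbitRel_apply, MulAction.mem_orbit_iff, extOp_iso_iff]
  constructor
  · rintro ⟨g, hg⟩
    refine ⟨g.right, fun p => g.left.toAdd (g.right.1 p), fun b => ?_⟩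
    rw [(smul_eq_iff _ _ _).1 hg b, cobd_bperm]
  · rintro ⟨σ, h, hh⟩
    refine ⟨⟨Multiplicative.ofAdd fun p => h (σ⁻¹.1 p), σ⟩, (smul_eq_iff _ _ _).2 fun b => ?_⟩
    rw [hh b, cobd_bperm]
    simp

/-- The pairs of a group element and a parameter fixed by it, sorted by automorphism. -/
def fixedEquiv : (Σ g : ExtGroup, MulAction.fixedBy (Fin 35 → ZMod 2) g) ≃
    Σ σ : autGroup, FixedPairs σ where
  toFun z := ⟨z.1.right, (z.2.1, z.1.left.toAdd), (smul_eq_iff _ _ _).1 z.2.2⟩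
  invFun z := ⟨⟨Multiplicative.ofAdd z.2.1.2, z.1⟩, z.2.1.1, (smul_eq_iff _ _ _).2 z.2.2⟩
  left_inv _ := rfl
  right_inv _ := rfl

/-- Burnside's lemma. -/
theorem card_orbits :
    Nat.card (MulAction.orbitRel.Quotient ExtGroup (Fin 35 → ZMod 2)) = 17888 := by
  have h1 := Nat.card_congr (fixedEquiv.symm.trans
    (MulAction.sigmaFixedByEquivOrbitsProdGroup ExtGroup (Fin 35 → ZMod 2)))
  have h2 : Nat.card ExtGroup = 60 * 2 ^ 15 := by
    rw [Nat.card_congr SemidirectProduct.equivProd, Nat.card_prod,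
      ← Nat.card_congr affineEquiv, Nat.card_congr Multiplicative.toAdd]
    simp
  rw [Nat.card_sigma, Nat.card_prod, h2,
    ← Finset.sum_congr rfl fun σ _ => Nat.card_congr (zerosEquiv σ), sum_card_zeros] at h1
  change Nat.card (Quotient (MulAction.orbitRel ExtGroup (Fin 35 → ZMod 2))) = 17888
  omega

end Orbits

section Count

/-- The extensions, with the points renamed to `Fin 31`. -/
theorem exists_system (f : Fin 35 → ZMod 2) : ∃ (T : Set (Finset (Fin 31)))
    (op : Fin 31 → Fin 31 → Fin 31), IsOp T op ∧ OpIso (extOp f) op := by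
  let e : ExtPt ≃ Fin 31 := Fintype.equivFinOfCardEq (by simp)
  let op : Fin 31 → Fin 31 → Fin 31 := fun a b => e (extOp f (e.symm a) (e.symm b))
  have hS := extOp_steiner f
  have hop : IsSteiner op := ⟨fun a => by simp [op, hS.idem],
    fun a b => by simp only [op]; rw [hS.comm], fun a b => by simp [op, hS.inv]⟩
  exact ⟨triplesOf op, op, isOp_triplesOf hop, e, fun a b => by simp [op]⟩

end Count

/-- There are exactly 17888 isomorphism classes of Steiner triple systems of
order 31 with exactly one Veblen point `x` whose quotient system at `x`
(an `STS(15)`) is anti-Pasch. -/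
theorem sts31_quotient_antipasch_count :
    Nat.card (Quot (fun S₁ S₂ : {T : Set (Finset (Fin 31)) //
        IsSTS T ∧ ∃ x : Fin 31, (∀ y : Fin 31, IsVeblen T y ↔ y = x) ∧
          ¬ HasPasch (QuotTriples T x)} => STSIso S₁.1 S₂.1)) = 17888 := by
  choose T op hop hiso using exists_system
  rw [← card_orbits]
  symm
  have hex : ∀ S : {T : Set (Finset (Fin 31)) //
      IsSTS T ∧ ∃ x : Fin 31, (∀ y : Fin 31, IsVeblen T y ↔ y = x) ∧
        ¬ HasPasch (QuotTriples T x)}, ∃ f, ∃ o, IsOp S.1 o ∧ OpIso (extOp f) o := by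
    rintro ⟨S, hS, x, hx, hP⟩
    obtain ⟨o, ho⟩ := exists_isOp hS
    obtain ⟨f, hf⟩ := exists_ext (by simp) ho ((isVeblen_iff ho).1 ((hx x).2 rfl)) hP
    exact ⟨f, o, ho, hf⟩
  choose par o ho hpar using hex
  have key : ∀ S₁ S₂, STSIso S₁.1 S₂.1 ↔
      MulAction.orbitRel ExtGroup (Fin 35 → ZMod 2) (par S₁) (par S₂) := by
    intro S₁ S₂
    rw [orbit_iff, stsIso_iff (ho S₁) (ho S₂)]
    exact ⟨fun h => (hpar S₂).trans (h.symm.trans (hpar S₁).symm),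
      fun h => (hpar S₁).symm.trans (h.symm.trans (hpar S₂))⟩
  refine Nat.card_congr (Equiv.ofBijective (Quot.lift (fun S => Quotient.mk _ (par S))
    fun S₁ S₂ h => Quotient.sound ((key S₁ S₂).1 h)) ⟨?_, ?_⟩).symm
  · rintro ⟨S₁⟩ ⟨S₂⟩ h
    exact Quot.sound ((key S₁ S₂).2 (Quotient.exact h))
  · rintro ⟨f⟩
    let S : {T : Set (Finset (Fin 31)) //
      IsSTS T ∧ ∃ x : Fin 31, (∀ y : Fin 31, IsVeblen T y ↔ y = x) ∧
        ¬ HasPasch (QuotTriples T x)} := ⟨T f, (hop f).isSTS, good_of_ext (hop f) (hiso f)⟩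
    refine ⟨Quot.mk _ S, Quotient.sound ((orbit_iff _ _).2 ?_)⟩
    exact (hiso f).trans (((stsIso_iff (hop f) (ho S)).1 ⟨Equiv.refl _, fun t => by simp [S]⟩).trans
      (hpar S).symm)
end

section
/- Up to isomorphism, there are exactly 2 Steiner triple systems of order 31 that contain exactly three Veblen points. -/
/-!
Adjoining a unit to the points of a Steiner triple system gives a Steiner loop: a commutative
loop of exponent two with `a(ab) = b`, in which two points multiply to the third point of their
triple. Isomorphisms of systems and of loops correspond (`stsIso_iff`), and the Veblen points are
the non-unit central elements (`IsSTS.veblen_iff`). The task is therefore to classify the Steiner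
loops of order 32 whose center has order exactly 4.

The quotient by the center is a Steiner loop of order 8, which is the group `GF(2)^3`
(`CentralHom.assoc_mod`), so the loop is a central extension of `GF(2)^3` by `GF(2)^2`. Its cocycle
is a function from the seven lines of the Fano plane to `GF(2)^2`. Taking the products of powers
of three elements `x, y, w` as coset representatives makes it vanish on four lines, and leaves
three values `A, B, C` (`exists_coordinates`, `model`). Changing the basis of `GF(2)^3` acts on
`(A, B, C)` by transpositions and by adding one entry to another, and changing the basis of
`GF(2)^2` applies an invertible linear map to each entry; so only the rank of `(A, B, C)`, which is
0, 1 or 2, matters (`model_classify`).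

Rank 0 gives the elementary abelian group, whose center is everything. In the other two cases the
center is exactly the kernel (`central_model`). They are not isomorphic: in rank 1 all nontrivial
associators are equal, in rank 2 they are not (`models_not_iso`). Hence there are two classes.
-/

universe u v

/-! ### Steiner loops -/

/-- `m` is a Steiner loop operation with unit `o`: commutative, of exponent two, and with
`a(ab) = b`. That `o` is a unit follows, see `SteinerLoop.mul_unit`. -/
structure SteinerLoop {L : Type u} (m : L → L → L) (o : L) : Prop where
  comm : ∀ a b, m a b = m b a
  self : ∀ a, m a a = o
  left : ∀ a b, m a (m a b) = b

/-- The central elements of a Steiner loop. Since the loops considered are commutative,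
associating from the left with every pair is all that is required. -/
def IsCentral {L : Type u} (m : L → L → L) (z : L) : Prop :=
  ∀ a b, m z (m a b) = m (m z a) b

/-- Isomorphism of sets with a binary operation. -/
def LoopIso {L : Type u} {M : Type v} (m : L → L → L) (n : M → M → M) : Prop :=
  ∃ φ : L ≃ M, ∀ a b, φ (m a b) = n (φ a) (φ b)

namespace LoopIso

variable {L : Type u} {M : Type v} {m : L → L → L} {n : M → M → M}

theorem symm (h : LoopIso m n) : LoopIso n m := by
  obtain ⟨φ, hφ⟩ := h
  exact ⟨φ.symm, fun a b => φ.injective (by simp [hφ])⟩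

theorem trans {N : Type*} {k : N → N → N} (h : LoopIso m n) (h' : LoopIso n k) :
    LoopIso m k := by
  obtain ⟨φ, hφ⟩ := h
  obtain ⟨ψ, hψ⟩ := h'
  exact ⟨φ.trans ψ, fun a b => by simp [hφ, hψ]⟩

theorem ncard_central (h : LoopIso m n) :
    {z | IsCentral m z}.ncard = {z | IsCentral n z}.ncard := by
  obtain ⟨φ, hφ⟩ := h
  rw [← Set.ncard_image_of_injective {z | IsCentral m z} φ.injective]
  congr 1
  ext z
  simp only [Set.mem_image, Set.mem_ofPred_eq]
  constructor
  · rintro ⟨y, hy, rfl⟩ a b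
    obtain ⟨a, rfl⟩ := φ.surjective a
    obtain ⟨b, rfl⟩ := φ.surjective b
    rw [← hφ, ← hφ, ← hφ, ← hφ, hy]
  · intro hz
    obtain ⟨y, rfl⟩ := φ.surjective z
    refine ⟨y, fun a b => φ.injective ?_, rfl⟩
    rw [hφ, hφ, hφ, hφ, hz]

theorem associator (h : LoopIso m n) {e : M}
    (he : ∀ u v w, n (n u v) w = n u (n v w) ∨ n (n u v) w = n e (n u (n v w))) :
    ∃ z, ∀ u v w, m (m u v) w = m u (m v w) ∨ m (m u v) w = m z (m u (m v w)) := by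
  obtain ⟨φ, hφ⟩ := h
  refine ⟨φ.symm e, fun u v w => ?_⟩
  have := he (φ u) (φ v) (φ w)
  refine this.imp (fun h => φ.injective ?_) (fun h => φ.injective ?_) <;> simpa [hφ] using h

end LoopIso

namespace SteinerLoop

variable {L : Type u} {m : L → L → L} {o : L}

theorem mul_unit (h : SteinerLoop m o) (a : L) : m a o = a := by
  rw [← h.self a, h.left]

theorem unit_mul (h : SteinerLoop m o) (a : L) : m o a = a := by
  rw [h.comm, h.mul_unit]

theorem right (h : SteinerLoop m o) (a b : L) : m (m a b) b = a := by
  rw [h.comm, h.comm a b, h.left]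

theorem left' (h : SteinerLoop m o) (a b : L) : m a (m b a) = b := by
  rw [h.comm b a, h.left]

theorem right' (h : SteinerLoop m o) (a b : L) : m (m a b) a = b := by
  rw [h.comm a b, h.right]

theorem cancel (h : SteinerLoop m o) {a b c : L} (e : m a b = m a c) : b = c := by
  rw [← h.left a b, e, h.left]

theorem cancel_right (h : SteinerLoop m o) {a b c : L} (e : m b a = m c a) : b = c := by
  rw [← h.right b a, e, h.right]

theorem central_unit (h : SteinerLoop m o) : IsCentral m o := fun a b => by
  rw [h.unit_mul, h.unit_mul]

theorem central_mul {y z : L} (hy : IsCentral m y) (hz : IsCentral m z) :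
    IsCentral m (m y z) := fun a b => by
  rw [← hy, hz, hy, hy]

theorem mul_central (h : SteinerLoop m o) {z : L} (hz : IsCentral m z) (a b : L) :
    m a (m z b) = m z (m a b) := by
  rw [h.comm, ← hz, h.comm b]

theorem eq_of_mul_eq_unit (h : SteinerLoop m o) {a b : L} (e : m a b = o) : a = b := by
  rw [← h.self b] at e
  exact h.cancel_right e

/-- Up to a central factor, a triple `{u, v, t}` of the loop can be read in any order. -/
theorem line (h : SteinerLoop m o) {k u v t : L} (hk : IsCentral m k) (e : m u v = m k t) :
    (m u v = m k t ∧ m v u = m k t) ∧ (m u t = m k v ∧ m t u = m k v) ∧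
      (m v t = m k u ∧ m t v = m k u) := by
  have e1 : m u t = m k v := by
    apply h.cancel (a := k)
    rw [← h.mul_central hk, ← e, h.left, h.left]
  have e2 : m v t = m k u := by
    apply h.cancel (a := k)
    rw [← h.mul_central hk, ← e, h.comm u, h.left, h.left]
  exact ⟨⟨e, by rw [h.comm, e]⟩, ⟨e1, by rw [h.comm, e1]⟩, e2, by rw [h.comm, e2]⟩

end SteinerLoop

/-! ### Steiner triple systems as Steiner loops -/

section STS

variable {α : Type u} [DecidableEq α]

open Classical in
/-- The Steiner loop of a triple system: `none` is the adjoined unit, two distinct points multiply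
to the third point of their triple, and the square of a point, which lies in no set `{a, a, c}` of
three elements, is `none`. -/
noncomputable def stsLoop (T : Set (Finset α)) : Option α → Option α → Option α
  | none, b => b
  | some a, none => some a
  | some a, some b => if h : ∃ c, ({a, b, c} : Finset α) ∈ T then some h.choose else none

theorem IsSTS.distinct {T : Set (Finset α)} (hT : IsSTS T) {a b c : α}
    (h : ({a, b, c} : Finset α) ∈ T) : a ≠ b ∧ a ≠ c ∧ b ≠ c := by
  have h3 := hT.1 _ h
  have h2 : ∀ p q : α, ({p, q} : Finset α).card ≤ 2 := fun p q => Finset.card_le_two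
  refine ⟨?_, ?_, ?_⟩ <;> rintro rfl
  · have := h2 a c; simp_all
  · have := h2 b a; rw [Finset.insert_comm] at h3; simp_all
  · have := h2 a b; simp_all

theorem exists_third {t : Finset α} (ht : t.card = 3) {a b : α} (ha : a ∈ t) (hb : b ∈ t)
    (hab : a ≠ b) : ∃ c, t = {a, b, c} ∧ a ≠ c ∧ b ≠ c := by
  obtain ⟨c, hc, hc'⟩ := Finset.exists_mem_notMem_of_card_lt_card
    (s := ({a, b} : Finset α)) (t := t) (by rw [Finset.card_pair hab]; omega)
  have hac : a ≠ c := by grind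
  have hbc : b ≠ c := by grind
  refine ⟨c, (Finset.eq_of_subset_of_card_le ?_ ?_).symm, hac, hbc⟩
  · intro x hx; grind
  · rw [ht, Finset.card_eq_three.2 ⟨a, b, c, hab, hac, hbc, rfl⟩]

theorem IsSTS.third_unique {T : Set (Finset α)} (hT : IsSTS T) {a b c d : α}
    (h : ({a, b, c} : Finset α) ∈ T) (h' : ({a, b, d} : Finset α) ∈ T) : c = d := by
  have e := (hT.2 a b (hT.distinct h).1).unique ⟨h, by simp, by simp⟩ ⟨h', by simp, by simp⟩
  have hc : c ∈ ({a, b, d} : Finset α) := by rw [← e]; simp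
  have := hT.distinct h
  grind

theorem IsSTS.loop_iff {T : Set (Finset α)} (hT : IsSTS T) (a b c : α) :
    stsLoop T (some a) (some b) = some c ↔ ({a, b, c} : Finset α) ∈ T := by
  simp only [stsLoop]
  constructor
  · intro h
    split_ifs at h with h'
    · simp only [Option.some.injEq] at h
      rw [← h]; exact h'.choose_spec
  · intro h
    have h' : ∃ c, ({a, b, c} : Finset α) ∈ T := ⟨c, h⟩
    rw [dif_pos h', hT.third_unique h'.choose_spec h]

theorem IsSTS.steinerLoop {T : Set (Finset α)} (hT : IsSTS T) :
    SteinerLoop (stsLoop T) none where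
  comm := by
    rintro (_ | a) (_ | b) <;> try rfl
    ext c
    simp only [hT.loop_iff]
    rw [Finset.insert_comm]
  self := by
    rintro (_ | a); · rfl
    by_contra h
    obtain ⟨c, hc⟩ := Option.ne_none_iff_exists'.1 h
    exact (hT.distinct ((hT.loop_iff _ _ _).1 hc)).1 rfl
  left := by
    have self : ∀ a, stsLoop T (some a) (some a) = none := by
      intro a
      by_contra h
      obtain ⟨c, hc⟩ := Option.ne_none_iff_exists'.1 h
      exact (hT.distinct ((hT.loop_iff _ _ _).1 hc)).1 rfl
    rintro (_ | a) (_ | b)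
    · rfl
    · rfl
    · exact self a
    · by_cases hab : a = b
      · subst hab; rw [self]; rfl
      · obtain ⟨t, ⟨ht, ha, hb⟩, -⟩ := hT.2 a b hab
        obtain ⟨c, rfl, -, -⟩ := exists_third (hT.1 t ht) ha hb hab
        rw [(hT.loop_iff a b c).2 ht, hT.loop_iff]
        rwa [Finset.pair_comm c b]

/-- Veblen points are exactly the non-unit central elements of the Steiner loop. -/
theorem IsSTS.veblen_iff {T : Set (Finset α)} (hT : IsSTS T) (x : α) :
    IsVeblen T x ↔ IsCentral (stsLoop T) (some x) := by
  have hL := hT.steinerLoop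
  have ex : ∀ a b : α, a ≠ b → ∃ c, stsLoop T (some a) (some b) = some c := by
    intro a b hab
    refine Option.ne_none_iff_exists'.1 fun h => hab ?_
    simpa using hL.eq_of_mul_eq_unit h
  constructor
  · intro h a b
    -- the degenerate cases, where the Veblen configuration collapses
    rcases a with _ | a
    · rw [hL.unit_mul, hL.mul_unit]
    rcases b with _ | b
    · rw [hL.mul_unit, hL.mul_unit]
    by_cases hab : a = b
    · subst hab; rw [hL.self, hL.mul_unit, hL.right]
    by_cases hxa : x = a
    · subst hxa; rw [hL.left, hL.self, hL.unit_mul]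
    obtain ⟨c, hc⟩ := ex a b hab
    obtain ⟨d, hd⟩ := ex x a hxa
    by_cases hxc : x = c
    · subst hxc
      rw [← hc, hL.self, hL.right', hL.self]
    obtain ⟨f, hf⟩ := ex x c hxc
    rw [hc, hd, hf]
    symm
    rw [hL.comm, hT.loop_iff]
    refine h a d c f b ((hT.loop_iff _ _ _).1 hd) ((hT.loop_iff _ _ _).1 hf)
      ((hT.loop_iff _ _ _).1 ?_)
    rw [hL.comm, hc]
  · intro h a b c d t h1 h2 h3
    rw [← hT.loop_iff] at h1 h2 h3 ⊢
    rw [← h1, ← h2, hL.mul_central h, h3]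

theorem IsSTS.ncard_veblen [Finite α] {T : Set (Finset α)} (hT : IsSTS T) :
    {z | IsCentral (stsLoop T) z}.ncard = {x | IsVeblen T x}.ncard + 1 := by
  have : {z | IsCentral (stsLoop T) z} = insert none (some '' {x | IsVeblen T x}) := by
    ext z
    rcases z with _ | z
    · simpa using hT.steinerLoop.central_unit
    · simp [hT.veblen_iff]
  rw [this, Set.ncard_insert_of_notMem (by simp),
    Set.ncard_image_of_injective _ (Option.some_injective α)]

theorem stsIso_iff_s7 {β : Type v} [DecidableEq β] {T : Set (Finset α)} {T' : Set (Finset β)}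
    (hT : IsSTS T) (hT' : IsSTS T') : STSIso T T' ↔ LoopIso (stsLoop T) (stsLoop T') := by
  constructor
  · rintro ⟨e, he⟩
    refine ⟨Equiv.optionCongr e, ?_⟩
    rintro (_ | a) (_ | b)
    · rfl
    · rfl
    · rfl
    · ext c
      obtain ⟨c, rfl⟩ := e.surjective c
      have := he {a, b, c}
      simp only [Finset.image_insert, Finset.image_singleton] at this
      simp only [Equiv.optionCongr_apply, Option.map_some]
      rw [hT'.loop_iff, ← this, ← hT.loop_iff]
      simp
  · rintro ⟨φ, hφ⟩
    have h0 : φ none = none := by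
      have := hφ none none
      rwa [hT'.steinerLoop.self, hT.steinerLoop.self] at this
    have hs : ∀ a, some (φ.removeNone a) = φ (some a) := fun a =>
      Equiv.removeNone_some φ (Option.ne_none_iff_exists'.1 fun h =>
        by simpa using φ.injective (h.trans h0.symm))
    refine ⟨φ.removeNone, fun t => ?_⟩
    have key : ∀ a b c, ({a, b, c} : Finset α) ∈ T ↔
        ({a, b, c} : Finset α).image φ.removeNone ∈ T' := by
      intro a b c
      simp only [Finset.image_insert, Finset.image_singleton]
      rw [← hT.loop_iff, ← hT'.loop_iff, hs, hs, hs, ← hφ, φ.apply_eq_iff_eq]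
    constructor
    · intro ht
      obtain ⟨a, b, c, -, -, -, rfl⟩ := Finset.card_eq_three.1 (hT.1 t ht)
      exact (key _ _ _).1 ht
    · intro ht
      have h3 := hT'.1 _ ht
      rw [Finset.card_image_of_injective _ φ.removeNone.injective] at h3
      obtain ⟨a, b, c, -, -, -, rfl⟩ := Finset.card_eq_three.1 h3
      exact (key _ _ _).2 ht

/-- Every Steiner loop whose unit is the point `none` comes from a Steiner triple system. -/
theorem exists_sts {n : Option α → Option α → Option α} (hn : SteinerLoop n none) :
    ∃ T : Set (Finset α), IsSTS T ∧ stsLoop T = n := by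
  let T : Set (Finset α) := {t | t.card = 3 ∧ ∀ a ∈ t, ∀ b ∈ t, ∀ c ∈ t, a ≠ b → a ≠ c →
    b ≠ c → n (some a) (some b) = some c}
  have key : ∀ a b c, n (some a) (some b) = some c → ({a, b, c} : Finset α) ∈ T := by
    intro a b c h
    have hab : a ≠ b := by
      rintro rfl; rw [hn.self] at h; cases h
    have hac : a ≠ c := by
      rintro rfl
      have := hn.left (some a) (some b)
      rw [h, hn.self] at this; cases this
    have hbc : b ≠ c := by
      rintro rfl
      have := hn.right (some a) (some b)
      rw [h, hn.self] at this; cases this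
    have h1 : n (some b) (some a) = some c := by rw [hn.comm, h]
    have h2 : n (some a) (some c) = some b := by rw [← h, hn.left]
    have h3 : n (some c) (some a) = some b := by rw [hn.comm, h2]
    have h4 : n (some b) (some c) = some a := by rw [← h, hn.left']
    have h5 : n (some c) (some b) = some a := by rw [hn.comm, h4]
    refine ⟨Finset.card_eq_three.2 ⟨a, b, c, hab, hac, hbc, rfl⟩, ?_⟩
    intro p hp q hq r hr
    simp only [Finset.mem_insert, Finset.mem_singleton] at hp hq hr
    rcases hp with rfl | rfl | rfl <;> rcases hq with rfl | rfl | rfl <;>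
      rcases hr with rfl | rfl | rfl <;> simp_all
  have hT : IsSTS T := by
    refine ⟨fun t ht => ht.1, fun a b hab => ?_⟩
    obtain ⟨c, hc⟩ := Option.ne_none_iff_exists'.1 fun h : n (some a) (some b) = none =>
      hab (by simpa using hn.eq_of_mul_eq_unit h)
    refine ⟨{a, b, c}, ⟨key a b c hc, by simp, by simp⟩, ?_⟩
    rintro t ⟨ht, ha, hb⟩
    obtain ⟨d, rfl, had, hbd⟩ := exists_third ht.1 ha hb hab
    have := ht.2 a ha b hb d (by simp) hab had hbd
    rw [hc] at this
    simp_all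
  refine ⟨T, hT, ?_⟩
  funext a b
  rcases a with _ | a
  · exact (hn.unit_mul b).symm
  rcases b with _ | b
  · exact (hn.mul_unit _).symm
  ext c
  rw [hT.loop_iff]
  refine ⟨fun h => ?_, key a b c⟩
  obtain ⟨h1, h2, h3⟩ := hT.distinct h
  exact h.2 a (by simp) b (by simp) c (by simp) h1 h2 h3

end STS

/-! ### Central extensions of `GF(2)^3` by `GF(2)^2` -/

/-- The kernel `GF(2)^2` of the extensions. -/
abbrev KK : Type := ZMod 2 × ZMod 2

/-- The quotient `GF(2)^3` of the extensions. -/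
abbrev QQ : Type := ZMod 2 × ZMod 2 × ZMod 2

/-- Indicator of two distinct points of the line `{100, 011, 111}` of the Fano plane. -/
def cocA (p q : QQ) : ZMod 2 :=
  (1 + p.2.1 + p.2.2) * (1 + q.2.1 + q.2.2) * (p.1 * q.2.1 + p.2.1 * q.1)

/-- Indicator of two distinct points of the line `{010, 101, 111}` of the Fano plane. -/
def cocB (p q : QQ) : ZMod 2 :=
  (1 + p.1 + p.2.2) * (1 + q.1 + q.2.2) * (p.1 * q.2.1 + p.2.1 * q.1)

/-- Indicator of two distinct points of the line `{110, 101, 011}` of the Fano plane. -/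
def cocC (p q : QQ) : ZMod 2 :=
  (1 + p.1 + p.2.1 + p.2.2) * (1 + q.1 + q.2.1 + q.2.2) * (p.1 * q.2.1 + p.2.1 * q.1)

/-- The cocycle with values `A`, `B`, `C` on the lines `{100, 011, 111}`, `{010, 101, 111}`,
`{110, 101, 011}` of the Fano plane and zero on the other four. -/
def coc (A B C : KK) (p q : QQ) : KK :=
  cocA p q • A + cocB p q • B + cocC p q • C

/-- The central extension of `GF(2)^3` by `GF(2)^2` given by the cocycle `coc A B C`. -/
def model (A B C : KK) (u v : KK × QQ) : KK × QQ :=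
  (u.1 + v.1 + coc A B C u.2 v.2, u.2 + v.2)

theorem KK.add_self (a : KK) : a + a = 0 := by revert a; decide

theorem QQ.add_self (a : QQ) : a + a = 0 := by revert a; decide

theorem model_steinerLoop (A B C : KK) : SteinerLoop (model A B C) 0 where
  comm u v := by
    have h1 : ∀ p q, cocA p q = cocA q p := by decide
    have h2 : ∀ p q, cocB p q = cocB q p := by decide
    have h3 : ∀ p q, cocC p q = cocC q p := by decide
    simp only [model, coc, h1 u.2, h2 u.2, h3 u.2, add_comm u.1, add_comm u.2]
  self u := by
    have h1 : ∀ p, cocA p p = 0 := by decide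
    have h2 : ∀ p, cocB p p = 0 := by decide
    have h3 : ∀ p, cocC p p = 0 := by decide
    simp [model, coc, h1, h2, h3, KK.add_self, QQ.add_self]
  left u v := by
    have h1 : ∀ p q, cocA p (p + q) = cocA p q := by decide
    have h2 : ∀ p q, cocB p (p + q) = cocB p q := by decide
    have h3 : ∀ p q, cocC p (p + q) = cocC p q := by decide
    have e1 : ∀ a b c : KK, a + (a + b + c) + c = b := by decide
    have e2 : ∀ p q : QQ, p + (p + q) = q := by decide
    simp only [model, coc, h1, h2, h3, e1, e2]

/-- Change of basis `(x, y, w) ↦ (y, x, w)`. -/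
theorem model_swap (A B C : KK) : LoopIso (model A B C) (model B A C) := by
  let g : QQ → QQ := fun p => (p.2.1, p.1, p.2.2)
  have h1 : ∀ p q, cocA (g p) (g q) = cocB p q := by decide
  have h2 : ∀ p q, cocB (g p) (g q) = cocA p q := by decide
  have h3 : ∀ p q, cocC (g p) (g q) = cocC p q := by decide
  have hg : ∀ p, g (g p) = p := by decide
  have ha : ∀ p q, g (p + q) = g p + g q := by decide
  refine ⟨⟨fun u => (u.1, g u.2), fun u => (u.1, g u.2), fun u => by simp [hg],
    fun u => by simp [hg]⟩, fun u v => ?_⟩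
  simp only [model, coc, Equiv.coe_fn_mk, h1, h2, h3, ha]
  congr 2
  abel

/-- Change of basis `(x, y, w) ↦ (xy, y, w)`. -/
theorem model_swap' (A B C : KK) : LoopIso (model A B C) (model C B A) := by
  let g : QQ → QQ := fun p => (p.1, p.1 + p.2.1, p.2.2)
  have h1 : ∀ p q, cocA (g p) (g q) = cocC p q := by decide
  have h2 : ∀ p q, cocB (g p) (g q) = cocB p q := by decide
  have h3 : ∀ p q, cocC (g p) (g q) = cocA p q := by decide
  have hg : ∀ p, g (g p) = p := by decide
  have ha : ∀ p q, g (p + q) = g p + g q := by decide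
  refine ⟨⟨fun u => (u.1, g u.2), fun u => (u.1, g u.2), fun u => by simp [hg],
    fun u => by simp [hg]⟩, fun u v => ?_⟩
  simp only [model, coc, Equiv.coe_fn_mk, h1, h2, h3, ha]
  congr 2
  abel

/-- Change of basis `(x, y, w) ↦ (x, w, y)`. The representative `(xy)w` of the seventh point
is replaced by `(xw)y`, which differs from it by the central element `B`. -/
theorem model_shear (A B C : KK) : LoopIso (model A B C) (model (A + B) B C) := by
  let g : QQ → QQ := fun p => (p.1, p.2.2, p.2.1)
  let d : QQ → ZMod 2 := fun p => p.1 * p.2.1 * p.2.2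
  have h1 : ∀ p q, cocA (g p) (g q) = cocA p q := by decide
  have h2 : ∀ p q, d (p + q) + cocB p q = d p + d q + (cocA p q + cocB (g p) (g q)) := by decide
  have h3 : ∀ p q, cocC (g p) (g q) = cocC p q := by decide
  have hg : ∀ p, g (g p) = p := by decide
  have hd : ∀ p, d (g p) = d p := by decide
  have hz : ∀ a b : KK, a + b + b = a := by decide
  have ha : ∀ p q, g (p + q) = g p + g q := by decide
  refine ⟨⟨fun u => (u.1 + d u.2 • B, g u.2), fun u => (u.1 + d u.2 • B, g u.2),
    fun u => by simp only [hg, hd, hz], fun u => by simp only [hg, hd, hz]⟩, fun u v => ?_⟩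
  simp only [model, coc, Equiv.coe_fn_mk, h1, h3, ha]
  congr 1
  have := congrArg (· • B) (h2 u.2 v.2)
  simp only [add_smul] at this
  rw [smul_add]
  linear_combination (exp := 1) this

/-- Change of basis of the kernel. -/
theorem model_map {A B C : KK} (k : KK →ₗ[ZMod 2] KK) (hk : Function.Bijective k) :
    LoopIso (model A B C) (model (k A) (k B) (k C)) :=
  ⟨(Equiv.ofBijective k hk).prodCongr (Equiv.refl _), fun u v => by simp [model, coc]⟩

/-- The extensions of `GF(2)^3` by `GF(2)^2` fall into three classes, according to the rank of
the triple `(A, B, C)`. -/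
theorem model_classify (A B C : KK) :
    A = 0 ∧ B = 0 ∧ C = 0 ∨ LoopIso (model A B C) (model (1, 0) 0 0) ∨
      LoopIso (model A B C) (model (1, 0) (0, 1) 0) := by
  have lin : ∀ a b : KK, ∃ k : KK →ₗ[ZMod 2] KK, k (1, 0) = a ∧ k (0, 1) = b ∧
      ∀ v, k v = v.1 • a + v.2 • b := fun a b =>
    ⟨((LinearMap.fst (ZMod 2) (ZMod 2) (ZMod 2)).smulRight a +
      (LinearMap.snd (ZMod 2) (ZMod 2) (ZMod 2)).smulRight b), by simp, by simp, by simp⟩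
  have inj : ∀ a b v w : KK, v.1 • a + v.2 • b = w.1 • a + w.2 • b →
      a = 0 ∨ b = 0 ∨ a = b ∨ v = w := by decide
  have bij : ∀ a b : KK, a ≠ 0 → b ≠ 0 → a ≠ b → ∃ k : KK →ₗ[ZMod 2] KK,
      k (1, 0) = a ∧ k (0, 1) = b ∧ Function.Bijective k := by
    intro a b ha hb hab
    obtain ⟨k, h1, h2, h3⟩ := lin a b
    refine ⟨k, h1, h2, Finite.injective_iff_bijective.1 fun v w h => ?_⟩
    rw [h3, h3] at h
    have := inj a b v w h
    tauto
  have one : ∀ a : KK, a ≠ 0 → LoopIso (model a 0 0) (model (1, 0) 0 0) := by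
    intro a ha
    obtain ⟨b, hb, hab⟩ : ∃ b : KK, b ≠ 0 ∧ a ≠ b := by revert a; decide
    obtain ⟨k, h1, -, h3⟩ := bij a b ha hb hab
    have := model_map (A := (1, 0)) (B := 0) (C := 0) k h3
    rw [h1, map_zero] at this
    exact this.symm
  have two : ∀ a b : KK, a = 0 ∧ b = 0 ∨ LoopIso (model a b 0) (model (1, 0) 0 0) ∨
      LoopIso (model a b 0) (model (1, 0) (0, 1) 0) := by
    intro a b
    by_cases ha : a = 0
    · by_cases hb : b = 0
      · exact Or.inl ⟨ha, hb⟩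
      · subst ha; exact Or.inr (Or.inl ((model_swap _ _ _).trans (one b hb)))
    by_cases hb : b = 0
    · subst hb; exact Or.inr (Or.inl (one a ha))
    by_cases hab : a = b
    · subst hab
      refine Or.inr (Or.inl ((model_shear _ _ _).trans ((model_swap _ _ _).trans ?_)))
      rw [KK.add_self]
      exact one a ha
    obtain ⟨k, h1, h2, h3⟩ := bij a b ha hb hab
    have := model_map (A := (1, 0)) (B := (0, 1)) (C := 0) k h3
    rw [h1, h2, map_zero] at this
    exact Or.inr (Or.inr this.symm)
  -- a vanishing entry can be moved to the last place
  have three : ∀ a b c : KK, a = 0 ∨ b = 0 ∨ c = 0 → (a ≠ 0 ∨ b ≠ 0 ∨ c ≠ 0) →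
      LoopIso (model a b c) (model (1, 0) 0 0) ∨
      LoopIso (model a b c) (model (1, 0) (0, 1) 0) := by
    rintro a b c (rfl | rfl | rfl) h
    · rcases two c b with h' | h' | h'
      · exact absurd h (by simp [h'.1, h'.2])
      · exact Or.inl ((model_swap' _ _ _).trans h')
      · exact Or.inr ((model_swap' _ _ _).trans h')
    · rcases two c a with h' | h' | h'
      · exact absurd h (by simp [h'.1, h'.2])
      · exact Or.inl ((model_swap _ _ _).trans ((model_swap' _ _ _).trans h'))
      · exact Or.inr ((model_swap _ _ _).trans ((model_swap' _ _ _).trans h'))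
    · rcases two a b with hab | hab | hab
      · exact absurd h (by simp [hab.1, hab.2])
      · exact Or.inl hab
      · exact Or.inr hab
  -- three vectors of `GF(2)^2` are dependent
  have dep : ∀ a b c : KK, a = 0 ∨ b = 0 ∨ c = 0 ∨ a + b = 0 ∨ c + b = 0 ∨ a + c = 0 ∨
      a + b + c = 0 := by decide
  by_cases h0 : A = 0 ∧ B = 0 ∧ C = 0
  · exact Or.inl h0
  right
  have hne : A ≠ 0 ∨ B ≠ 0 ∨ C ≠ 0 := by tauto
  by_cases hA : A = 0
  · exact three A B C (by tauto) hne
  by_cases hB : B = 0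
  · exact three A B C (by tauto) hne
  by_cases hC : C = 0
  · exact three A B C (by tauto) hne
  have via : ∀ {a b c}, LoopIso (model A B C) (model a b c) → a = 0 ∨ b = 0 ∨ c = 0 →
      (a ≠ 0 ∨ b ≠ 0 ∨ c ≠ 0) → LoopIso (model A B C) (model (1, 0) 0 0) ∨
      LoopIso (model A B C) (model (1, 0) (0, 1) 0) := fun hi hz hn =>
    (three _ _ _ hz hn).imp hi.trans hi.trans
  -- moves whose first entry becomes `A + B`, `C + B`, `A + C` and `A + B + C`
  have s1 := model_shear A B C
  have s2 := (model_swap' A B C).trans (model_shear C B A)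
  have s3 := (model_swap A B C).trans ((model_swap' B A C).trans
    ((model_swap C A B).trans (model_shear A C B)))
  have s4 := s1.trans ((model_swap' _ _ _).trans ((model_swap _ _ _).trans
    ((model_swap' _ _ _).trans (model_shear (A + B) C B))))
  rcases dep A B C with h | h | h | h | h | h | h
  · exact absurd h hA
  · exact absurd h hB
  · exact absurd h hC
  · exact via s1 (Or.inl h) (by tauto)
  · exact via s2 (Or.inl h) (by tauto)
  · exact via s3 (Or.inl h) (by tauto)
  · exact via s4 (Or.inl h) (by tauto)

theorem central_zero : {z | IsCentral (model 0 0 0) z}.ncard = 32 := by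
  have : {z | IsCentral (model 0 0 0) z} = Set.univ := by
    ext z
    simp [IsCentral, model, coc, add_assoc]
  rw [this, Set.ncard_univ]
  simp

/-- The models of rank one (`t = 0`) and two (`t = 1`) have as their center exactly the kernel of
the extension: the first component of the cocycle already keeps all other elements out. -/
theorem central_model (t : ZMod 2) :
    {z | IsCentral (model (1, 0) (0, t) 0) z}.ncard = 4 := by
  have hA : ∀ q, cocA 0 q = 0 := by decide
  have hB : ∀ q, cocB 0 q = 0 := by decide
  have hne : ∀ p : QQ, p ≠ 0 → ∃ q r, cocA q r + cocA p (q + r) ≠ cocA p q + cocA (p + q) r := by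
    decide
  have : {z | IsCentral (model (1, 0) (0, t) 0) z} = (fun a : KK => (a, (0 : QQ))) '' Set.univ := by
    ext ⟨a, p⟩
    constructor
    · intro h
      by_cases hp : p = 0
      · exact ⟨a, trivial, by rw [hp]⟩
      · obtain ⟨q, r, hqr⟩ := hne p hp
        refine absurd ?_ hqr
        have := congrArg (fun u => u.1.1) (h (0, q) (0, r))
        simp [model, coc] at this
        simpa [add_assoc] using this
    · rintro ⟨b, -, e⟩ u v
      obtain ⟨rfl, rfl⟩ := Prod.ext_iff.1 e
      simp [model, coc, hA, hB, add_assoc]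
  rw [this, Set.ncard_image_of_injective _ (fun a b h => (Prod.ext_iff.1 h).1), Set.ncard_univ]
  simp

/-- In the first model all nontrivial associators agree; in the second they do not. -/
theorem models_not_iso : ¬ LoopIso (model (1, 0) (0, 1) 0) (model (1, 0) 0 0) := by
  intro hiso
  have h1 : ∀ u v w : KK × QQ, model (1, 0) 0 0 (model (1, 0) 0 0 u v) w =
      model (1, 0) 0 0 u (model (1, 0) 0 0 v w) ∨
      model (1, 0) 0 0 (model (1, 0) 0 0 u v) w =
      model (1, 0) 0 0 ((1, 0), 0) (model (1, 0) 0 0 u (model (1, 0) 0 0 v w)) := by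
    intro u v w
    have hA : ∀ q, cocA 0 q = 0 := by decide
    have h2 : ∀ a b : ZMod 2, a = b ∨ a = 1 + b := by decide
    rcases h2 (model (1, 0) 0 0 (model (1, 0) 0 0 u v) w).1.1
      (model (1, 0) 0 0 u (model (1, 0) 0 0 v w)).1.1 with h | h
    · left
      refine Prod.ext (Prod.ext h ?_) ?_ <;> simp [model, coc, add_assoc]
    · right
      refine Prod.ext (Prod.ext ?_ ?_) ?_
      · rw [h]; simp [model, coc, hA]
      · simp [model, coc, add_assoc]
      · simp [model, add_assoc]
  obtain ⟨z, hz⟩ := hiso.associator h1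
  have hr := (model_steinerLoop (1, 0) (0, 1) 0).right z
  have hx := (hz (0, (1, 0, 0)) (0, (0, 1, 0)) (0, (0, 0, 1))).resolve_left (by decide)
  have hy := (hz (0, (0, 1, 0)) (0, (1, 0, 0)) (0, (0, 0, 1))).resolve_left (by decide)
  -- the two associators are `A` and `B`, and both would have to be `z`
  have hx' := (congrArg (model (1, 0) (0, 1) 0 · _) hx).trans (hr _)
  have hy' := (congrArg (model (1, 0) (0, 1) 0 · _) hy).trans (hr _)
  exact absurd (hx'.trans hy'.symm) (by decide)

/-! ### Coordinates on a loop of order 32 with a center of order 4 -/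

section Coordinates

variable {L : Type u} {m : L → L → L} {o : L} {κ : KK → L}

/-- Congruence modulo the central subloop `κ(GF(2)^2)`. -/
def Sim (m : L → L → L) (κ : KK → L) (k l : L) : Prop := ∃ a, k = m (κ a) l

/-- `κ` is a homomorphism from `GF(2)^2` to the center of the loop. -/
structure CentralHom (m : L → L → L) (o : L) (κ : KK → L) : Prop where
  loop : SteinerLoop m o
  central : ∀ a, IsCentral m (κ a)
  add : ∀ a b, κ (a + b) = m (κ a) (κ b)

namespace CentralHom

theorem zero (h : CentralHom m o κ) : κ 0 = o := by
  have := h.add 0 0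
  rwa [h.loop.self, add_zero] at this

theorem sim_symm (h : CentralHom m o κ) {l l' : L} (e : Sim m κ l l') : Sim m κ l' l := by
  obtain ⟨a, rfl⟩ := e
  exact ⟨a, (h.loop.left _ _).symm⟩

theorem sim_mul (h : CentralHom m o κ) (c : L) {l l' : L} (e : Sim m κ l l') :
    Sim m κ (m c l) (m c l') := by
  obtain ⟨a, rfl⟩ := e
  exact ⟨a, h.loop.mul_central (h.central a) _ _⟩

theorem sim_cancel (h : CentralHom m o κ) {c l l' : L} (e : Sim m κ (m c l) (m c l')) :
    Sim m κ l l' := by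
  have := h.sim_mul c e
  rwa [h.loop.left, h.loop.left] at this

theorem sim_cancel_right (h : CentralHom m o κ) {c l l' : L} (e : Sim m κ (m l c) (m l' c)) :
    Sim m κ l l' := by
  rw [h.loop.comm l, h.loop.comm l'] at e
  exact h.sim_cancel e

/-- The quotient by the kernel, a Steiner loop of order eight, is associative: if the cosets of
`o, u, v, t = uv, w, uw, vw, tw` are all, then `u(vw)` has no other coset to lie in
than that of `(uv)w`. -/
theorem assoc_mod (h : CentralHom m o κ) {u v t w : L} (ht : m u v = t)
    (hu : ¬ Sim m κ u o) (hv : ¬ Sim m κ v o) (ht' : ¬ Sim m κ t o)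
    (w0 : ¬ Sim m κ w o) (wu : ¬ Sim m κ w u) (wv : ¬ Sim m κ w v) (wt : ¬ Sim m κ w t)
    (sur : ∀ l, Sim m κ l o ∨ Sim m κ l u ∨ Sim m κ l v ∨ Sim m κ l t ∨ Sim m κ l w ∨
      Sim m κ l (m u w) ∨ Sim m κ l (m v w) ∨ Sim m κ l (m t w)) :
    Sim m κ (m u (m v w)) (m t w) := by
  have hL := h.loop
  have ut : m u t = v := by rw [← ht, hL.left]
  have vt : m v t = u := by rw [← ht, hL.left']
  have vu : m v u = t := by rw [hL.comm, ht]
  have step : ∀ {l}, Sim m κ (m u (m v w)) l → Sim m κ w (m v (m u l)) := fun e => by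
    have := h.sim_mul v (h.sim_mul u e)
    rwa [hL.left, hL.left] at this
  rcases sur (m u (m v w)) with e | e | e | e | e | e | e | e
  · have := step e
    rw [hL.mul_unit, vu] at this
    exact absurd this wt
  · have := step e
    rw [hL.self, hL.mul_unit] at this
    exact absurd this wv
  · have := step e
    rw [ht, vt] at this
    exact absurd this wu
  · have := step e
    rw [ut, hL.self] at this
    exact absurd this w0
  · have := h.sim_mul u e
    rw [hL.left] at this
    have := h.sim_mul u (h.sim_cancel_right this)
    rw [ht, hL.self] at this
    exact absurd this ht'
  · exact absurd (h.sim_cancel_right (c := w) (by rw [hL.unit_mul]; exact h.sim_cancel e)) hv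
  · exact absurd (h.sim_cancel_right (c := m v w) (by rwa [hL.unit_mul])) hu
  · exact e

end CentralHom

open Classical in
/-- The power of `a` with exponent in `GF(2)`. -/
noncomputable def pw (o a : L) (i : ZMod 2) : L := if i = 0 then o else a

@[simp] theorem pw_zero (o a : L) : pw o a 0 = o := by simp [pw]

@[simp] theorem pw_one (o a : L) : pw o a 1 = a := by simp [pw]

theorem zmod_two_cases : ∀ i : ZMod 2, i = 0 ∨ i = 1 := by decide

theorem zmod_two_add : (1 : ZMod 2) + 1 = 0 := rfl

theorem pw_add (h : SteinerLoop m o) (a : L) (i j : ZMod 2) :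
    pw o a (i + j) = m (pw o a i) (pw o a j) := by
  rcases zmod_two_cases i with rfl | rfl <;> rcases zmod_two_cases j with rfl | rfl <;>
    simp [h.self, h.unit_mul, h.mul_unit, zmod_two_add]

/-- The product of powers of `x`, `y`, `w`, representing a coset of the kernel. -/
noncomputable def sect (m : L → L → L) (o x y w : L) (p : QQ) : L :=
  m (m (pw o x p.1) (pw o y p.2.1)) (pw o w p.2.2)

/-- The products of coset representatives are determined by three values, one for each line of
the Fano plane on which the representatives have not been chosen to multiply trivially. -/
theorem sect_mul (h : CentralHom m o κ) {x y w : L} {A B C : KK}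
    (hA : m x (m y w) = m (κ A) (m (m x y) w)) (hB : m y (m x w) = m (κ B) (m (m x y) w))
    (hC : m (m x y) (m x w) = m (κ C) (m y w)) (p q : QQ) :
    m (sect m o x y w p) (sect m o x y w q) =
      m (κ (coc A B C p q)) (sect m o x y w (p + q)) := by
  have hL := h.loop
  have triv : ∀ u, u = m o u := fun u => (hL.unit_mul u).symm
  obtain ⟨t, ht⟩ : ∃ t, m x y = t := ⟨_, rfl⟩
  obtain ⟨a, ha⟩ : ∃ a, m x w = a := ⟨_, rfl⟩
  obtain ⟨b, hb⟩ : ∃ b, m y w = b := ⟨_, rfl⟩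
  obtain ⟨c, hc⟩ : ∃ c, m t w = c := ⟨_, rfl⟩
  rw [ht, hb, hc] at hA
  rw [ht, ha, hc] at hB
  rw [ht, ha, hb] at hC
  have l1 := hL.line hL.central_unit (ht.trans (triv t))
  have l2 := hL.line hL.central_unit (ha.trans (triv a))
  have l3 := hL.line hL.central_unit (hb.trans (triv b))
  have l4 := hL.line hL.central_unit (hc.trans (triv c))
  have l5 := hL.line (h.central A) hA
  have l6 := hL.line (h.central B) hB
  have l7 := hL.line (h.central C) hC
  simp only [hL.unit_mul] at l1 l2 l3 l4
  obtain ⟨p1, p2, p3⟩ := p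
  obtain ⟨q1, q2, q3⟩ := q
  rcases zmod_two_cases p1 with rfl | rfl <;> rcases zmod_two_cases p2 with rfl | rfl <;>
  rcases zmod_two_cases p3 with rfl | rfl <;> rcases zmod_two_cases q1 with rfl | rfl <;>
  rcases zmod_two_cases q2 with rfl | rfl <;> rcases zmod_two_cases q3 with rfl | rfl <;>
  simp [sect, coc, cocA, cocB, cocC, zmod_two_add, hL.self, hL.unit_mul, hL.mul_unit, h.zero,
    l1, l2, l3, l4, l5, l6, l7]

theorem exists_centralHom (h : SteinerLoop m o) {z₁ z₂ : L} (c₁ : IsCentral m z₁)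
    (c₂ : IsCentral m z₂) (h₁ : z₁ ≠ o) (h₂ : z₂ ≠ o) (h₁₂ : z₁ ≠ z₂) :
    ∃ κ, CentralHom m o κ ∧ ∀ a, κ a = o → a = 0 := by
  have cpw : ∀ {z}, IsCentral m z → ∀ i, IsCentral m (pw o z i) := by
    intro z hz i
    rcases zmod_two_cases i with rfl | rfl
    · simpa using h.central_unit
    · simpa using hz
  refine ⟨fun a => m (pw o z₁ a.1) (pw o z₂ a.2), ⟨h, fun a => ?_, fun a b => ?_⟩, ?_⟩
  · exact SteinerLoop.central_mul (cpw c₁ _) (cpw c₂ _)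
  · simp only [Prod.fst_add, Prod.snd_add, pw_add h]
    rw [← cpw c₁ a.1 (pw o z₁ b.1), ← cpw c₁ a.1 (pw o z₂ a.2),
      h.mul_central (cpw c₁ b.1) (pw o z₂ a.2)]
  · rintro ⟨i, j⟩ e
    rcases zmod_two_cases i with rfl | rfl <;> rcases zmod_two_cases j with rfl | rfl
    · rfl
    · simp [h.unit_mul, h₂] at e
    · simp [h.mul_unit, h₁] at e
    · simp only [pw_one] at e
      exact absurd (h.eq_of_mul_eq_unit e) h₁₂

theorem exists_notMem_image {P : Type*} [Fintype P] [Fintype L] (f : P → L)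
    (h : Fintype.card P < Fintype.card L) : ∃ l, ∀ p, l ≠ f p := by
  by_contra! hf
  exact absurd (Fintype.card_le_of_surjective f fun l => (hf l).imp fun _ => Eq.symm) (by omega)

/-- A Steiner loop of order 32 with a central subloop of order 4 is one of the extensions
`model A B C`. -/
theorem exists_coordinates [Fintype L] (hcard : Fintype.card L = 32) (h : CentralHom m o κ)
    (hκ : ∀ a, κ a = o → a = 0) : ∃ A B C, LoopIso (model A B C) m := by
  have hL := h.loop
  -- a basis modulo the kernel
  obtain ⟨x, hx⟩ := exists_notMem_image κ (by simp [hcard])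
  obtain ⟨y, hy⟩ := exists_notMem_image (fun p : KK × ZMod 2 => m (κ p.1) (pw o x p.2))
    (by simp [hcard])
  obtain ⟨w, hw⟩ := exists_notMem_image
    (fun p : KK × ZMod 2 × ZMod 2 => m (κ p.1) (m (pw o x p.2.1) (pw o y p.2.2)))
    (by simp [hcard])
  have x0 : ¬ Sim m κ x o := fun ⟨a, ha⟩ => hx a (by rwa [hL.mul_unit] at ha)
  have y0 : ¬ Sim m κ y o := fun ⟨a, ha⟩ => hy (a, 0) (by simpa using ha)
  have yx : ¬ Sim m κ y x := fun ⟨a, ha⟩ => hy (a, 1) (by simpa using ha)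
  have xy0 : ¬ Sim m κ (m x y) o := fun e => yx (h.sim_cancel (c := x) (by rwa [hL.self]))
  have w2 : ∀ i j, ¬ Sim m κ w (m (pw o x i) (pw o y j)) := fun i j ⟨a, ha⟩ => hw (a, i, j) ha
  let s₂ : ZMod 2 × ZMod 2 → L := fun p => m (pw o x p.1) (pw o y p.2)
  have s₂_mul : ∀ p q, m (s₂ p) (s₂ q) = s₂ (p + q) := by
    rintro ⟨p1, p2⟩ ⟨q1, q2⟩
    rcases zmod_two_cases p1 with rfl | rfl <;> rcases zmod_two_cases p2 with rfl | rfl <;>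
    rcases zmod_two_cases q1 with rfl | rfl <;> rcases zmod_two_cases q2 with rfl | rfl <;>
    simp [s₂, zmod_two_add, hL.self, hL.unit_mul, hL.mul_unit, hL.left, hL.left', hL.right,
      hL.right', hL.comm y x]
  have s₂_ker : ∀ p, Sim m κ (s₂ p) o → p = 0 := by
    rintro ⟨i, j⟩ e
    rcases zmod_two_cases i with rfl | rfl <;> rcases zmod_two_cases j with rfl | rfl
    · rfl
    · exact absurd (by simpa [s₂, hL.unit_mul] using e) y0
    · exact absurd (by simpa [s₂, hL.mul_unit] using e) x0
    · exact absurd (by simpa [s₂] using e) xy0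
  have two : ∀ p q : ZMod 2 × ZMod 2, p + q = 0 → p = q := by decide
  have s₂_inj : ∀ p q, Sim m κ (s₂ p) (s₂ q) → p = q := fun p q e => two p q <| s₂_ker _ <| by
    have := h.sim_mul (s₂ q) e
    rwa [hL.self, s₂_mul, add_comm] at this
  have s₂_w : ∀ p q, ¬ Sim m κ (s₂ p) (m (s₂ q) w) := fun p q e => by
    have := h.sim_symm (h.sim_mul (s₂ q) e)
    rw [hL.left, s₂_mul] at this
    exact w2 _ _ this
  let s := sect m o x y w
  have s_inj : ∀ p q, Sim m κ (s p) (s q) → p = q := by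
    rintro ⟨p1, p2, p3⟩ ⟨q1, q2, q3⟩ e
    have e' : Sim m κ (m (s₂ (p1, p2)) (pw o w p3)) (m (s₂ (q1, q2)) (pw o w q3)) := e
    by_cases h3 : p3 = q3
    · subst h3
      obtain ⟨rfl, rfl⟩ := Prod.mk.inj (s₂_inj _ _ (h.sim_cancel_right e'))
      rfl
    · rcases zmod_two_cases p3 with rfl | rfl <;> rcases zmod_two_cases q3 with rfl | rfl
      · exact absurd rfl h3
      · rw [pw_zero, pw_one, hL.mul_unit] at e'
        exact absurd e' (s₂_w _ _)
      · rw [pw_zero, pw_one, hL.mul_unit] at e'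
        exact absurd (h.sim_symm e') (s₂_w _ _)
      · exact absurd rfl h3
  let φ : KK × QQ → L := fun u => m (κ u.1) (s u.2)
  have φ_inj : Function.Injective φ := by
    rintro ⟨a, p⟩ ⟨b, q⟩ e
    have e' : m (κ a) (s p) = m (κ b) (s q) := e
    have hpq : p = q := s_inj p q ⟨a + b, by
      rw [h.add, ← h.central, ← e', hL.left]⟩
    subst hpq
    have hab : κ (a + b) = o := by rw [h.add, hL.cancel_right e', hL.self]
    have : ∀ a b : KK, a + b = 0 → a = b := by decide
    rw [this a b (hκ _ hab)]
  have φ_bij : Function.Bijective φ :=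
    (Fintype.bijective_iff_injective_and_card φ).2 ⟨φ_inj, by simp [hcard]⟩
  have sur : ∀ l, Sim m κ l o ∨ Sim m κ l x ∨ Sim m κ l y ∨ Sim m κ l (m x y) ∨ Sim m κ l w ∨
      Sim m κ l (m x w) ∨ Sim m κ l (m y w) ∨ Sim m κ l (m (m x y) w) := by
    intro l
    obtain ⟨⟨a, i, j, k⟩, rfl⟩ := φ_bij.2 l
    have : Sim m κ (φ (a, i, j, k)) (s (i, j, k)) := ⟨a, rfl⟩
    revert this
    generalize φ (a, i, j, k) = l
    rcases zmod_two_cases i with rfl | rfl <;> rcases zmod_two_cases j with rfl | rfl <;>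
    rcases zmod_two_cases k with rfl | rfl <;>
    simp only [s, sect, pw_zero, pw_one, hL.unit_mul, hL.mul_unit] <;> tauto
  have w0 : ¬ Sim m κ w o := by simpa [hL.unit_mul] using w2 0 0
  have wx : ¬ Sim m κ w x := by simpa [hL.mul_unit] using w2 1 0
  have wy : ¬ Sim m κ w y := by simpa [hL.unit_mul] using w2 0 1
  have wxy : ¬ Sim m κ w (m x y) := by simpa using w2 1 1
  obtain ⟨A, hA⟩ := h.assoc_mod (u := x) (v := y) (w := w) rfl x0 y0 xy0 w0 wx wy wxy sur
  obtain ⟨B, hB⟩ := h.assoc_mod (u := y) (v := x) (w := w) (hL.comm y x) y0 x0 xy0 w0 wy wx wxy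
    (fun l => by have := sur l; tauto)
  obtain ⟨C, hC⟩ := h.assoc_mod (u := m x y) (v := x) (w := w) (hL.right' x y) xy0 x0 y0 w0 wxy
    wx wy (fun l => by have := sur l; tauto)
  refine ⟨A, B, C, Equiv.ofBijective φ φ_bij, fun u v => ?_⟩
  change m (κ (u.1 + v.1 + coc A B C u.2 v.2)) (s (u.2 + v.2)) =
    m (m (κ u.1) (s u.2)) (m (κ v.1) (s v.2))
  rw [← h.central u.1, hL.mul_central (h.central v.1), sect_mul h hA hB hC, h.add, h.add,
    ← SteinerLoop.central_mul (h.central u.1) (h.central v.1), ← h.central u.1]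

end Coordinates

/-! ### Counting -/

/-- The Steiner loop of an STS(31) with three Veblen points is one of two models. -/
theorem loop_classify {T : Set (Finset (Fin 31))} (hT : IsSTS T)
    (h3 : {x | IsVeblen T x}.ncard = 3) :
    LoopIso (stsLoop T) (model (1, 0) 0 0) ∨ LoopIso (stsLoop T) (model (1, 0) (0, 1) 0) := by
  have hL := hT.steinerLoop
  have h4 : {z | IsCentral (stsLoop T) z}.ncard = 4 := by rw [hT.ncard_veblen, h3]
  obtain ⟨z₁, c₁, h₁⟩ := Set.exists_mem_notMem_of_ncard_lt_ncard
    (s := {(none : Option (Fin 31))}) (t := {z | IsCentral (stsLoop T) z})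
    (by rw [h4, Set.ncard_singleton]; norm_num) (Set.toFinite _)
  obtain ⟨z₂, c₂, h₂⟩ := Set.exists_mem_notMem_of_ncard_lt_ncard
    (s := {z₁, none}) (t := {z | IsCentral (stsLoop T) z})
    (by rw [h4]; exact (Set.ncard_insert_le _ _).trans_lt (by simp)) (Set.toFinite _)
  simp only [Set.mem_insert_iff, Set.mem_singleton_iff, not_or] at h₁ h₂
  obtain ⟨κ, hκ, hk⟩ := exists_centralHom hL c₁ c₂ h₁ h₂.2 (Ne.symm h₂.1)
  obtain ⟨A, B, C, hiso⟩ := exists_coordinates (by simp) hκ hk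
  rcases model_classify A B C with ⟨rfl, rfl, rfl⟩ | h | h
  · have := hiso.ncard_central
    rw [central_zero, h4] at this
    omega
  · exact Or.inl (hiso.symm.trans h)
  · exact Or.inr (hiso.symm.trans h)

/-- Both models are realized by triple systems with three Veblen points. -/
theorem exists_sts_model (t : ZMod 2) : ∃ T : Set (Finset (Fin 31)),
    (IsSTS T ∧ {x | IsVeblen T x}.ncard = 3) ∧
      LoopIso (stsLoop T) (model (1, 0) (0, t) 0) := by
  let e₀ : Option (Fin 31) ≃ KK × QQ := Fintype.equivOfCardEq (by simp)
  let e : Option (Fin 31) ≃ KK × QQ := e₀.trans (Equiv.swap (e₀ none) 0)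
  have he : e none = 0 := by simp [e]
  have he' : e.symm 0 = none := by rw [← he, e.symm_apply_apply]
  have hm := model_steinerLoop (1, 0) (0, t) 0
  obtain ⟨T, hT, hTn⟩ := exists_sts
    (n := fun a b => e.symm (model (1, 0) (0, t) 0 (e a) (e b)))
    ⟨fun a b => by rw [hm.comm], fun a => by rw [hm.self, he'],
      fun a b => by simp [hm.left]⟩
  have hiso : LoopIso (stsLoop T) (model (1, 0) (0, t) 0) := ⟨e, fun a b => by simp [hTn]⟩
  refine ⟨T, ⟨hT, ?_⟩, hiso⟩
  have := hiso.ncard_central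
  rw [central_model, hT.ncard_veblen] at this
  omega

/-- Up to isomorphism, there are exactly 2 Steiner triple systems of order 31
containing exactly three Veblen points. -/
theorem sts31_exactly_three_veblen_count :
    Nat.card (Quot (fun S₁ S₂ : {T : Set (Finset (Fin 31)) //
        IsSTS T ∧ {x : Fin 31 | IsVeblen T x}.ncard = 3} =>
        STSIso S₁.1 S₂.1)) = 2 := by
  obtain ⟨T₁, hT₁, i₁⟩ := exists_sts_model 0
  obtain ⟨T₂, hT₂, i₂⟩ := exists_sts_model 1
  rw [Nat.card_eq_two_iff]
  refine ⟨Quot.mk _ ⟨T₁, hT₁⟩, Quot.mk _ ⟨T₂, hT₂⟩, fun heq => ?_, Set.eq_univ_of_forall ?_⟩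
  · -- being isomorphic to the first model is well defined on isomorphism classes
    have := congrArg (Quot.lift (fun S => LoopIso (stsLoop S.1) (model (1, 0) 0 0))
      fun S S' hS => propext ?_) heq
    · exact models_not_iso (i₂.symm.trans (this.mp i₁))
    · have hi := (stsIso_iff_s7 S.2.1 S'.2.1).1 hS
      exact ⟨hi.symm.trans, hi.trans⟩
  · rintro ⟨T, hT⟩
    rcases loop_classify hT.1 hT.2 with h | h
    · exact Or.inl (Quot.sound ((stsIso_iff_s7 hT.1 hT₁.1).2 (h.trans i₁.symm)))
    · exact Or.inr (Quot.sound ((stsIso_iff_s7 hT.1 hT₂.1).2 (h.trans i₂.symm)))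
end

section
/- Every Steiner triple system of order 27 has at most one Veblen point. -/
/-!
Adjoining an identity `none` to the point set of a Steiner triple system gives its Steiner loop:
`a * a = 1`, and `a * b = c` whenever `{a, b, c}` is a triple. It is commutative and satisfies
`a * (a * b) = b`, and a Veblen point `x` satisfies `x * (a * b) = a * (x * b)` for all `a`, `b`,
i.e. it is central (`SteinerLoop.central`).

Suppose `x ≠ y` are Veblen points of a system of order 27, and choose a point `w` outside the
triple through `x` and `y`. The translations by `x`, `y` and `w` are commuting involutions of the
loop, and every nontrivial product of them is fixed-point free: a fixed point would force `w`, by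
cancellation and centrality, into `{1, x, y, x * y}`, or `x = y`. So an elementary abelian group of
order 8 acts freely on the 28 elements of the loop, although 8 does not divide 28
(`eight_dvd_card`).
-/

universe u v

/-- The orbits of a free action of an elementary abelian group of order 8, given by three
commuting involutions, all have 8 elements. -/
theorem eight_dvd_card {β : Type*} [Fintype β] [DecidableEq β] (X Y W : β → β)
    (hX : ∀ u, X (X u) = u) (hY : ∀ u, Y (Y u) = u) (hW : ∀ u, W (W u) = u)
    (hXY : ∀ u, Y (X u) = X (Y u)) (hXW : ∀ u, W (X u) = X (W u))
    (hYW : ∀ u, W (Y u) = Y (W u))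
    (f1 : ∀ u, X u ≠ u) (f2 : ∀ u, Y u ≠ u) (f3 : ∀ u, X (Y u) ≠ u)
    (f4 : ∀ u, W u ≠ u) (f5 : ∀ u, X (W u) ≠ u) (f6 : ∀ u, Y (W u) ≠ u)
    (f7 : ∀ u, X (Y (W u)) ≠ u) : 8 ∣ Fintype.card β := by
  let O : β → Finset β := fun u =>
    {u, X u, Y u, X (Y u), W u, X (W u), Y (W u), X (Y (W u))}
  have OX : ∀ u, O (X u) = O u := by
    intro u; ext v; simp only [O, hX, hXY, hXW, Finset.mem_insert, Finset.mem_singleton]; tauto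
  have OY : ∀ u, O (Y u) = O u := by
    intro u; ext v; simp only [O, hY, hYW, Finset.mem_insert, Finset.mem_singleton]; tauto
  have OW : ∀ u, O (W u) = O u := by
    intro u; ext v; simp only [O, hW, Finset.mem_insert, Finset.mem_singleton]; tauto
  have hfib : ∀ u, (Finset.univ.filter fun v => O v = O u) = O u := by
    intro u
    ext v
    simp only [Finset.mem_filter, Finset.mem_univ, true_and]
    constructor
    · intro h
      rw [← h]
      simp [O]
    · intro h
      simp only [O, Finset.mem_insert, Finset.mem_singleton] at h
      rcases h with h | h | h | h | h | h | h | h <;> subst h <;> simp only [OX, OY, OW]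
  have hcard : ∀ u, (O u).card = 8 := by
    intro u
    simp only [O]
    clear OX OY OW hfib O
    repeat rw [Finset.card_insert_of_notMem]
    · simp
    all_goals
      simp only [Finset.mem_insert, Finset.mem_singleton, not_or]
      grind
  rw [← Finset.card_univ, Finset.card_eq_sum_card_image O]
  apply Finset.dvd_sum
  intro s hs
  obtain ⟨u, -, rfl⟩ := Finset.mem_image.1 hs
  rw [hfib, hcard]

section SteinerLoop

variable {α : Type*} [DecidableEq α] {T : Set (Finset α)}

namespace IsSTS

theorem ne_of_mem (hT : IsSTS T) {a b c : α} (h : ({a, b, c} : Finset α) ∈ T) :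
    a ≠ b ∧ a ≠ c ∧ b ≠ c := by
  have h3 := hT.1 _ h
  refine ⟨?_, ?_, ?_⟩ <;> rintro rfl
  · have := Finset.card_le_two (a := a) (b := c)
    simp at h3; omega
  · have := Finset.card_le_two (a := b) (b := a)
    simp at h3; omega
  · have := Finset.card_le_two (a := a) (b := b)
    simp at h3; omega

theorem third_unique_s9 (hT : IsSTS T) {a b c d : α} (h : ({a, b, c} : Finset α) ∈ T)
    (h' : ({a, b, d} : Finset α) ∈ T) : c = d := by
  obtain ⟨hab, hac, hbc⟩ := hT.ne_of_mem h
  have he := (hT.2 a b hab).unique ⟨h, by simp, by simp⟩ ⟨h', by simp, by simp⟩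
  have hc : c ∈ ({a, b, d} : Finset α) := he ▸ (by simp)
  simp only [Finset.mem_insert, Finset.mem_singleton] at hc
  rcases hc with rfl | rfl | rfl
  · exact absurd rfl hac
  · exact absurd rfl hbc
  · rfl

theorem exists_third (hT : IsSTS T) {a b : α} (hab : a ≠ b) :
    ∃ c, ({a, b, c} : Finset α) ∈ T := by
  obtain ⟨t, ⟨ht, ha, hb⟩, -⟩ := hT.2 a b hab
  have hb' : b ∈ t.erase a := Finset.mem_erase.2 ⟨hab.symm, hb⟩
  have h1 : ((t.erase a).erase b).card = 1 := by
    rw [Finset.card_erase_of_mem hb', Finset.card_erase_of_mem ha, hT.1 t ht]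
  obtain ⟨c, hc⟩ := Finset.card_eq_one.1 h1
  refine ⟨c, ?_⟩
  rwa [← hc, Finset.insert_erase hb', Finset.insert_erase ha]

end IsSTS

theorem triple_swap {a b c : α} (h : ({a, b, c} : Finset α) ∈ T) :
    ({b, a, c} : Finset α) ∈ T := by rwa [Finset.insert_comm]

theorem triple_swap_right {a b c : α} (h : ({a, b, c} : Finset α) ∈ T) :
    ({a, c, b} : Finset α) ∈ T := by rwa [Finset.pair_comm c b]

open Classical in
/-- The product of the Steiner loop on the points of `T` with an adjoined identity `none`. If no
triple contains two distinct points `a` and `b`, the product is the junk value `none`. -/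
noncomputable def loopMul (T : Set (Finset α)) : Option α → Option α → Option α
  | none, b => b
  | some a, none => some a
  | some a, some b =>
      if h : ∃ c, ({a, b, c} : Finset α) ∈ T ∧ a ≠ b then some h.choose else none

namespace SteinerLoop

theorem none_mul (b : Option α) : loopMul T none b = b := rfl

theorem mul_none (b : Option α) : loopMul T b none = b := by cases b <;> rfl

theorem mul_self (b : Option α) : loopMul T b b = none := by
  cases b <;> simp [loopMul]

theorem mul_of_triple (hT : IsSTS T) {a b c : α} (h : ({a, b, c} : Finset α) ∈ T) :
    loopMul T (some a) (some b) = some c := by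
  have hex : ∃ c, ({a, b, c} : Finset α) ∈ T ∧ a ≠ b := ⟨c, h, (hT.ne_of_mem h).1⟩
  simp only [loopMul, dif_pos hex]
  exact congrArg some (hT.third_unique_s9 hex.choose_spec.1 h)

theorem mul_comm (hT : IsSTS T) (a b : Option α) : loopMul T a b = loopMul T b a := by
  rcases a with _ | a
  · rw [none_mul, mul_none]
  rcases b with _ | b
  · rw [none_mul, mul_none]
  by_cases hab : a = b
  · rw [hab]
  obtain ⟨c, hc⟩ := hT.exists_third hab
  rw [mul_of_triple hT hc, mul_of_triple hT (triple_swap hc)]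

theorem mul_mul_self (hT : IsSTS T) (a b : Option α) : loopMul T a (loopMul T a b) = b := by
  rcases a with _ | a
  · rfl
  rcases b with _ | b
  · rw [mul_none, mul_self]
  by_cases hab : a = b
  · rw [hab, mul_self, mul_none]
  obtain ⟨c, hc⟩ := hT.exists_third hab
  rw [mul_of_triple hT hc, mul_of_triple hT (triple_swap_right hc)]

theorem mul_right_cancel (hT : IsSTS T) {a b u : Option α}
    (h : loopMul T a u = loopMul T b u) : a = b := by
  rw [mul_comm hT a, mul_comm hT b] at h
  rw [← mul_mul_self hT u a, h, mul_mul_self hT]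

/-- Veblen points are central in the Steiner loop. In the generic case, with `t = a * b`, the
Veblen condition for the triples `{x, t, x * t}`, `{x, b, x * b}` and `{a, t, b}` is the claim. -/
theorem central (hT : IsSTS T) {x : α} (hx : IsVeblen T x) (a b : Option α) :
    loopMul T (some x) (loopMul T a b) = loopMul T a (loopMul T (some x) b) := by
  rcases a with _ | a
  · rfl
  rcases b with _ | b
  · rw [mul_none, mul_none, mul_comm hT]
  by_cases hab : a = b
  · rw [hab, mul_self, mul_none, mul_comm hT (some x), mul_mul_self hT]
  by_cases hxb : x = b
  · rw [hxb, mul_self, mul_none, mul_comm hT (some a), mul_mul_self hT]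
  obtain ⟨t, ht⟩ := hT.exists_third hab
  obtain ⟨b', hb'⟩ := hT.exists_third hxb
  rw [mul_of_triple hT ht, mul_of_triple hT hb']
  by_cases hxt : x = t
  · subst hxt
    have : a = b' := hT.third_unique_s9 (triple_swap (triple_swap_right (triple_swap ht))) hb'
    rw [this, mul_self, mul_self]
  obtain ⟨t', ht'⟩ := hT.exists_third hxt
  have key := hx t t' b b' a ht' hb' (triple_swap_right ht)
  rw [mul_of_triple hT ht', mul_of_triple hT (triple_swap_right key)]

end SteinerLoop

end SteinerLoop

open SteinerLoop in
/-- Every Steiner triple system of order 27 has at most one Veblen point. -/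
theorem sts27_at_most_one_veblen {α : Type u} [DecidableEq α] [Fintype α]
    (T : Set (Finset α)) (hcard : Fintype.card α = 27) (hT : IsSTS T) :
    ∀ x y : α, IsVeblen T x → IsVeblen T y → x = y := by
  intro x y hx hy
  by_contra hxy
  obtain ⟨z, hz⟩ := hT.exists_third hxy
  obtain ⟨w, hw⟩ : ∃ w, w ∉ ({x, y, z} : Finset α) := by
    by_contra! h
    have h1 : (Finset.univ : Finset α).card ≤ ({x, y, z} : Finset α).card :=
      Finset.card_le_card fun v _ => h v
    rw [hT.1 _ hz, Finset.card_univ, hcard] at h1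
    omega
  simp only [Finset.mem_insert, Finset.mem_singleton, not_or] at hw
  obtain ⟨hwx, hwy, hwz⟩ := hw
  have hfree : ∀ (a : α) (u : Option α), loopMul T (some a) u ≠ u := by
    intro a u h
    have hu : loopMul T (some a) u = loopMul T none u := h
    exact Option.some_ne_none a (mul_right_cancel hT hu)
  have hfree2 : ∀ (a b : α) (u : Option α), a ≠ b →
      loopMul T (some a) (loopMul T (some b) u) ≠ u := by
    intro a b u hab h
    have hu : loopMul T (some b) u = loopMul T (some a) u := by
      rw [← mul_mul_self hT (some a) (loopMul T (some b) u), h]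
    exact hab (Option.some.inj (mul_right_cancel hT hu)).symm
  -- By centrality, translating by `y` and then by `x` is translation by `z = x * y`.
  have hxyz : ∀ u, loopMul T (some x) (loopMul T (some y) u) = loopMul T (some z) u := by
    intro u
    rw [mul_comm hT (some y) u, central hT hx, mul_of_triple hT hz, mul_comm hT]
  have h8 := eight_dvd_card (loopMul T (some x)) (loopMul T (some y)) (loopMul T (some w))
    (mul_mul_self hT _) (mul_mul_self hT _) (mul_mul_self hT _)
    (fun u => (central hT hx _ u).symm) (fun u => (central hT hx _ u).symm)
    (fun u => (central hT hy _ u).symm)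
    (hfree x) (hfree y) (fun u => hfree2 x y u hxy) (hfree w)
    (fun u => hfree2 x w u (Ne.symm hwx)) (fun u => hfree2 y w u (Ne.symm hwy))
    (fun u => by rw [hxyz]; exact hfree2 z w u (Ne.symm hwz))
  rw [Fintype.card_option, hcard] at h8
  omega
end
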